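/- arXiv:1006.1306 — 2 statements merged into one kernel-verified Lean document; each statement's English description precedes it below -/
import Mathlib

section
/- Let γ_1,…,γ_q be homogeneous polynomials of degree d in K[X_0,…,X_q] whose common zero locus in P^q is finite (zero-dimensional). For N ∈ ℕ let V_N denote the vector space of homogeneous polynomials of degree N, and for each q-tuple i⃗ = (i_1,…,i_q) of nonnegative integers with d·σ(i⃗) ≤ N (where σ(i⃗) = i_1+…+i_q), ordered lexicographically, set W_{i⃗} = Σ_{e⃗ ≥ i⃗} γ_1^{e_1}···γ_q^{e_q} V_{N − d·σ(e⃗)}. Then there exists an integer N_0, depending only on γ_1,…,γ_q, such that for all integers N > N_0 and all i⃗ with d·σ(i⃗) < N − N_0, the quotient has dimension Δ_{i⃗} := dim W_{i⃗}/W_{i⃗'} = d^q, where i⃗' is the immediate lexicographic successor of i⃗. -/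
open scoped BigOperators

/-- The subspace `W_{i⃗} = Σ_{e⃗ ≥ i⃗} γ_1^{e_1}···γ_q^{e_q} V_{N − d·σ(e⃗)}` of the space
`V_N` of homogeneous polynomials of degree `N`, where `e⃗` ranges over the tuples of
nonnegative integers which are `≥ i⃗` in the lexicographic order and satisfy
`d·σ(e⃗) ≤ N`. -/
noncomputable def filtW (K : Type) [Field K] (q d N : ℕ)
    (γ : Fin q → MvPolynomial (Fin (q + 1)) K) (i : Fin q → ℕ) :
    Submodule K (MvPolynomial (Fin (q + 1)) K) :=
  ⨆ (e : Fin q → ℕ) (_ : toLex i ≤ toLex e) (_ : d * ∑ j, e j ≤ N),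
    Submodule.map (LinearMap.mulLeft K (∏ j, γ j ^ e j))
      (MvPolynomial.homogeneousSubmodule (Fin (q + 1)) K (N - d * ∑ j, e j))

/-- The immediate successor of the tuple `i⃗` in the lexicographic order on `ℕ^q`
(first coordinate most significant): increment the last coordinate by one. -/
def lexSucc (q : ℕ) (hq : 1 ≤ q) (i : Fin q → ℕ) : Fin q → ℕ :=
  Function.update i ⟨q - 1, by omega⟩ (i ⟨q - 1, by omega⟩ + 1)


section LocalPart
open IsLocalRing

/-- `y` is a nonzerodivisor modulo the ideal `I`. -/
def RegMod {R : Type*} [CommRing R] (I : Ideal R) (y : R) : Prop := ∀ u, y * u ∈ I → u ∈ I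

/-- The list `l` is a weakly regular sequence modulo `I`. -/
def RegSeq {R : Type*} [CommRing R] : Ideal R → List R → Prop
  | _, [] => True
  | I, f :: l => RegMod I f ∧ RegSeq (I ⊔ Ideal.span {f}) l

/-- There is a weakly regular sequence of length `n` modulo `I` in the maximal ideal. -/
def Dep {R : Type*} [CommRing R] [IsLocalRing R] : ℕ → Ideal R → Prop
  | 0, _ => True
  | n + 1, I => ∃ y ∈ maximalIdeal R, RegMod I y ∧ Dep n (I ⊔ Ideal.span {y})

/-- The socle of `R/I` vanishes. -/
def NoSoc {R : Type*} [CommRing R] [IsLocalRing R] (I : Ideal R) : Prop :=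
  ∀ u, (∀ a ∈ maximalIdeal R, a * u ∈ I) → u ∈ I

variable {R : Type*} [CommRing R] [IsLocalRing R]

lemma RegMod.noSoc {I : Ideal R} {y : R} (hy : y ∈ maximalIdeal R) (h : RegMod I y) : NoSoc I :=
  fun u hu => h u (hu y hy)

lemma Dep.noSoc {I : Ideal R} {n : ℕ} (h : Dep (n + 1) I) : NoSoc I := by
  obtain ⟨y, hy, h1, _⟩ := h
  exact h1.noSoc hy

lemma colon_mk_iff {R : Type*} [CommRing R] (I : Ideal R) (u a : R) :
    a ∈ (⊥ : Submodule R (R ⧸ I)).colon {Ideal.Quotient.mk I u} ↔ a * u ∈ I := by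
  rw [Submodule.mem_colon_singleton, Submodule.mem_bot, ← Ideal.Quotient.eq_zero_iff_mem, map_mul]
  rfl

lemma exists_assoc [IsNoetherianRing R] {I : Ideal R} {u : R} (hu : u ∉ I) :
    ∃ P : Ideal R, P ∈ associatedPrimes R (R ⧸ I) ∧ P.IsPrime ∧ (∃ v, ∀ a, a ∈ P ↔ a * v ∈ I) ∧
      ∀ a, a * u ∈ I → a ∈ P := by
  have h0 : Ideal.Quotient.mk I u ≠ 0 := by
    rwa [Ne, Ideal.Quotient.eq_zero_iff_mem]
  obtain ⟨P, hP, hle⟩ := exists_le_isAssociatedPrime_of_isNoetherianRing R _ h0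
  refine ⟨P, hP, hP.isPrime, ?_, fun a ha => hle ((colon_mk_iff I u a).2 ha)⟩
  rw [isAssociatedPrime_iff] at hP
  obtain ⟨_, x, hx⟩ := hP
  obtain ⟨v, rfl⟩ := Ideal.Quotient.mk_surjective x
  exact ⟨v, fun a => by rw [hx, colon_mk_iff]⟩

lemma assoc_ne [IsNoetherianRing R] {I P : Ideal R} (h : NoSoc I)
    (hP : P ∈ associatedPrimes R (R ⧸ I)) : ¬ maximalIdeal R ≤ P := by
  intro hle
  rw [AssociatedPrimes.mem_iff, isAssociatedPrime_iff] at hP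
  obtain ⟨hp, x, hx⟩ := hP
  obtain ⟨v, rfl⟩ := Ideal.Quotient.mk_surjective x
  apply hp.ne_top
  rw [Ideal.eq_top_iff_one, hx, colon_mk_iff, one_mul]
  apply h
  intro a ha
  have := hle ha
  rwa [hx, colon_mk_iff] at this

lemma exists_regMod3 [IsNoetherianRing R] {I J L : Ideal R} (hI : NoSoc I) (hJ : NoSoc J)
    (hL : NoSoc L) : ∃ z ∈ maximalIdeal R, RegMod I z ∧ RegMod J z ∧ RegMod L z := by
  let s := associatedPrimes R (R ⧸ I) ∪ associatedPrimes R (R ⧸ J) ∪ associatedPrimes R (R ⧸ L)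
  have hs : s.Finite := ((associatedPrimes.finite _ _).union (associatedPrimes.finite _ _)).union
    (associatedPrimes.finite _ _)
  have hnot : ¬ ((maximalIdeal R : Set R) ⊆ ⋃ P ∈ s, ((id P : Ideal R) : Set R)) := by
    rw [Ideal.subset_union_prime_finite hs ⊥ ⊥]
    · rintro ⟨P, (hP | hP) | hP, hle⟩
      · exact assoc_ne hI hP hle
      · exact assoc_ne hJ hP hle
      · exact assoc_ne hL hP hle
    · rintro P ((hP | hP) | hP) _ _ <;> exact hP.1
  obtain ⟨z, hz, hz'⟩ := Set.not_subset.1 hnot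
  simp only [Set.mem_iUnion, not_exists, id] at hz'
  have key : ∀ A : Ideal R, associatedPrimes R (R ⧸ A) ⊆ s → RegMod A z := by
    intro A hA u hu
    by_contra hu'
    obtain ⟨P, hP, _, _, hP'⟩ := exists_assoc hu'
    exact hz' P (hA hP) (hP' _ hu)
  exact ⟨z, hz, key I fun _ h => Or.inl (Or.inl h), key J fun _ h => Or.inl (Or.inr h),
    key L fun _ h => Or.inr h⟩

lemma mem_sup_span {R : Type*} [CommRing R] {I : Ideal R} {y u : R} :
    u ∈ I ⊔ Ideal.span {y} ↔ ∃ w, u - y * w ∈ I := by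
  rw [Submodule.mem_sup]
  constructor
  · rintro ⟨a, ha, b, hb, rfl⟩
    obtain ⟨c, rfl⟩ := Ideal.mem_span_singleton'.1 hb
    exact ⟨c, by convert ha using 1; ring⟩
  · rintro ⟨w, hw⟩
    exact ⟨_, hw, y * w, Ideal.mul_mem_right _ _ (Ideal.mem_span_singleton_self y), by ring⟩

/-- swapping two elements of a regular sequence -/
lemma RegMod.swap {R : Type*} [CommRing R] {I : Ideal R} {y z : R} 
    (hy : RegMod I y) (hzy : RegMod (I ⊔ Ideal.span {y}) z) : RegMod (I ⊔ Ideal.span {z}) y := by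
  intro u hu
  obtain ⟨v, hv⟩ := mem_sup_span.1 hu
  have : z * v ∈ I ⊔ Ideal.span {y} := mem_sup_span.2 ⟨u, by
    have := I.neg_mem hv; convert this using 1; ring⟩
  obtain ⟨w, hw⟩ := mem_sup_span.1 (hzy _ this)
  refine mem_sup_span.2 ⟨w, hy _ ?_⟩
  have := I.add_mem hv (I.mul_mem_left z hw)
  convert this using 1; ring

lemma noSoc_exchange {I : Ideal R} {y f : R} (hy : RegMod I y)
    (hf : RegMod I f) (hym : y ∈ maximalIdeal R)
    (h : NoSoc (I ⊔ Ideal.span {y})) : NoSoc (I ⊔ Ideal.span {f}) := by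
  intro u hu
  obtain ⟨v, hv⟩ := mem_sup_span.1 (hu y hym)
  have hvm : v ∈ I ⊔ Ideal.span {y} := by
    apply h
    intro a ha
    obtain ⟨w, hw⟩ := mem_sup_span.1 (hu a ha)
    refine mem_sup_span.2 ⟨w, hf _ ?_⟩
    have := I.sub_mem (I.mul_mem_left y hw) (I.mul_mem_left a hv)
    convert this using 1; ring
  obtain ⟨w, hw⟩ := mem_sup_span.1 hvm
  refine mem_sup_span.2 ⟨w, hy _ ?_⟩
  have := I.add_mem hv (I.mul_mem_left f hw)
  convert this using 1; ring

lemma Dep.exchange [IsNoetherianRing R] (n : ℕ) : ∀ (I : Ideal R) (f : R), Dep (n + 1) I →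
    f ∈ maximalIdeal R → RegMod I f → Dep n (I ⊔ Ideal.span {f}) := by
  induction n with
  | zero => intros; trivial
  | succ n ih =>
    intro I f hI hfm hf
    obtain ⟨y, hym, hy, hd⟩ := hI
    have h2 := hd.noSoc
    have h3 := noSoc_exchange hy hf hym h2
    obtain ⟨z, hzm, hz, hzy, hzf⟩ := exists_regMod3 (hy.noSoc hym) h2 h3
    have e1 := ih _ z hd hzm hzy
    have d1 : Dep (n + 1) (I ⊔ Ideal.span {z}) :=
      ⟨y, hym, hy.swap hzy, by rwa [sup_right_comm]⟩
    have e2 := ih _ f d1 hfm (hf.swap hzf)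
    exact ⟨z, hzm, hzf, by rwa [sup_right_comm]⟩

lemma Dep.dim_le [IsNoetherianRing R] (n : ℕ) : ∀ (I P : Ideal R), Dep n I → P.IsPrime →
    (∃ v, ∀ a, a ∈ P ↔ a * v ∈ I) → (n : WithBot ℕ∞) ≤ ringKrullDim (R ⧸ P) := by
  induction n with
  | zero =>
    intro I P _ hP _
    exact ringKrullDim_nonneg_of_nontrivial
  | succ n ih =>
    rintro I P ⟨y, hym, hy, hd⟩ hP ⟨v, hv⟩
    have hvI : v ∉ I := fun h => hP.ne_top (by rw [Ideal.eq_top_iff_one, hv, one_mul]; exact h)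
    have hyP : y ∉ P := fun h => hvI (hy _ ((hv y).1 h))
    -- the ideal of elements killed by `P`
    obtain ⟨u, hu, huy⟩ : ∃ u, (∀ a ∈ P, a * u ∈ I) ∧ u ∉ I ⊔ Ideal.span {y} := by
      by_contra! hcon
      let N : Ideal R :=
        { carrier := {u | ∀ a ∈ P, a * u ∈ I}
          add_mem' := fun {x z} hx hz a ha => by
            rw [mul_add]; exact I.add_mem (hx a ha) (hz a ha)
          zero_mem' := fun a _ => by simp
          smul_mem' := fun c x hx a ha => by
            have := I.mul_mem_left c (hx a ha)
            simp only [smul_eq_mul]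
            convert this using 1; ring }
      have hle : N ≤ I ⊔ (maximalIdeal R) • N := by
        intro u hu
        obtain ⟨w, hw⟩ := mem_sup_span.1 (hcon u hu)
        have hwN : w ∈ N := by
          intro a ha
          apply hy
          have := I.sub_mem (hu a ha) (I.mul_mem_left a hw)
          convert this using 1; ring
        have : u = (u - y * w) + y * w := by ring
        rw [this]
        exact Submodule.add_mem_sup hw (Submodule.smul_mem_smul hym hwN)
      have := Submodule.le_of_le_smul_of_le_jacobson_bot (IsNoetherian.noetherian N)
        (IsLocalRing.maximalIdeal_le_jacobson ⊥) hle
      exact hvI (this fun a ha => (hv a).1 ha)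
    obtain ⟨Q, _, hQ, hQ2, hQ3⟩ := exists_assoc huy
    have hPQ : P ≤ Q := fun a ha => hQ3 a (Ideal.mem_sup_left (hu a ha))
    have hyQ : y ∈ Q := hQ3 y (Ideal.mem_sup_right
      (Ideal.mul_mem_right _ _ (Ideal.mem_span_singleton_self y)))
    have h1 := ih _ Q hd hQ hQ2
    have h2 := ringKrullDim_quotient_succ_le_of_nonZeroDivisor (R := R ⧸ P)
      (r := Ideal.Quotient.mk P y)
      (mem_nonZeroDivisors_of_ne_zero (by rwa [Ne, Ideal.Quotient.eq_zero_iff_mem]))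
    have h3 : ringKrullDim (R ⧸ Q) ≤
        ringKrullDim ((R ⧸ P) ⧸ Ideal.span {Ideal.Quotient.mk P y}) := by
      refine ringKrullDim_le_of_surjective (Ideal.Quotient.lift _ (Ideal.Quotient.factor hPQ) ?_) ?_
      · intro a ha
        obtain ⟨c, rfl⟩ := Ideal.mem_span_singleton'.1 ha
        rw [map_mul, Ideal.Quotient.factor_mk, Ideal.Quotient.eq_zero_iff_mem.2 hyQ, mul_zero]
      · apply Ideal.Quotient.lift_surjective_of_surjective
        exact Ideal.Quotient.factor_surjective hPQ
    calc ((n + 1 : ℕ) : WithBot ℕ∞) = n + 1 := by push_cast; rfl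
      _ ≤ ringKrullDim (R ⧸ Q) + 1 := by gcongr
      _ ≤ _ := le_trans (by gcongr) h2

lemma dim_le_card [IsNoetherianRing R] (P : Ideal R) [P.IsPrime] (s : List R)
    (hs : ∀ f ∈ s, f ∈ maximalIdeal R)
    (h : maximalIdeal R ≤ (P ⊔ Ideal.span {x | x ∈ s}).radical) :
    ringKrullDim (R ⧸ P) ≤ s.length := by
  classical
  have : IsLocalRing (R ⧸ P) :=
    IsLocalRing.of_surjective' (Ideal.Quotient.mk P) Ideal.Quotient.mk_surjective
  rw [← IsLocalRing.maximalIdeal_height_eq_ringKrullDim]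
  let t : Finset (R ⧸ P) := (s.map (Ideal.Quotient.mk P)).toFinset
  have hmin : maximalIdeal (R ⧸ P) ∈ (Ideal.span (t : Set (R ⧸ P))).minimalPrimes := by
    refine ⟨⟨inferInstance, ?_⟩, ?_⟩
    · rw [Ideal.span_le]
      intro x hx
      simp only [t, List.coe_toFinset, List.mem_map, Set.mem_ofPred_eq] at hx
      obtain ⟨a, ha, rfl⟩ := hx
      rw [SetLike.mem_coe, IsLocalRing.mem_maximalIdeal, mem_nonunits_iff]
      intro hu
      obtain ⟨b, hb⟩ := hu.exists_right_inv
      obtain ⟨b, rfl⟩ := Ideal.Quotient.mk_surjective b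
      rw [← map_mul, ← map_one (Ideal.Quotient.mk P), Ideal.Quotient.eq] at hb
      have h1 := IsLocalRing.le_maximalIdeal (Ideal.IsPrime.ne_top ‹P.IsPrime›) hb
      have h2 := (maximalIdeal R).sub_mem ((maximalIdeal R).mul_mem_right b (hs a ha)) h1
      rw [sub_sub_cancel] at h2
      exact (Ideal.IsPrime.ne_top (inferInstance : (maximalIdeal R).IsPrime))
        ((Ideal.eq_top_iff_one _).2 h2)
    · rintro Q ⟨hQ, hle⟩ _
      have hc : maximalIdeal R ≤ Q.comap (Ideal.Quotient.mk P) := by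
        refine h.trans ?_
        rw [Ideal.IsPrime.radical_le_iff (Ideal.comap_isPrime _ _), sup_le_iff, Ideal.span_le]
        constructor
        · intro a ha
          rw [Ideal.mem_comap, Ideal.Quotient.eq_zero_iff_mem.2 ha]; exact Q.zero_mem
        · intro a ha
          apply hle
          apply Ideal.subset_span
          simp only [t, List.coe_toFinset, List.mem_map, Set.mem_ofPred_eq]
          exact ⟨a, ha, rfl⟩
      intro x hx
      obtain ⟨a, rfl⟩ := Ideal.Quotient.mk_surjective x
      apply hc
      rw [IsLocalRing.mem_maximalIdeal, mem_nonunits_iff] at hx ⊢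
      exact fun hu => hx (hu.map _)
  have := Ideal.height_le_card_of_mem_minimalPrimes_span_finset hmin
  have h2 : t.card ≤ s.length := (List.toFinset_card_le _).trans (by simp)
  have h3 : (maximalIdeal (R ⧸ P)).height ≤ (s.length : ℕ∞) := this.trans (by exact_mod_cast h2)
  exact_mod_cast h3

lemma regSeq_of_dep [IsNoetherianRing R] (s : List R) : ∀ (I : Ideal R),
    Dep s.length I → (∀ f ∈ s, f ∈ maximalIdeal R) →
    maximalIdeal R ≤ (I ⊔ Ideal.span {x | x ∈ s}).radical → RegSeq I s := by
  induction s with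
  | nil => intros; trivial
  | cons f s ih =>
    intro I hd hs hm
    have hfm : f ∈ maximalIdeal R := hs f (by simp)
    have hspan : Ideal.span {x | x ∈ f :: s} = Ideal.span {f} ⊔ Ideal.span {x | x ∈ s} := by
      rw [← Ideal.span_union]; congr 1; ext; simp
    have hf : RegMod I f := by
      intro u hu
      by_contra hu'
      obtain ⟨P, _, hP, hv, hP'⟩ := exists_assoc hu'
      have h1 := Dep.dim_le _ I P hd hP hv
      have h2 := dim_le_card P s (fun g hg => hs g (by simp [hg])) (hm.trans (Ideal.radical_mono (by
        rw [hspan, ← sup_assoc]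
        refine sup_le_sup_right (sup_le ?_ ?_) _
        · intro a ha; exact hP' a (I.mul_mem_right _ ha)
        · rw [Ideal.span_singleton_le_iff_mem]; exact hP' f hu)))
      have := h1.trans h2
      rw [List.length_cons] at this
      have : s.length + 1 ≤ s.length := by exact_mod_cast this
      omega
    refine ⟨hf, ih _ (Dep.exchange _ I f hd hfm hf) (fun g hg => hs g (by simp [hg])) ?_⟩
    rwa [sup_assoc, ← hspan]

end LocalPart


section GradedPart
open MvPolynomial

variable {K : Type*} [Field K] {σ : Type*}

lemma RegMod.map_loc {S : Type*} [CommRing S] (M : Submonoid S) (R : Type*) [CommRing R]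
    [Algebra S R] [IsLocalization M R] {I : Ideal S} {y : S} (h : RegMod I y) :
    RegMod (I.map (algebraMap S R)) (algebraMap S R y) := by
  intro u hu
  obtain ⟨x, s, rfl⟩ := IsLocalization.exists_mk'_eq M u
  rw [← IsLocalization.mk'_one (M := M) R y, ← IsLocalization.mk'_mul,
    IsLocalization.mk'_mem_map_algebraMap_iff] at hu
  rw [IsLocalization.mk'_mem_map_algebraMap_iff]
  obtain ⟨t, ht, htx⟩ := hu
  exact ⟨t, ht, h _ (by convert htx using 1; ring)⟩

lemma comp_mul_hom {f : MvPolynomial σ K} {d : ℕ} (hf : f.IsHomogeneous d)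
    (b : MvPolynomial σ K) (n : ℕ) :
    homogeneousComponent (n + d) (f * b) = f * homogeneousComponent n b := by
  conv_lhs => rw [← sum_homogeneousComponent b]
  rw [Finset.mul_sum, map_sum]
  have : ∀ i ∈ Finset.range (b.totalDegree + 1),
      homogeneousComponent (n + d) (f * homogeneousComponent i b) =
        if i = n then f * homogeneousComponent n b else 0 := by
    intro i _
    rw [homogeneousComponent_of_mem (m := n + d) (n := d + i)
      (hf.mul (homogeneousComponent_isHomogeneous i b))]
    split_ifs with h1 h2 h2
    · rw [h2]
    · omega
    · omega
    · rfl
  rw [Finset.sum_congr rfl this, Finset.sum_ite_eq']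
  split_ifs with h
  · rfl
  · rw [homogeneousComponent_eq_zero, mul_zero]
    simpa using h

lemma comp_mul_hom_lt {f : MvPolynomial σ K} {d : ℕ} (hf : f.IsHomogeneous d)
    (b : MvPolynomial σ K) {n : ℕ} (hn : n < d) :
    homogeneousComponent n (f * b) = 0 := by
  conv_lhs => rw [← sum_homogeneousComponent b]
  rw [Finset.mul_sum, map_sum]
  apply Finset.sum_eq_zero
  intro i _
  rw [homogeneousComponent_of_mem (m := n) (n := d + i)
      (hf.mul (homogeneousComponent_isHomogeneous i b)), if_neg (by omega)]

/-- A homogeneous ideal. -/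
def HomI (I : Ideal (MvPolynomial σ K)) : Prop :=
  ∀ g ∈ I, ∀ n, homogeneousComponent n g ∈ I

lemma homI_bot : HomI (⊥ : Ideal (MvPolynomial σ K)) := by
  intro g hg n
  rw [Ideal.mem_bot] at hg ⊢
  rw [hg, map_zero]

lemma HomI.sup_span {I : Ideal (MvPolynomial σ K)} (hI : HomI I) {f : MvPolynomial σ K} {d : ℕ}
    (hf : f.IsHomogeneous d) : HomI (I ⊔ Ideal.span {f}) := by
  intro g hg n
  obtain ⟨w, hw⟩ := mem_sup_span.1 hg
  have h1 := hI _ hw n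
  rw [map_sub] at h1
  rcases lt_or_ge n d with hn | hn
  · rw [comp_mul_hom_lt hf w hn, sub_zero] at h1
    exact Ideal.mem_sup_left h1
  · obtain ⟨k, rfl⟩ := Nat.exists_eq_add_of_le' hn
    rw [comp_mul_hom hf] at h1
    exact mem_sup_span.2 ⟨_, h1⟩

lemma HomI.mem_of_mul {I : Ideal (MvPolynomial σ K)} (hI : HomI I) {s u : MvPolynomial σ K}
    (hs : constantCoeff s ≠ 0) (h : s * u ∈ I) : u ∈ I := by
  have key : ∀ n, homogeneousComponent n u ∈ I := by
    intro n
    induction n using Nat.strong_induction_on with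
    | _ n ih =>
      have h1 := hI _ h n
      rw [← sum_homogeneousComponent s, Finset.sum_mul, map_sum, Finset.sum_range_succ'] at h1
      have h2 : ∑ k ∈ Finset.range s.totalDegree,
          homogeneousComponent n (homogeneousComponent (k + 1) s * u) ∈ I := by
        apply I.sum_mem
        intro k _
        rcases lt_or_ge n (k + 1) with hn | hn
        · rw [comp_mul_hom_lt (homogeneousComponent_isHomogeneous _ _) u hn]; exact I.zero_mem
        · obtain ⟨j, rfl⟩ := Nat.exists_eq_add_of_le' hn
          rw [comp_mul_hom (homogeneousComponent_isHomogeneous _ _)]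
          exact I.mul_mem_left _ (ih j (by omega))
      rw [Submodule.add_mem_iff_right _ h2, homogeneousComponent_zero,
        homogeneousComponent_C_mul] at h1
      have h3 := I.mul_mem_left (C (coeff 0 s)⁻¹) h1
      rwa [← mul_assoc, ← C_mul, inv_mul_cancel₀ (constantCoeff_eq (R := K) (σ := σ) ▸ hs), C_1, one_mul] at h3
  rw [← sum_homogeneousComponent u]
  exact I.sum_mem fun i _ => key i

instance maxI_prime : (RingHom.ker (constantCoeff : MvPolynomial σ K →+* K)).IsPrime :=
  RingHom.ker_isPrime _

variable (σ K) in
/-- The localization of the polynomial ring at the origin. -/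
abbrev LocR := Localization.AtPrime (RingHom.ker (constantCoeff : MvPolynomial σ K →+* K))

lemma regSeq_of_loc (l : List (MvPolynomial σ K)) : ∀ (I : Ideal (MvPolynomial σ K)), HomI I →
    (∀ f ∈ l, ∃ d, f.IsHomogeneous d) →
    RegSeq (I.map (algebraMap _ (LocR K σ))) (l.map (algebraMap _ (LocR K σ))) → RegSeq I l := by
  induction l with
  | nil => intros; trivial
  | cons f l ih =>
    intro I hI hl h
    obtain ⟨h1, h2⟩ := h
    obtain ⟨d, hd⟩ := hl f (by simp)
    refine ⟨?_, ih _ (hI.sup_span hd) (fun g hg => hl g (by simp [hg])) ?_⟩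
    · intro u hu
      have := h1 (algebraMap _ _ u) (by rw [← map_mul]; exact Ideal.mem_map_of_mem _ hu)
      rw [IsLocalization.algebraMap_mem_map_algebraMap_iff
        (RingHom.ker (constantCoeff : MvPolynomial σ K →+* K)).primeCompl] at this
      obtain ⟨s, hs, hsu⟩ := this
      exact hI.mem_of_mul (fun h0 => hs h0) hsu
    · rwa [Ideal.map_sup, Ideal.map_span, Set.image_singleton]

lemma regMod_X {q : ℕ} (k : Fin q) :
    RegMod (Ideal.span {p : MvPolynomial (Fin q) K | ∃ i : Fin q, k < i ∧ p = X i}) (X k) := by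
  set I := Ideal.span {p : MvPolynomial (Fin q) K | ∃ i : Fin q, k < i ∧ p = X i}
  let φ : MvPolynomial (Fin q) K →ₐ[K] MvPolynomial (Fin q) K :=
    aeval fun i => if k < i then 0 else X i
  have h1 : ∀ p, p - φ p ∈ I := by
    intro p
    have : (Ideal.Quotient.mkₐ K I) = (Ideal.Quotient.mkₐ K I).comp φ := by
      ext i
      simp only [AlgHom.coe_comp, Function.comp_apply, φ, aeval_X]
      split_ifs with h
      · rw [map_zero]
        exact Ideal.Quotient.eq_zero_iff_mem.2 (Ideal.subset_span ⟨i, h, rfl⟩)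
      · rfl
    have h2 := DFunLike.congr_fun this p
    exact Ideal.Quotient.eq.1 h2
  have h0 : ∀ p ∈ I, φ p = 0 := by
    intro p hp
    have : I ≤ RingHom.ker φ := by
      rw [Ideal.span_le]
      rintro _ ⟨i, hi, rfl⟩
      simp [φ, RingHom.mem_ker, hi]
    exact this hp
  intro u hu
  have h3 := h0 _ hu
  rw [map_mul] at h3
  have h4 : φ (X k) = X k := by simp [φ]
  rw [h4, mul_eq_zero, or_iff_right (X_ne_zero k)] at h3
  have := h1 u
  rwa [h3, sub_zero] at this

lemma X_mem_maxIdeal {q : ℕ} (k : Fin q) :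
    algebraMap (MvPolynomial (Fin q) K) (LocR K (Fin q)) (X k) ∈ IsLocalRing.maximalIdeal (LocR K (Fin q)) := by
  rw [← Localization.AtPrime.map_eq_maximalIdeal]
  exact Ideal.mem_map_of_mem _ (by simp [RingHom.mem_ker])

lemma dep_X {q : ℕ} (k : ℕ) (hk : k ≤ q) : Dep k (Ideal.map (algebraMap _ (LocR K (Fin q)))
    (Ideal.span {p : MvPolynomial (Fin q) K | ∃ i : Fin q, k ≤ i.val ∧ p = X i})) := by
  induction k with
  | zero => trivial
  | succ k ih =>
    refine ⟨_, X_mem_maxIdeal ⟨k, hk⟩, ?_, ?_⟩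
    · exact (regMod_X (K := K) (⟨k, hk⟩ : Fin q)).map_loc
        (RingHom.ker (constantCoeff : MvPolynomial (Fin q) K →+* K)).primeCompl (LocR K (Fin q))
    · convert ih (by omega) using 1
      rw [← Set.image_singleton, ← Ideal.map_span, ← Ideal.map_sup, ← Ideal.span_union]
      congr 2
      ext p
      simp only [Set.mem_union, Set.mem_ofPred_eq, Set.mem_singleton_iff]
      constructor
      · rintro (⟨i, hi, rfl⟩ | rfl)
        · exact ⟨i, by omega, rfl⟩
        · exact ⟨_, le_rfl, rfl⟩
      · rintro ⟨i, hi, rfl⟩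
        rcases hi.eq_or_lt with h | h
        · right; congr 1; exact Fin.ext h.symm
        · left; exact ⟨i, h, rfl⟩

lemma dep_bot (q : ℕ) : Dep q (⊥ : Ideal (LocR K (Fin q))) := by
  convert dep_X (K := K) q le_rfl
  symm
  rw [Ideal.map_eq_bot_iff_le_ker, Ideal.span_le]
  rintro _ ⟨i, hi, rfl⟩
  exact absurd i.2 (by omega)

/-- Homogeneous polynomials of positive degree whose only common zero is the origin form a
regular sequence. -/
lemma regSeq_of_radical {q : ℕ} (l : List (MvPolynomial (Fin q) K)) (hl : l.length = q)
    (hhom : ∀ f ∈ l, ∃ d, f.IsHomogeneous d ∧ d ≠ 0)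
    (hrad : ∀ i, X i ∈ (Ideal.span {x | x ∈ l}).radical) : RegSeq ⊥ l := by
  apply regSeq_of_loc l ⊥ homI_bot fun f hf => (hhom f hf).imp fun _ h => h.1
  rw [Ideal.map_bot]
  apply regSeq_of_dep
  · rw [List.length_map, hl]; exact dep_bot q
  · intro f hf
    obtain ⟨g, hg, rfl⟩ := List.mem_map.1 hf
    obtain ⟨d, hd, hd0⟩ := hhom g hg
    rw [← Localization.AtPrime.map_eq_maximalIdeal]
    refine Ideal.mem_map_of_mem _ ?_
    rw [RingHom.mem_ker, constantCoeff_eq]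
    exact hd.coeff_eq_zero (by simpa using hd0.symm)
  · rw [bot_sup_eq, ← Localization.AtPrime.map_eq_maximalIdeal]
    have h1 : RingHom.ker (constantCoeff : MvPolynomial (Fin q) K →+* K) ≤
        (Ideal.span {x | x ∈ l}).radical := by
      intro p hp
      rw [RingHom.mem_ker, constantCoeff_eq] at hp
      rw [p.as_sum]
      apply Ideal.sum_mem
      intro v hv
      have hv0 : v ≠ 0 := by
        rintro rfl
        exact (mem_support_iff.1 hv) hp
      obtain ⟨i, hi⟩ := Finsupp.ne_iff.1 hv0
      refine Ideal.mem_of_dvd _ ?_ (hrad i)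
      rw [X_dvd_monomial]
      exact Or.inr hi
    refine (Ideal.map_mono h1).trans ((Ideal.map_radical_le _).trans (Ideal.radical_mono ?_))
    rw [Ideal.map_span]
    apply Ideal.span_mono
    rintro _ ⟨x, hx, rfl⟩
    exact List.mem_map_of_mem hx

end GradedPart


section GeomPart
open MvPolynomial

lemma RegSeq.of_append {R : Type*} [CommRing R] (l l' : List R) : ∀ I : Ideal R,
    RegSeq I (l ++ l') → RegSeq I l := by
  induction l with
  | nil => intros; trivial
  | cons f l ih => exact fun I h => ⟨h.1, ih _ h.2⟩

lemma eval_smul_hom {K σ : Type*} [Fintype σ] [Field K] {d : ℕ} {F : MvPolynomial σ K}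
    (hF : F.IsHomogeneous d) (a : K) (v : σ → K) : eval (a • v) F = a ^ d * eval v F := by
  rw [eval_eq', eval_eq', Finset.mul_sum]
  refine Finset.sum_congr rfl fun m hm => ?_
  have h := hF (mem_support_iff.1 hm)
  have h2 : ∑ i, m i = d := by
    rw [← h, Finsupp.weight_apply, Finsupp.sum_fintype _ _ (by simp)]
    simp
  simp only [Pi.smul_apply, smul_eq_mul, mul_pow, Finset.prod_mul_distrib]
  rw [Finset.prod_pow_eq_pow_sum, h2]
  ring

lemma exists_linear {K : Type} [Field K] [Infinite K] {q d : ℕ} 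
    (γ : Fin q → MvPolynomial (Fin (q + 1)) K)
    (hhom : ∀ j, (γ j).IsHomogeneous d)
    (hfin : {P : Projectivization (AlgebraicClosure K) (Fin (q + 1) → AlgebraicClosure K) |
        ∀ j, MvPolynomial.eval P.rep
          (MvPolynomial.map (algebraMap K (AlgebraicClosure K)) (γ j)) = 0}.Finite) :
    ∃ l : MvPolynomial (Fin (q + 1)) K, l.IsHomogeneous 1 ∧
      ∀ i, X i ∈ (Ideal.span {x | x ∈ List.ofFn γ ++ [l]}).radical := by
  classical
  set L := AlgebraicClosure K
  set Z := {P : Projectivization L (Fin (q + 1) → L) |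
        ∀ j, MvPolynomial.eval P.rep (MvPolynomial.map (algebraMap K L) (γ j)) = 0} with hZ
  let T : (Fin (q + 1) → L) → ((Fin (q + 1) → K) →ₗ[K] L) := fun v =>
    ∑ i, (Algebra.linearMap K L ∘ₗ LinearMap.proj i).smulRight (v i)
  have hT : ∀ v c, T v c = ∑ i, algebraMap K L (c i) * v i := by
    intro v c
    simp [T, LinearMap.sum_apply]
  have hne : ∀ v, v ≠ 0 → LinearMap.ker (T v) ≠ ⊤ := by
    intro v hv htop
    apply hv
    ext i
    have : Pi.single i 1 ∈ LinearMap.ker (T v) := by rw [htop]; trivial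
    rw [LinearMap.mem_ker, hT, Finset.sum_eq_single i] at this
    · simpa using this
    · intro b _ hb; simp [hb]
    · simp
  obtain ⟨c, hc⟩ : ∃ c : Fin (q + 1) → K, ∀ P ∈ Z, T P.rep c ≠ 0 := by
    have h1 := Subspace.biUnion_ne_univ_of_top_notMem (k := K)
      (s := hfin.toFinset.image fun P => LinearMap.ker (T P.rep)) (by
        intro h
        obtain ⟨P, _, hP⟩ := Finset.mem_image.1 h
        exact hne _ P.rep_nonzero hP)
    rw [Set.ne_univ_iff_exists_notMem] at h1
    obtain ⟨c, hc⟩ := h1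
    refine ⟨c, fun P hP h0 => hc ?_⟩
    simp only [Set.mem_iUnion]
    exact ⟨LinearMap.ker (T P.rep), Finset.mem_image_of_mem _ (hfin.mem_toFinset.2 hP), h0⟩
  refine ⟨∑ i, C (c i) * X i, ?_, ?_⟩
  · apply IsHomogeneous.sum
    intro i _
    exact isHomogeneous_C_mul_X _ _
  · intro i
    rw [← vanishingIdeal_zeroLocus_eq_radical (K := L), mem_vanishingIdeal_iff]
    intro v hv
    rw [zeroLocus_span] at hv
    rw [aeval_X]
    suffices v = 0 by rw [this]; rfl
    by_contra hv0
    let P := Projectivization.mk L v hv0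
    obtain ⟨a, ha⟩ := Projectivization.exists_smul_eq_mk_rep L v hv0
    have hP : P ∈ Z := by
      intro j
      have h1 := hv (γ j) (by simp)
      change eval (Projectivization.mk L v hv0).rep _ = 0
      rw [← ha, Units.smul_def, eval_smul_hom ((hhom j).map (algebraMap K L)), eval_map,
        ← aeval_def, h1, mul_zero]
    apply hc P hP
    have h1 := hv (∑ i, C (c i) * X i) (by simp)
    rw [hT]
    change ∑ i, algebraMap K L (c i) * (Projectivization.mk L v hv0).rep i = 0
    rw [← ha]
    simp only [map_sum, map_mul, aeval_X, algHom_C] at h1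
    simp only [Pi.smul_apply, Units.smul_def, smul_eq_mul]
    calc _ = (a : L) * ∑ i, algebraMap K L (c i) * v i := by
          rw [Finset.mul_sum]; exact Finset.sum_congr rfl fun i _ => by ring
      _ = 0 := by rw [h1, mul_zero]
end GeomPart

section LexPart

lemma RegMod.pow {R : Type*} [CommRing R] {I : Ideal R} {y : R} (h : RegMod I y) (n : ℕ) :
    RegMod I (y ^ n) := by
  induction n with
  | zero => intro u hu; simpa using hu
  | succ n ih => intro u hu; exact h _ (ih _ (by rwa [pow_succ, mul_assoc] at hu))

lemma lex_lt_succ {n : ℕ} {i e : Fin (n + 1) → ℕ} (h : toLex i < toLex e) :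
    i 0 < e 0 ∨ (i 0 = e 0 ∧ toLex (Fin.tail i) < toLex (Fin.tail e)) := by
  obtain ⟨k, hk1, hk2⟩ := h
  simp only [] at hk1 hk2
  induction k using Fin.cases with
  | zero => exact Or.inl hk2
  | succ k =>
    refine Or.inr ⟨hk1 0 (Fin.succ_pos k), k, fun j hj => hk1 j.succ (Fin.succ_lt_succ_iff.2 hj), hk2⟩

lemma lex_colon {R : Type*} [CommRing R] (n : ℕ) : ∀ (I : Ideal R) (f : Fin n → R)
    (_ : RegSeq I (List.ofFn f)) (i : Fin n → ℕ) (g : R),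
    (∏ j, f j ^ i j) * g ∈ I ⊔ Ideal.span {x | ∃ e, toLex i < toLex e ∧ x = ∏ j, f j ^ e j} →
    g ∈ I ⊔ Ideal.span (Set.range f) := by
  induction n with
  | zero =>
    intro I f _ i g h
    have : {x | ∃ e, toLex i < toLex e ∧ x = ∏ j, f j ^ e j} = ∅ := by
      ext x
      simp only [Set.mem_ofPred_eq, Set.mem_empty_iff_false, iff_false]
      rintro ⟨e, he, _⟩
      rw [Subsingleton.elim i e] at he
      exact lt_irrefl _ he
    rw [this] at h
    simp at h
    exact Ideal.mem_sup_left h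
  | succ n ih =>
    intro I f hreg i g h
    rw [List.ofFn_succ] at hreg
    obtain ⟨h1, h2⟩ := hreg
    have h3 : I ⊔ Ideal.span {x | ∃ e, toLex i < toLex e ∧ x = ∏ j, f j ^ e j} ≤
        I ⊔ Ideal.span {f 0 ^ i 0} * (Ideal.span {f 0} ⊔
          Ideal.span {x | ∃ e, toLex (Fin.tail i) < toLex e ∧ x = ∏ j : Fin n, f j.succ ^ e j}) := by
      refine sup_le_sup_left ?_ _
      rw [Ideal.span_le]
      rintro _ ⟨e, he, rfl⟩
      rw [Fin.prod_univ_succ]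
      rcases lex_lt_succ he with h4 | ⟨h4, h5⟩
      · obtain ⟨k, hk⟩ := Nat.exists_eq_add_of_lt h4
        have : f 0 ^ e 0 * ∏ j : Fin n, f j.succ ^ e j.succ =
          f 0 ^ i 0 * (f 0 * (f 0 ^ k * ∏ j : Fin n, f j.succ ^ e j.succ)) := by rw [hk]; ring
        rw [SetLike.mem_coe, this]
        exact Ideal.mul_mem_mul (Ideal.mem_span_singleton_self _) (Ideal.mem_sup_left
          (Ideal.mul_mem_right _ _ (Ideal.mem_span_singleton_self _)))
      · rw [← h4]
        exact Ideal.mul_mem_mul (Ideal.mem_span_singleton_self _) (Ideal.mem_sup_right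
          (Ideal.subset_span ⟨_, h5, rfl⟩))
    obtain ⟨a, ha, b, hb, hab⟩ := Submodule.mem_sup.1 (h3 h)
    obtain ⟨c, hc, rfl⟩ := Ideal.mem_span_singleton_mul.1 hb
    rw [Fin.prod_univ_succ] at hab
    have h6 : (∏ j : Fin n, f j.succ ^ i j.succ) * g - c ∈ I := by
      apply h1.pow (i 0)
      convert ha using 1
      linear_combination -hab
    have h7 := ih _ (fun j => f j.succ) h2 (Fin.tail i) g (by
      rw [sup_assoc]
      refine Submodule.mem_sup.2 ⟨_, h6, c, hc, ?_⟩
      simp [Fin.tail])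
    refine (sup_le (sup_le le_sup_left ?_) ?_ : _ ≤ I ⊔ Ideal.span (Set.range f)) h7
    · rw [Ideal.span_singleton_le_iff_mem]
      exact Ideal.mem_sup_right (Ideal.subset_span ⟨0, rfl⟩)
    · refine le_trans (Ideal.span_mono ?_) le_sup_right
      rintro _ ⟨j, rfl⟩
      exact ⟨j.succ, rfl⟩

end LexPart


section HilbPart
open MvPolynomial

instance homFin {σ K : Type*} [Finite σ] [Field K] (n : ℕ) :
    FiniteDimensional K (homogeneousSubmodule σ K n) :=
  Module.Finite.iff_fg.2 (homogeneousSubmodule_fg σ K n)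

lemma finrank_mul_sup {K A : Type*} [Field K] [CommRing A] [IsDomain A] [Algebra K A]
    {f : A} (hf : f ≠ 0) (S V U : Submodule K A) [FiniteDimensional K S] [FiniteDimensional K V]
    (h : S ⊓ V.map (LinearMap.mulLeft K f) = U.map (LinearMap.mulLeft K f)) :
    Module.finrank K ↥(S ⊔ V.map (LinearMap.mulLeft K f)) + Module.finrank K U =
      Module.finrank K S + Module.finrank K V := by
  have hinj : Function.Injective (LinearMap.mulLeft K f) := fun a b hab => mul_left_cancel₀ hf hab
  have e : ∀ W : Submodule K A, Module.finrank K (W.map (LinearMap.mulLeft K f)) =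
      Module.finrank K W := fun W => (Submodule.equivMapOfInjective _ hinj W).finrank_eq.symm
  have := Submodule.finrank_sup_add_finrank_inf_eq S (V.map (LinearMap.mulLeft K f))
  rw [h, e, e] at this
  exact this

variable {K σ : Type*} [Field K]

/-- degree `n` part of an ideal -/
noncomputable def idPart (I : Ideal (MvPolynomial σ K)) (n : ℕ) :
    Submodule K (MvPolynomial σ K) := I.restrictScalars K ⊓ homogeneousSubmodule σ K n

lemma mem_idPart {I : Ideal (MvPolynomial σ K)} {n : ℕ} {g : MvPolynomial σ K} :
    g ∈ idPart I n ↔ g ∈ I ∧ g.IsHomogeneous n := Iff.rfl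

instance idPartFin [Finite σ] (I : Ideal (MvPolynomial σ K)) (n : ℕ) :
    FiniteDimensional K (idPart I n) :=
  Submodule.finiteDimensional_of_le (inf_le_right : _ ≤ homogeneousSubmodule σ K n)

/-- Hilbert function of the quotient by an ideal -/
noncomputable def hilb (I : Ideal (MvPolynomial σ K)) (n : ℕ) : ℤ :=
  (Module.finrank K (homogeneousSubmodule σ K n) : ℤ) - Module.finrank K (idPart I n)

lemma comp_self {g : MvPolynomial σ K} {n : ℕ} (hg : g.IsHomogeneous n) :
    homogeneousComponent n g = g := by
  rw [homogeneousComponent_of_mem hg, if_pos rfl]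

lemma idPart_sup {I : Ideal (MvPolynomial σ K)} (hI : HomI I) {f : MvPolynomial σ K} {d : ℕ}
    (hf : f.IsHomogeneous d) (n : ℕ) :
    idPart (I ⊔ Ideal.span {f}) (n + d) =
      idPart I (n + d) ⊔ (homogeneousSubmodule σ K n).map (LinearMap.mulLeft K f) := by
  apply le_antisymm
  · rintro g ⟨hg, hg2⟩
    obtain ⟨w, hw⟩ := mem_sup_span.1 hg
    have h1 := hI _ hw (n + d)
    rw [map_sub, comp_mul_hom hf, comp_self hg2] at h1
    refine Submodule.mem_sup.2 ⟨_, ⟨h1, ?_⟩, f * homogeneousComponent n w,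
      ⟨_, homogeneousComponent_isHomogeneous n w, rfl⟩, by ring⟩
    refine IsHomogeneous.sub hg2 ?_
    rw [add_comm]
    exact hf.mul (homogeneousComponent_isHomogeneous n w)
  · refine sup_le ?_ ?_
    · rintro g ⟨hg, hg2⟩
      exact ⟨Ideal.mem_sup_left hg, hg2⟩
    · rintro _ ⟨w, hw, rfl⟩
      refine ⟨Ideal.mem_sup_right (Ideal.mul_mem_right _ _ (Ideal.mem_span_singleton_self f)), ?_⟩
      rw [add_comm]
      exact hf.mul hw

lemma hilb_sup [Finite σ] {I : Ideal (MvPolynomial σ K)} (hI : HomI I) {f : MvPolynomial σ K}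
    {d : ℕ} (hf : f.IsHomogeneous d) (hf0 : f ≠ 0) (hreg : RegMod I f) (n : ℕ) :
    hilb (I ⊔ Ideal.span {f}) (n + d) = hilb I (n + d) - hilb I n := by
  have h := finrank_mul_sup hf0 (idPart I (n + d)) (homogeneousSubmodule σ K n) (idPart I n) (by
    apply le_antisymm
    · rintro _ ⟨⟨h1, h2⟩, w, hw, rfl⟩
      exact ⟨w, ⟨hreg _ h1, hw⟩, rfl⟩
    · rintro _ ⟨w, ⟨hw1, hw2⟩, rfl⟩
      refine ⟨⟨Ideal.mul_mem_left _ _ hw1, ?_⟩, w, hw2, rfl⟩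
      rw [add_comm]
      exact hf.mul hw2)
  rw [← idPart_sup hI hf] at h
  simp only [hilb]
  omega

lemma hilb_list [Finite σ] {d : ℕ} (l : List (MvPolynomial σ K)) : ∀ (I : Ideal (MvPolynomial σ K)),
    HomI I → (∀ f ∈ l, f.IsHomogeneous d) → (∀ f ∈ l, f ≠ 0) → RegSeq I l → ∀ n,
    hilb (I ⊔ Ideal.span {x | x ∈ l}) (n + l.length * d) =
      ((fwdDiff d)^[l.length] (hilb I)) n := by
  induction l with
  | nil =>
    intro I _ _ _ _ n
    simp
  | cons f l ih =>
    intro I hI hh h0 hr n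
    have hs : I ⊔ Ideal.span {x | x ∈ f :: l} = (I ⊔ Ideal.span {f}) ⊔ Ideal.span {x | x ∈ l} := by
      rw [sup_assoc, ← Ideal.span_union]
      congr 2
      ext x
      simp
    have hf := hh f (by simp)
    have := ih (I ⊔ Ideal.span {f}) (hI.sup_span hf) (fun g hg => hh g (by simp [hg]))
      (fun g hg => h0 g (by simp [hg])) hr.2 (n + d)
    rw [hs, List.length_cons, show n + (l.length + 1) * d = n + d + l.length * d by ring, this,
      Function.iterate_succ_apply, ← fwdDiff_iter_comp_add]
    refine congrArg (fun F => (fwdDiff d)^[l.length] F n) (funext fun m => ?_)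
    rw [hilb_sup hI hf (h0 f (by simp)) hr.1]
    rfl

lemma ne_zero_of_regSeq (l : List (MvPolynomial σ K)) : ∀ (I : Ideal (MvPolynomial σ K)),
    I ≤ RingHom.ker (constantCoeff (R := K) (σ := σ)) →
    (∀ f ∈ l, constantCoeff f = 0) → RegSeq I l → ∀ f ∈ l, f ≠ 0 := by
  induction l with
  | nil => simp
  | cons f l ih =>
    intro I hI hc hr g hg
    rcases List.mem_cons.1 hg with rfl | hg
    · rintro rfl
      have := hI (hr.1 1 (by simp))
      simp [RingHom.mem_ker] at this
    · refine ih (I ⊔ Ideal.span {f}) (sup_le hI ?_) (fun x hx => hc x (by simp [hx])) hr.2 g hg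
      rw [Ideal.span_singleton_le_iff_mem]
      exact hc f (by simp)

lemma finrank_hom (q n : ℕ) : Module.finrank K (homogeneousSubmodule (Fin (q + 1)) K n) =
    (n + q).choose q := by
  rw [homogeneousSubmodule_eq_finsupp_supported,
    (AddMonoidAlgebra.supportedEquivFinsupp _).finrank_eq]
  have hs : {d : Fin (q + 1) →₀ ℕ | d.degree = n} =
      ↑((Finset.univ : Finset (Fin (q + 1))).finsuppAntidiag n) := by
    ext d
    simp [Finset.mem_finsuppAntidiag, Finsupp.degree_eq_sum]
  rw [hs, Module.finrank_finsupp_self, ← Nat.card_eq_fintype_card, Nat.card_coe_set_eq,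
    Set.ncard_coe_finset, Finset.card_finsuppAntidiag_nat_eq_choose]
  simp only [Finset.card_univ, Fintype.card_fin]
  rw [show q + 1 + n - 1 = n + q by omega, Nat.choose_symm_add]

lemma hilb_bot (q n : ℕ) : hilb (⊥ : Ideal (MvPolynomial (Fin (q + 1)) K)) n =
    ((n + q).choose q : ℤ) := by
  have : idPart (⊥ : Ideal (MvPolynomial (Fin (q + 1)) K)) n = ⊥ := by
    rw [eq_bot_iff]
    exact fun g hg => hg.1
  rw [hilb, this, finrank_hom]
  simp

lemma fwdDiff_step (d : ℕ) (f : ℕ → ℤ) :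
    fwdDiff d f = ∑ a ∈ Finset.range d, fun x => fwdDiff 1 f (x + a) := by
  ext x
  rw [Finset.sum_apply]
  induction d with
  | zero => simp [fwdDiff]
  | succ d ih =>
    rw [Finset.sum_range_succ, ← ih]
    simp only [fwdDiff]
    rw [add_assoc x d 1]
    ring

lemma fwdDiff_scale (d : ℕ) (c : ℤ) (n : ℕ) : ∀ f : ℕ → ℤ, (fwdDiff 1)^[n] f = (fun _ => c) →
    (fwdDiff d)^[n] f = fun _ => c * d ^ n := by
  induction n generalizing c with
  | zero => intro f h; simpa using h
  | succ n ih =>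
    intro f h
    rw [Function.iterate_succ_apply] at h ⊢
    have h2 := ih c (fwdDiff 1 f) h
    rw [fwdDiff_step, fwdDiff_iter_finsetSum]
    ext x
    rw [Finset.sum_apply]
    simp_rw [fwdDiff_iter_comp_add, h2]
    simp
    ring

lemma hilb_span {q d : ℕ} (γ : Fin q → MvPolynomial (Fin (q + 1)) K)
    (hhom : ∀ j, (γ j).IsHomogeneous d) (h0 : ∀ j, γ j ≠ 0)
    (hr : RegSeq ⊥ (List.ofFn γ)) (n : ℕ) (hn : q * d ≤ n) :
    hilb (Ideal.span (Set.range γ)) n = (d : ℤ) ^ q := by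
  have h := hilb_list (d := d) (List.ofFn γ) ⊥ homI_bot (by simpa [List.mem_ofFn] using hhom)
    (by simpa [List.mem_ofFn] using h0) hr (n - q * d)
  have hs : {x | x ∈ List.ofFn γ} = Set.range γ := by
    ext x
    simp [List.mem_ofFn]
  rw [bot_sup_eq, hs, List.length_ofFn, Nat.sub_add_cancel hn] at h
  rw [h, fwdDiff_scale d 1]
  · simp
  · ext x
    have : hilb (⊥ : Ideal (MvPolynomial (Fin (q + 1)) K)) =
        fun n => (fun m : ℕ => ((m.choose (q + 0) : ℕ) : ℤ)) (n + q) := by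
      ext n
      exact hilb_bot q n
    rw [this]
    refine (fwdDiff_iter_comp_add 1 (fun m : ℕ => ((m.choose (q + 0) : ℕ) : ℤ)) q q x).trans ?_
    rw [fwdDiff_iter_choose]
    simp

end HilbPart


section Assembly
open MvPolynomial

lemma lexSucc_le_iff {q : ℕ} (hq : 1 ≤ q) (i e : Fin q → ℕ) :
    toLex (lexSucc q hq i) ≤ toLex e ↔ toLex i < toLex e := by
  constructor
  · refine lt_of_lt_of_le ?_
    exact Pi.lt_toLex_update_self_iff.2 (Nat.lt_succ_self _)
  · rintro ⟨k, hk1, hk2⟩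
    have hk1 : ∀ j, j < k → i j = e j := hk1
    have hk2 : i k < e k := hk2
    by_cases hk : k = ⟨q - 1, by omega⟩
    · have h1 : ∀ j, j < k → lexSucc q hq i j = e j := by
        intro j hj
        rw [lexSucc, Function.update_of_ne (by rw [← hk]; exact hj.ne)]
        exact hk1 j hj
      have h2 : lexSucc q hq i k = i k + 1 := by
        rw [lexSucc, hk, Function.update_self]
      rcases eq_or_lt_of_le (show i k + 1 ≤ e k from hk2) with h3 | h3
      · apply le_of_eq
        congr 1
        ext j
        have hj : j ≤ k := by
          rw [hk, Fin.le_def]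
          have := j.2
          simp only
          omega
        rcases eq_or_lt_of_le hj with h4 | h4
        · rw [h4, h2, h3]
        · exact h1 j h4
      · exact le_of_lt ⟨k, h1, by simpa [h2] using h3⟩
    · have hlt : k < ⟨q - 1, by omega⟩ := by
        rw [Fin.lt_def]
        have := k.2
        have h5 : k.val ≠ q - 1 := fun h => hk (Fin.ext h)
        simp only
        omega
      have h1 : ∀ j, j ≤ k → lexSucc q hq i j = i j := by
        intro j hj
        rw [lexSucc, Function.update_of_ne (lt_of_le_of_lt hj hlt).ne]
      refine le_of_lt ⟨k, fun j hj => ?_, ?_⟩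
      · exact (h1 j hj.le).trans (hk1 j hj)
      · change lexSucc q hq i k < e k
        rw [h1 k le_rfl]
        exact hk2

variable {K : Type} [Field K] {q d N : ℕ} {γ : Fin q → MvPolynomial (Fin (q + 1)) K}

lemma mem_filtW {i e : Fin q → ℕ} (h1 : toLex i ≤ toLex e) (h2 : d * ∑ j, e j ≤ N)
    {g : MvPolynomial (Fin (q + 1)) K} (hg : g.IsHomogeneous (N - d * ∑ j, e j)) :
    (∏ j, γ j ^ e j) * g ∈ filtW K q d N γ i := by
  have : Submodule.map (LinearMap.mulLeft K (∏ j, γ j ^ e j))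
      (MvPolynomial.homogeneousSubmodule (Fin (q + 1)) K (N - d * ∑ j, e j)) ≤
      filtW K q d N γ i := le_iSup_of_le e (le_iSup_of_le h1 (le_iSup_of_le h2 le_rfl))
  exact this ⟨g, hg, rfl⟩

lemma filtW_le_iff {i : Fin q → ℕ} {S : Submodule K (MvPolynomial (Fin (q + 1)) K)} :
    filtW K q d N γ i ≤ S ↔ ∀ e : Fin q → ℕ, toLex i ≤ toLex e → d * ∑ j, e j ≤ N →
      ∀ g : MvPolynomial (Fin (q + 1)) K, g.IsHomogeneous (N - d * ∑ j, e j) →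
        (∏ j, γ j ^ e j) * g ∈ S := by
  constructor
  · intro h e h1 h2 g hg
    exact h (mem_filtW h1 h2 hg)
  · intro h
    refine iSup_le fun e => iSup_le fun h1 => iSup_le fun h2 => ?_
    rintro _ ⟨g, hg, rfl⟩
    exact h e h1 h2 g hg

lemma prod_hom (hhom : ∀ j, (γ j).IsHomogeneous d) (e : Fin q → ℕ) :
    (∏ j, γ j ^ e j).IsHomogeneous (d * ∑ j, e j) := by
  rw [Finset.mul_sum]
  exact IsHomogeneous.prod _ _ _ fun j _ => (hhom j).pow (e j)

lemma filtW_le_hom (hhom : ∀ j, (γ j).IsHomogeneous d) (i : Fin q → ℕ) :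
    filtW K q d N γ i ≤ homogeneousSubmodule (Fin (q + 1)) K N := by
  rw [filtW_le_iff]
  intro e _ h2 g hg
  have := (prod_hom hhom e).mul hg
  rwa [Nat.add_sub_cancel' h2] at this

lemma filtW_eq_sup (hq : 1 ≤ q) (i : Fin q → ℕ) (hi : d * ∑ j, i j ≤ N) :
    filtW K q d N γ i = filtW K q d N γ (lexSucc q hq i) ⊔
      (homogeneousSubmodule (Fin (q + 1)) K (N - d * ∑ j, i j)).map
        (LinearMap.mulLeft K (∏ j, γ j ^ i j)) := by
  apply le_antisymm
  · rw [filtW_le_iff]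
    intro e h1 h2 g hg
    rcases eq_or_lt_of_le h1 with h | h
    · obtain rfl : i = e := toLex_inj.1 h
      exact Submodule.mem_sup_right ⟨g, hg, rfl⟩
    · exact Submodule.mem_sup_left (mem_filtW ((lexSucc_le_iff hq i e).2 h) h2 hg)
  · refine sup_le ?_ ?_
    · rw [filtW_le_iff]
      intro e h1 h2 g hg
      exact mem_filtW ((lexSucc_le_iff hq i e).1 h1).le h2 hg
    · rintro _ ⟨g, hg, rfl⟩
      exact mem_filtW le_rfl hi hg

lemma filtW_inf (hq : 1 ≤ q) (hhom : ∀ j, (γ j).IsHomogeneous d) (hr : RegSeq ⊥ (List.ofFn γ))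
    (h0 : ∀ j, γ j ≠ 0) (i : Fin q → ℕ) (hi : d * ∑ j, i j + d ≤ N) :
    filtW K q d N γ (lexSucc q hq i) ⊓
      (homogeneousSubmodule (Fin (q + 1)) K (N - d * ∑ j, i j)).map
        (LinearMap.mulLeft K (∏ j, γ j ^ i j)) =
    (idPart (Ideal.span (Set.range γ)) (N - d * ∑ j, i j)).map
        (LinearMap.mulLeft K (∏ j, γ j ^ i j)) := by
  apply le_antisymm
  · rintro _ ⟨h1, g, hg, rfl⟩
    refine ⟨g, ⟨?_, hg⟩, rfl⟩
    have hle : filtW K q d N γ (lexSucc q hq i) ≤ (Ideal.span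
        {x | ∃ e, toLex i < toLex e ∧ x = ∏ j, γ j ^ e j}).restrictScalars K := by
      rw [filtW_le_iff]
      intro e h1 _ g _
      exact Ideal.mul_mem_right _ _ (Ideal.subset_span ⟨e, (lexSucc_le_iff hq i e).1 h1, rfl⟩)
    have := lex_colon q ⊥ γ hr i g (Ideal.mem_sup_right (hle h1))
    rwa [bot_sup_eq] at this
  · rintro _ ⟨g, ⟨h1, h2⟩, rfl⟩
    refine ⟨?_, g, h2, rfl⟩
    obtain ⟨c, rfl⟩ := Ideal.mem_span_range_iff_exists_fun.1 h1
    have h2 : (∑ j, c j * γ j).IsHomogeneous (N - d * ∑ j, i j) := h2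
    obtain ⟨m, hm⟩ : ∃ m, N - d * ∑ j, i j = m + d := ⟨N - d * ∑ j, i j - d, by omega⟩
    rw [← comp_self h2, hm, map_sum]
    simp only [LinearMap.mulLeft_apply, Finset.mul_sum]
    refine Submodule.sum_mem _ fun j _ => ?_
    rw [mul_comm (c j), comp_mul_hom (hhom j), ← mul_assoc]
    have he : (∏ k, γ k ^ i k) * γ j = ∏ k, γ k ^ (i + (Pi.single j 1 : Fin q → ℕ)) k := by
      simp only [Pi.add_apply, pow_add, Finset.prod_mul_distrib]
      congr 1
      rw [Finset.prod_eq_single j]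
      · simp
      · intro b _ hb
        simp [hb]
      · simp
    have hsum : ∑ k, (i + (Pi.single j 1 : Fin q → ℕ)) k = ∑ k, i k + 1 := by
      simp [Finset.sum_add_distrib]
    rw [he]
    apply mem_filtW
    · rw [lexSucc_le_iff]
      refine lt_of_le_of_ne (Pi.toLex_monotone (le_add_of_nonneg_right (by simp))) ?_
      intro h
      have h3 := congrArg (fun f : Fin q → ℕ => ∑ k, f k) (toLex_inj.1 h)
      simp only [hsum] at h3
      omega
    · rw [hsum, mul_add, mul_one]
      exact hi
    · rw [hsum, mul_add, mul_one, show N - (d * ∑ k, i k + d) = m by omega]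
      exact homogeneousComponent_isHomogeneous _ _

end Assembly

/-- Let `γ_1,…,γ_q` be homogeneous polynomials of degree `d` in
`K[X_0,…,X_q]` (`K` a number field or `ℂ`) whose common zero locus in `ℙ^q(K̄)` is
finite.  Then there exists `N₀`, depending only on `γ_1,…,γ_q`, such that for all
`N > N₀` and all tuples `i⃗` with `d·σ(i⃗) < N − N₀`, the quotient `W_{i⃗}/W_{i⃗'}` has
dimension `d^q`, where `i⃗'` is the immediate lexicographic successor of `i⃗`. -/
theorem filtration_quotient_dim (K : Type) [Field K]
    (hK : NumberField K ∨ Nonempty (K ≃+* ℂ))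
    (q d : ℕ) (hq : 1 ≤ q) (hd : 1 ≤ d)
    (γ : Fin q → MvPolynomial (Fin (q + 1)) K)
    (hhom : ∀ j, (γ j).IsHomogeneous d)
    (hfin : {P : Projectivization (AlgebraicClosure K) (Fin (q + 1) → AlgebraicClosure K) |
        ∀ j, MvPolynomial.eval P.rep
          (MvPolynomial.map (algebraMap K (AlgebraicClosure K)) (γ j)) = 0}.Finite) :
    ∃ N₀ : ℕ, ∀ N : ℕ, N₀ < N → ∀ i : Fin q → ℕ, d * (∑ j, i j) + N₀ < N →
      Module.finrank K
        (↥(filtW K q d N γ i) ⧸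
          Submodule.comap (filtW K q d N γ i).subtype (filtW K q d N γ (lexSucc q hq i)))
        = d ^ q := by
  have hinf : Infinite K := by
    rcases hK with h | ⟨⟨e⟩⟩
    · have := h.to_charZero
      infer_instance
    · exact Infinite.of_injective _ e.symm.injective
  obtain ⟨l, hl, hrad⟩ := exists_linear γ hhom hfin
  have hr : RegSeq ⊥ (List.ofFn γ) := by
    refine RegSeq.of_append _ [l] _ (regSeq_of_radical _ (by simp) ?_ hrad)
    intro f hf
    rcases List.mem_append.1 hf with h | h
    · obtain ⟨j, rfl⟩ := (List.mem_ofFn' _ _).1 h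
      exact ⟨d, hhom j, by omega⟩
    · rw [List.mem_singleton.1 h]
      exact ⟨1, hl, one_ne_zero⟩
  have h0 : ∀ j, γ j ≠ 0 := by
    intro j
    refine ne_zero_of_regSeq (List.ofFn γ) ⊥ bot_le ?_ hr _ ((List.mem_ofFn' _ _).2 ⟨j, rfl⟩)
    intro f hf
    obtain ⟨j, rfl⟩ := (List.mem_ofFn' _ _).1 hf
    rw [MvPolynomial.constantCoeff_eq]
    exact (hhom j).coeff_eq_zero (by simp; omega)
  have hP : ∀ i : Fin q → ℕ, ∏ j, γ j ^ i j ≠ 0 := fun i =>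
    Finset.prod_ne_zero_iff.2 fun j _ => pow_ne_zero _ (h0 j)
  refine ⟨q * d, fun N _ i hi => ?_⟩
  have hqd : d ≤ q * d := Nat.le_mul_of_pos_left d hq
  have hf1 : FiniteDimensional K (filtW K q d N γ i) :=
    Submodule.finiteDimensional_of_le (filtW_le_hom hhom i)
  have hf2 : FiniteDimensional K (filtW K q d N γ (lexSucc q hq i)) :=
    Submodule.finiteDimensional_of_le (filtW_le_hom hhom _)
  have e1 := finrank_mul_sup (hP i) (filtW K q d N γ (lexSucc q hq i))
    (MvPolynomial.homogeneousSubmodule (Fin (q + 1)) K (N - d * ∑ j, i j)) _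
    (filtW_inf hq hhom hr h0 i (by omega))
  rw [← filtW_eq_sup hq i (by omega)] at e1
  have e2 := hilb_span γ hhom h0 hr (N - d * ∑ j, i j) (by omega)
  have hle : filtW K q d N γ (lexSucc q hq i) ≤ filtW K q d N γ i := by
    rw [filtW_eq_sup hq i (by omega)]
    exact le_sup_left
  have e3 := Submodule.finrank_quotient_add_finrank
    (Submodule.comap (filtW K q d N γ i).subtype (filtW K q d N γ (lexSucc q hq i)))
  rw [(Submodule.comapSubtypeEquivOfLe hle).finrank_eq] at e3
  rw [hilb] at e2
  zify
  rw [← e2]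
  omega
end

section
/- Let X ⊂ P^N be an algebraic variety of dimension n and degree Δ over ℂ. Let m > Δ be an integer and let c⃗ = (c_0,…,c_N) ∈ ℝ^{N+1}_{≥0}. Then (1/(m·H_X(m)))·S_X(m, c⃗) ≥ (1/((n+1)Δ))·e_X(c⃗) − ((2n+1)Δ/m)·max_{0≤i≤N} c_i. -/
open scoped BigOperators

noncomputable section

variable {k : ℕ}

/-- The image of the space of homogeneous polynomials of degree `m` in the homogeneous
coordinate ring `ℂ[y]/I`: the degree-`m` graded piece of the coordinate ring of the
projective variety with homogeneous ideal `I`. -/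
def gradedPiece (I : Ideal (MvPolynomial (Fin k) ℂ)) (m : ℕ) :
    Submodule ℂ (MvPolynomial (Fin k) ℂ ⧸ Submodule.restrictScalars ℂ I) :=
  Submodule.map (Submodule.restrictScalars ℂ I).mkQ
    (MvPolynomial.homogeneousSubmodule (Fin k) ℂ m)

/-- The Hilbert function `H_X(m) = dim_ℂ ℂ[y]_m/(I_X)_m` of the projective variety
`X ⊂ ℙ^{k-1}` with homogeneous ideal `I = I_X`. -/
def hilbertFn (I : Ideal (MvPolynomial (Fin k) ℂ)) (m : ℕ) : ℕ :=
  Module.finrank ℂ (gradedPiece I m)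

/-- `A` is a set of exponent vectors of monomials of degree `m` whose residue classes
modulo `I` form a basis of `ℂ[y]_m/(I)_m`. -/
def IsMonomialBasis (I : Ideal (MvPolynomial (Fin k) ℂ)) (m : ℕ)
    (A : Finset (Fin k →₀ ℕ)) : Prop :=
  (∀ a ∈ A, (∑ i, a i) = m) ∧
  LinearIndependent (ι := (A : Set (Fin k →₀ ℕ))) ℂ
    (fun a => (Submodule.restrictScalars ℂ I).mkQ (MvPolynomial.monomial a.1 (1 : ℂ))) ∧
  Submodule.span ℂ
      ((fun a => (Submodule.restrictScalars ℂ I).mkQ (MvPolynomial.monomial a (1 : ℂ))) '' A)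
    = gradedPiece I m

/-- The `m`-th Hilbert weight of the variety with homogeneous ideal `I` with respect to
the weight vector `c`:
`S_X(m, c⃗) = max Σ_{i=1}^{H_X(m)} a⃗^{(i)}·c⃗`, the maximum being over all sets of
monomials `y^{a⃗^{(1)}},…,y^{a⃗^{(H_X(m))}}` whose residue classes modulo `I` form a
basis of `ℂ[y]_m/(I)_m`. -/
def hilbertWeight (I : Ideal (MvPolynomial (Fin k) ℂ)) (m : ℕ) (c : Fin k → ℝ) : ℝ :=
  sSup {s : ℝ | ∃ A : Finset (Fin k →₀ ℕ), IsMonomialBasis I m A ∧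
    s = ∑ a ∈ A, ∑ i, (a i : ℝ) * c i}

end

open Filter
open Filter
namespace HW
open Finset

abbrev M (s d : ℕ) : ℕ := Nat.multichoose s d

theorem M_succ (s d : ℕ) : M (s+1) (d+1) = M s (d+1) + M (s+1) d := Nat.multichoose_succ_succ s d

theorem M_mono_succ (s d : ℕ) : M (s+1) d ≤ M (s+1) (d+1) := by rw [M_succ]; omega

theorem M_mono (s : ℕ) {d d' : ℕ} (h : d ≤ d') : M (s+1) d ≤ M (s+1) d' :=
  monotone_nat_of_le_succ (M_mono_succ s) h

theorem M_mono' (s : ℕ) {d d' : ℕ} (h0 : 1 ≤ d) (h : d ≤ d') : M s d ≤ M s d' := by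
  cases s with
  | zero =>
    obtain ⟨d, rfl⟩ := Nat.exists_eq_add_of_le' h0
    simp [M, Nat.multichoose_zero_succ]
  | succ s => exact M_mono s h

theorem M_le_left (s d : ℕ) : M s d ≤ M (s+1) d := by
  cases d with
  | zero => simp [M]
  | succ d => rw [M_succ]; omega

theorem M_pos (s d : ℕ) : 0 < M (s+1) d :=
  lt_of_lt_of_le (by simp [M]) (M_mono s (Nat.zero_le d))

theorem M_mul (s d : ℕ) : (d+1) * M s (d+1) = s * M (s+1) d := by
  rcases s with _ | s
  · simp [M, Nat.multichoose_zero_succ]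
  · simp only [M, Nat.multichoose_eq]
    have h1 : s + 1 + (d + 1) - 1 = s + d + 1 := by omega
    have h2 : s + 1 + 1 + d - 1 = s + d + 1 := by omega
    rw [h1, h2, mul_comm, Nat.choose_succ_right_eq]
    rw [mul_comm]
    congr 1; omega

theorem M_mul_le (s d : ℕ) : d * M s d ≤ s * M (s+1) d := by
  cases d with
  | zero => simp
  | succ d => rw [M_mul]; exact Nat.mul_le_mul_left _ (M_mono_succ s d)

theorem M_sub (s d β : ℕ) (h : β < d) : M (s+1) d ≤ M (s+1) (d - β) + β * M s d := by
  induction β with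
  | zero => simp
  | succ β ih =>
    have := ih (by omega)
    have h2 : M (s+1) (d - β) = M s (d - β) + M (s+1) (d - (β+1)) := by
      have : d - β = (d - (β+1)) + 1 := by omega
      rw [this, M_succ]
    have h3 : M s (d - β) ≤ M s d := M_mono' s (by omega) (by omega)
    rw [add_mul]; omega

/-- key shift estimate -/
theorem M_shift (s d β : ℕ) (h : β < d) :
    d * M (s+1) d ≤ d * M (s+1) (d - β) + β * s * M (s+1) d := by
  have h1 := Nat.mul_le_mul_left d (M_sub s d β h)
  have h2 := Nat.mul_le_mul_left β (M_mul_le s d)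
  nlinarith

theorem M_succ_eq_choose (s d : ℕ) : M (s+1) d = (d + s).choose s := by
  rw [M, Nat.multichoose_eq]
  have : s + 1 + d - 1 = d + s := by omega
  rw [this, Nat.choose_symm_add]

theorem M_asymp (s : ℕ) :
    Tendsto (fun l : ℕ => (M (s+1) l : ℝ) / (l:ℝ)^s) atTop (nhds (1 / (s.factorial : ℝ))) := by
  induction s with
  | zero => simp [M]
  | succ s ih =>
    have key : ∀ᶠ l : ℕ in atTop, (M (s+1) l : ℝ) / (l:ℝ)^s * ((1 + ((s:ℝ)+1) / (l:ℝ)) / ((s:ℝ)+1))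
        = (M (s+1+1) l : ℝ) / (l:ℝ)^(s+1) := by
      filter_upwards [eventually_gt_atTop 0] with l hl
      have h1 : ((l:ℝ) + s + 1) * M (s+1) l = (s+1) * M (s+1+1) l := by
        rw [M_succ_eq_choose, M_succ_eq_choose]
        have := Nat.add_one_mul_choose_eq (l+s) s
        have h := congrArg (Nat.cast : ℕ → ℝ) this
        push_cast at h
        rw [← add_assoc l s 1]
        linarith
      have hl' : (l:ℝ) ≠ 0 := by positivity
      have hs : (s:ℝ) + 1 ≠ 0 := by positivity
      field_simp
      linear_combination ((l:ℝ)^s * l) * h1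
    refine Tendsto.congr' key ?_
    have h2 : Tendsto (fun l : ℕ => (1 + ((s:ℝ)+1) / (l:ℝ)) / ((s:ℝ)+1)) atTop
        (nhds ((1 + 0) / ((s:ℝ)+1))) := by
      refine Tendsto.div_const (Tendsto.const_add _ ?_) _
      exact tendsto_const_div_atTop_nhds_zero_nat _
    have := ih.mul h2
    convert this using 2
    rw [Nat.factorial_succ]; push_cast; field_simp; ring

theorem ratio_add (β : ℕ) : Tendsto (fun l : ℕ => ((l + β : ℕ) : ℝ) / (l:ℝ)) atTop (nhds 1) := by
  have h2 : Tendsto (fun l : ℕ => 1 + (β:ℝ) / (l:ℝ)) atTop (nhds (1 + 0)) :=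
    Tendsto.const_add _ (tendsto_const_div_atTop_nhds_zero_nat _)
  rw [add_zero] at h2
  refine h2.congr' ?_
  filter_upwards [eventually_gt_atTop 0] with l hl
  have hl' : (l:ℝ) ≠ 0 := by positivity
  push_cast; field_simp

theorem ratio_sub (β : ℕ) : Tendsto (fun l : ℕ => ((l - β : ℕ) : ℝ) / (l:ℝ)) atTop (nhds 1) := by
  have h2 : Tendsto (fun l : ℕ => 1 - (β:ℝ) / (l:ℝ)) atTop (nhds (1 - 0)) :=
    Tendsto.const_sub _ (tendsto_const_div_atTop_nhds_zero_nat _)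
  rw [sub_zero] at h2
  refine h2.congr' ?_
  filter_upwards [eventually_gt_atTop 0, eventually_ge_atTop β] with l hl hb
  have hl' : (l:ℝ) ≠ 0 := by positivity
  push_cast [hb]; field_simp

theorem M_asymp_comp (s : ℕ) (f : ℕ → ℕ) (hf : Tendsto f atTop atTop)
    (hr : Tendsto (fun l : ℕ => (f l : ℝ) / (l:ℝ)) atTop (nhds 1)) :
    Tendsto (fun l : ℕ => (M (s+1) (f l) : ℝ) / (l:ℝ)^s) atTop (nhds (1 / (s.factorial : ℝ))) := by
  have h1 := ((M_asymp s).comp hf).mul (hr.pow s)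
  simp only [one_pow, mul_one] at h1
  refine h1.congr' ?_
  filter_upwards [eventually_gt_atTop 0, hf.eventually_gt_atTop 0] with l hl hb
  have hl' : (l:ℝ) ≠ 0 := by positivity
  have hl' : (f l:ℝ) ≠ 0 := by positivity
  simp only [Function.comp]
  rw [div_pow]
  field_simp

theorem M_asymp_add (s β : ℕ) :
    Tendsto (fun l : ℕ => (M (s+1) (l + β) : ℝ) / (l:ℝ)^s) atTop (nhds (1 / (s.factorial : ℝ))) :=
  M_asymp_comp s _ (tendsto_add_atTop_nat β) (ratio_add β)

theorem M_asymp_sub (s β : ℕ) :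
    Tendsto (fun l : ℕ => (M (s+1) (l - β) : ℝ) / (l:ℝ)^s) atTop (nhds (1 / (s.factorial : ℝ))) :=
  M_asymp_comp s _ (tendsto_sub_atTop_nat β) (ratio_sub β)

theorem div_pow_lt {f : ℕ → ℝ} {s t : ℕ} {x : ℝ} (h : s < t)
    (hf : Tendsto (fun l : ℕ => f l / (l:ℝ)^s) atTop (nhds x)) :
    Tendsto (fun l : ℕ => f l / (l:ℝ)^t) atTop (nhds 0) := by
  obtain ⟨r, rfl⟩ := Nat.exists_eq_add_of_lt h
  have h1 : Tendsto (fun l : ℕ => (1:ℝ) / (l:ℝ)^(r+1)) atTop (nhds 0) := by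
    have := (tendsto_pow_atTop (α := ℝ) (n := r+1) (by omega)).comp tendsto_natCast_atTop_atTop
    simp only [one_div]
    exact this.inv_tendsto_atTop
  have := hf.mul h1
  rw [mul_zero] at this
  refine this.congr (fun l => ?_)
  rw [div_mul_div_comm, mul_one, ← pow_add]; rfl

/-- lower order counts vanish -/
theorem M_small (s t β : ℕ) (h : s ≤ t) :
    Tendsto (fun l : ℕ => (M s (l - β) : ℝ) / (l:ℝ)^t) atTop (nhds 0) := by
  cases s with
  | zero =>
    refine tendsto_const_nhds.congr' ?_
    filter_upwards [eventually_gt_atTop β] with l hl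
    obtain ⟨d, hd⟩ := Nat.exists_eq_add_of_lt hl
    have : l - β = d + 1 := by omega
    simp [this, M, Nat.multichoose_zero_succ]
  | succ s => exact div_pow_lt (by omega) (M_asymp_sub s β)

end HW

open Filter
namespace HW
open Finset

/-- exponent vectors of degree `m` -/
def E (k m : ℕ) : Finset (Fin k →₀ ℕ) := finsuppAntidiag univ m

theorem mem_E {k m : ℕ} {a : Fin k →₀ ℕ} : a ∈ E k m ↔ ∑ i, a i = m := by
  simp [E, mem_finsuppAntidiag]

theorem card_E (k m : ℕ) : #(E k m) = M k m := by
  simp [E, card_finsuppAntidiag_nat_eq_multichoose]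

/-- degree `m` part of the cone `b + ℕ^σ` -/
def cone {k : ℕ} (b : Fin k →₀ ℕ) (σ : Finset (Fin k)) (m : ℕ) : Finset (Fin k →₀ ℕ) :=
  (E k m).filter (fun a => ∀ i, i ∉ σ → a i = b i)

/-- weight of an exponent vector -/
noncomputable def wt {k : ℕ} (c : Fin k → ℝ) (a : Fin k →₀ ℕ) : ℝ := ∑ i, (a i : ℝ) * c i

theorem mem_cone {k m : ℕ} {a b : Fin k →₀ ℕ} {σ : Finset (Fin k)} :
    a ∈ cone b σ m ↔ ∑ i, a i = m ∧ ∀ i, i ∉ σ → a i = b i := by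
  simp [cone, mem_E]

theorem wt_nonneg {k : ℕ} {c : Fin k → ℝ} (hc : ∀ i, 0 ≤ c i) (a : Fin k →₀ ℕ) : 0 ≤ wt c a :=
  sum_nonneg (fun i _ => mul_nonneg (by positivity) (hc i))

theorem wt_le {k : ℕ} {c : Fin k → ℝ} {C : ℝ} (hC : ∀ i, c i ≤ C) (a : Fin k →₀ ℕ) :
    wt c a ≤ (∑ i, a i : ℕ) * C := by
  rw [wt]; push_cast; rw [sum_mul]
  exact sum_le_sum (fun i _ => mul_le_mul_of_nonneg_left (hC i) (by positivity))

theorem le_of_cone {k : ℕ} {a b : Fin k →₀ ℕ} {σ : Finset (Fin k)} (hb : ∀ i ∈ σ, b i = 0)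
    (ha : ∀ i, i ∉ σ → a i = b i) : b ≤ a := by
  intro i
  by_cases h : i ∈ σ
  · simp [hb i h]
  · rw [ha i h]

theorem card_cone {k m : ℕ} {b : Fin k →₀ ℕ} {σ : Finset (Fin k)} (hb : ∀ i ∈ σ, b i = 0)
    (hm : ∑ i, b i ≤ m) : #(cone b σ m) = M #σ (m - ∑ i, b i) := by
  have : cone b σ m = (finsuppAntidiag σ (m - ∑ i, b i)).map (addRightEmbedding b) := by
    ext a
    simp only [mem_cone, Finset.mem_map, mem_finsuppAntidiag, addRightEmbedding_apply]
    constructor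
    · rintro ⟨h1, h2⟩
      have hle := le_of_cone hb h2
      refine ⟨a - b, ⟨?_, ?_⟩, tsub_add_cancel_of_le hle⟩
      · have hs : (a - b) + b = a := tsub_add_cancel_of_le hle
        have e1 : ∑ i, (a - b) i + ∑ i, b i = m := by
          rw [← sum_add_distrib, ← h1]
          exact sum_congr rfl (fun i _ => by rw [← Finsupp.add_apply, hs])
        have e2 : ∑ i ∈ σ, (a - b) i = ∑ i, (a - b) i := by
          refine sum_subset (subset_univ _) (fun i _ hi => ?_)
          simp [h2 i hi]
        show ∑ i ∈ σ, (a - b) i = _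
        omega
      · intro i hi
        by_contra h
        simp [h2 i h] at hi
    · rintro ⟨x, ⟨hx, hs⟩, rfl⟩
      have hx0 : ∀ i, i ∉ σ → x i = 0 := fun i hi => by
        by_contra h
        exact hi (hs (by simpa using h))
      constructor
      · have e2 : ∑ i ∈ σ, x i = ∑ i, x i :=
          sum_subset (subset_univ _) (fun i _ hi => hx0 i hi)
        have hx' : ∑ i ∈ σ, x i = m - ∑ i, b i := hx
        simp only [Finsupp.add_apply, sum_add_distrib]
        omega
      · intro i hi
        simp [hx0 i hi]
  rw [this, card_map, card_finsuppAntidiag_nat_eq_multichoose]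

theorem cone_empty {k m : ℕ} {b : Fin k →₀ ℕ} {σ : Finset (Fin k)} (hb : ∀ i ∈ σ, b i = 0)
    (hm : m < ∑ i, b i) : cone b σ m = ∅ := by
  rw [eq_empty_iff_forall_notMem]
  intro a ha
  rw [mem_cone] at ha
  have := le_of_cone hb ha.2
  have := sum_le_sum (fun i (_ : i ∈ univ) => this i)
  omega

theorem card_cone_le {k m : ℕ} {b : Fin k →₀ ℕ} {σ : Finset (Fin k)} (hb : ∀ i ∈ σ, b i = 0) :
    #(cone b σ m) ≤ M #σ (m - ∑ i, b i) := by
  by_cases hm : ∑ i, b i ≤ m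
  · exact (card_cone hb hm).le
  · simp [cone_empty hb (not_le.mp hm)]

theorem cone_symm {k m : ℕ} {b : Fin k →₀ ℕ} {σ : Finset (Fin k)} {i j : Fin k}
    (hi : i ∈ σ) (hj : j ∈ σ) :
    ∑ a ∈ cone b σ m, (a i : ℝ) = ∑ a ∈ cone b σ m, (a j : ℝ) := by
  have hmem : ∀ a ∈ cone b σ m, a.equivMapDomain (Equiv.swap i j) ∈ cone b σ m := by
    intro a ha
    rw [mem_cone] at ha ⊢
    constructor
    · rw [← ha.1]
      simp only [Finsupp.equivMapDomain_apply]
      exact Equiv.sum_comp (Equiv.swap i j).symm (fun x => a x)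
    · intro l hl
      rw [Finsupp.equivMapDomain_apply, Equiv.symm_swap, Equiv.swap_apply_of_ne_of_ne, ha.2 l hl]
      · rintro rfl; exact hl hi
      · rintro rfl; exact hl hj
  have hinv : ∀ a : Fin k →₀ ℕ,
      (a.equivMapDomain (Equiv.swap i j)).equivMapDomain (Equiv.swap i j) = a := by
    intro a; ext l; simp
  refine sum_nbij' (fun a => a.equivMapDomain (Equiv.swap i j))
    (fun a => a.equivMapDomain (Equiv.swap i j)) hmem hmem (fun a _ => hinv a) (fun a _ => hinv a) ?_
  intro a _
  simp

theorem cone_weight {k m : ℕ} {b : Fin k →₀ ℕ} {σ : Finset (Fin k)} (hb : ∀ i ∈ σ, b i = 0)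
    (c : Fin k → ℝ) :
    (#σ : ℝ) * ∑ a ∈ cone b σ m, wt c a
      = #(cone b σ m) * (#σ * wt c b + ((m:ℝ) - (∑ i, b i : ℕ)) * ∑ i ∈ σ, c i) := by
  set t : Fin k → ℝ := fun i => ∑ a ∈ cone b σ m, (a i : ℝ) with ht
  have hout : ∀ i, i ∉ σ → t i = #(cone b σ m) * b i := by
    intro i hi
    rw [ht]; dsimp only
    rw [sum_congr rfl (g := fun _ => (b i : ℝ)) (fun a ha => by rw [(mem_cone.1 ha).2 i hi])]
    simp
  have hall : ∑ i, t i = #(cone b σ m) * (m:ℝ) := by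
    rw [ht, sum_comm]
    rw [sum_congr rfl (g := fun _ => (m : ℝ))]
    · simp
    · intro a ha
      have := (mem_cone.1 ha).1
      exact_mod_cast this
  have hsplit := sum_add_sum_compl σ t
  have hbs : ∑ i ∈ σᶜ, (b i : ℝ) = (∑ i, b i : ℕ) := by
    push_cast
    rw [← sum_add_sum_compl σ (fun i => (b i : ℝ)), sum_eq_zero (s := σ), zero_add]
    intro i hi; simp [hb i hi]
  have hc1 : ∑ i ∈ σᶜ, t i = #(cone b σ m) * (∑ i, b i : ℕ) := by
    rw [← hbs, mul_sum]
    exact sum_congr rfl (fun i hi => hout i (by simpa using hi))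
  have hin : ∀ i ∈ σ, (#σ : ℝ) * t i = #(cone b σ m) * ((m:ℝ) - (∑ i, b i : ℕ)) := by
    intro i hi
    have : ∑ j ∈ σ, t j = #σ * t i := by
      rw [sum_congr rfl (g := fun _ => t i) (fun j hj => cone_symm hj hi)]
      simp
    rw [← this, mul_sub, ← hall, ← hc1, ← hsplit]; ring
  have hW : ∑ a ∈ cone b σ m, wt c a = ∑ i, t i * c i := by
    simp only [wt, ht]
    rw [sum_comm]
    exact sum_congr rfl (fun i _ => by rw [sum_mul])
  have hwb : wt c b = ∑ i ∈ σᶜ, (b i : ℝ) * c i := by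
    rw [wt, ← sum_add_sum_compl σ, sum_eq_zero (s := σ), zero_add]
    intro i hi; simp [hb i hi]
  rw [hW, hwb, ← sum_add_sum_compl σ, mul_add, mul_add, add_comm]
  congr 1
  · rw [mul_sum, mul_sum, mul_sum]
    refine sum_congr rfl (fun i hi => ?_)
    rw [hout i (by simpa using hi)]; ring
  · rw [mul_sum, ← mul_assoc, mul_sum]
    refine sum_congr rfl (fun i hi => ?_)
    rw [← hin i hi]; ring

theorem bonferroni {ι α : Type*} [DecidableEq ι] [DecidableEq α] (F : Finset ι)
    (A : ι → Finset α) (D : Finset α)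
    (hA : ∀ p ∈ F, A p ⊆ D) (w : α → ℝ) (hw : ∀ a ∈ D, 0 ≤ w a) :
    2 * ∑ p ∈ F, ∑ a ∈ A p, w a
      ≤ 2 * ∑ a ∈ D, w a + ∑ pq ∈ F.offDiag, ∑ a ∈ A pq.1 ∩ A pq.2, w a := by
  have h1 : ∑ p ∈ F, ∑ a ∈ A p, w a = ∑ a ∈ D, (#(F.filter (fun p => a ∈ A p)) : ℝ) * w a := by
    have : ∀ p ∈ F, ∑ a ∈ A p, w a = ∑ a ∈ D, if a ∈ A p then w a else 0 := by
      intro p hp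
      rw [← sum_filter]
      congr 1
      ext a; simp only [mem_filter]
      exact ⟨fun h => ⟨hA p hp h, h⟩, fun h => h.2⟩
    rw [sum_congr rfl this, sum_comm]
    refine sum_congr rfl (fun a _ => ?_)
    rw [← sum_filter]; simp
  have h2 : ∑ pq ∈ F.offDiag, ∑ a ∈ A pq.1 ∩ A pq.2, w a
      = ∑ a ∈ D, (#((F.filter (fun p => a ∈ A p)).offDiag) : ℝ) * w a := by
    have : ∀ pq ∈ F.offDiag, ∑ a ∈ A pq.1 ∩ A pq.2, w a
        = ∑ a ∈ D, if a ∈ A pq.1 ∩ A pq.2 then w a else 0 := by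
      intro pq hp
      rw [mem_offDiag] at hp
      rw [← sum_filter]
      congr 1
      ext a; simp only [mem_filter, mem_inter]
      exact ⟨fun h => ⟨hA _ hp.1 h.1, h⟩, fun h => h.2⟩
    rw [sum_congr rfl this, sum_comm]
    refine sum_congr rfl (fun a _ => ?_)
    rw [← sum_filter]
    have : F.offDiag.filter (fun pq => a ∈ A pq.1 ∩ A pq.2)
        = (F.filter (fun p => a ∈ A p)).offDiag := by
      ext pq; simp only [mem_filter, mem_offDiag, mem_inter]; tauto
    rw [this]; simp
  rw [h1, h2, mul_sum, mul_sum, ← sum_add_distrib]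
  refine sum_le_sum (fun a ha => ?_)
  have hw' := hw a ha
  set r := #(F.filter (fun p => a ∈ A p))
  have h3 : #((F.filter (fun p => a ∈ A p)).offDiag) + r = r * r := by
    rw [offDiag_card]
    have : r ≤ r * r := Nat.le_mul_self r
    show r * r - r + r = r * r
    omega
  have h4 : (#((F.filter (fun p => a ∈ A p)).offDiag) : ℝ) = r * r - r := by
    have := congrArg (Nat.cast : ℕ → ℝ) h3
    push_cast at this; linarith
  rw [h4]
  have h5 : (0:ℝ) ≤ (r - 1) * (r - 2) := by
    rcases Nat.lt_or_ge r 2 with h | h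
    · interval_cases r <;> norm_num
    · have : (2:ℝ) ≤ r := by exact_mod_cast h
      nlinarith
  nlinarith [mul_nonneg h5 hw']

theorem exists_le_sum {k : ℕ} (b : Fin k →₀ ℕ) (t : ℕ) (ht : t ≤ ∑ i, b i) :
    ∃ b' : Fin k →₀ ℕ, b' ≤ b ∧ ∑ i, b' i = t := by
  obtain ⟨d, hd⟩ := Nat.exists_eq_add_of_le ht
  induction d generalizing t with
  | zero => exact ⟨b, le_refl _, by omega⟩
  | succ d ih =>
    obtain ⟨b', h1, h2⟩ := ih (t+1) (by omega) (by omega)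
    have : ∃ i, b' i ≠ 0 := by
      by_contra h
      push Not at h
      simp [h] at h2
    obtain ⟨i, hi⟩ := this
    refine ⟨b' - Finsupp.single i 1, tsub_le_self.trans h1, ?_⟩
    have hle : Finsupp.single i 1 ≤ b' := by
      rw [Finsupp.single_le_iff]; omega
    have e : ∑ j, (b' - Finsupp.single i 1 : Fin k →₀ ℕ) j + ∑ j, (Finsupp.single i 1 : Fin k →₀ ℕ) j
        = ∑ j, b' j := by
      rw [← sum_add_distrib]
      refine sum_congr rfl (fun j _ => ?_)
      rw [← Finsupp.add_apply, tsub_add_cancel_of_le hle]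
    have e1 : ∑ j, (Finsupp.single i 1 : Fin k →₀ ℕ) j = 1 := by
      simp [Finsupp.single_apply]
    omega

/-- layer-cake comparison -/
theorem layer {α : Type*} [DecidableEq α] (A B : Finset α) (w : α → ℝ) (hw : ∀ a, 0 ≤ w a)
    (h : ∀ t : ℝ, #(A.filter (fun a => t ≤ w a)) ≤ #(B.filter (fun a => t ≤ w a))) :
    ∑ a ∈ A, w a ≤ ∑ a ∈ B, w a := by
  have hall := (Finset.all_card_le_biUnion_card_iff_exists_injective
    (fun a : A => B.filter (fun b => w a ≤ w b))).1 ?_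
  · obtain ⟨f, hf, hm⟩ := hall
    rw [← sum_attach A]
    calc ∑ a ∈ A.attach, w a ≤ ∑ a ∈ A.attach, w (f a) :=
          sum_le_sum (fun a _ => (mem_filter.1 (hm a)).2)
      _ = ∑ b ∈ A.attach.image f, w b := by
          rw [sum_image (fun x _ y _ hxy => hf hxy)]
      _ ≤ ∑ a ∈ B, w a := by
          refine sum_le_sum_of_subset_of_nonneg ?_ (fun i _ _ => hw i)
          intro b hb
          obtain ⟨a, _, rfl⟩ := mem_image.1 hb
          exact (mem_filter.1 (hm a)).1
  · intro s
    rcases s.eq_empty_or_nonempty with rfl | hs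
    · simp
    · obtain ⟨a0, ha0, hmin⟩ := exists_min_image s (fun a => w a) hs
      calc #s = #(s.map (Function.Embedding.subtype _)) := (card_map _).symm
        _ ≤ #(A.filter (fun a => w a0 ≤ w a)) := by
            refine card_le_card ?_
            intro a ha
            obtain ⟨x, hx, rfl⟩ := Finset.mem_map.1 ha
            exact mem_filter.2 ⟨x.2, hmin x hx⟩
        _ ≤ #(B.filter (fun a => w a0 ≤ w a)) := h _
        _ ≤ _ := card_le_card (subset_biUnion_of_mem (fun a : A => B.filter (fun b => w a ≤ w b)) ha0)

end HW

open Filter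
namespace HW
open Finset

open Classical in
/-- degree `m` part of `D` -/
noncomputable def Dm {k : ℕ} (D : Set (Fin k →₀ ℕ)) (m : ℕ) : Finset (Fin k →₀ ℕ) :=
  (E k m).filter (· ∈ D)

theorem mem_Dm {k m : ℕ} {D : Set (Fin k →₀ ℕ)} {a : Fin k →₀ ℕ} :
    a ∈ Dm D m ↔ ∑ i, a i = m ∧ a ∈ D := by
  classical
  simp [Dm, mem_E]

/-- degree of the apex -/
def bt {k : ℕ} (p : (Fin k →₀ ℕ) × Finset (Fin k)) : ℕ := ∑ i, p.1 i

/-- the cone of `p` lies in `D` -/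
def InD {k : ℕ} (D : Set (Fin k →₀ ℕ)) (p : (Fin k →₀ ℕ) × Finset (Fin k)) : Prop :=
  (∀ i ∈ p.2, p.1 i = 0) ∧ ∀ a : Fin k →₀ ℕ, (∀ i, i ∉ p.2 → a i = p.1 i) → a ∈ D

/-- top dimensional cones -/
def Top {k : ℕ} (D : Set (Fin k →₀ ℕ)) (n : ℕ) (p : (Fin k →₀ ℕ) × Finset (Fin k)) : Prop :=
  #p.2 = n + 1 ∧ InD D p

theorem cone_subset {k : ℕ} {D : Set (Fin k →₀ ℕ)} {p : (Fin k →₀ ℕ) × Finset (Fin k)}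
    (hp : InD D p) (m : ℕ) : cone p.1 p.2 m ⊆ Dm D m := by
  intro a ha
  rw [mem_cone] at ha
  exact mem_Dm.2 ⟨ha.1, hp.2 a ha.2⟩

theorem inter_bound {k n : ℕ} {D : Set (Fin k →₀ ℕ)} {p q : (Fin k →₀ ℕ) × Finset (Fin k)}
    (hp : Top D n p) (hq : Top D n q) (hpq : p ≠ q) :
    ∃ x, (p.2 = q.2 → x = 0) ∧ x ≤ bt p + bt q ∧
      ∀ m, #(cone p.1 p.2 m ∩ cone q.1 q.2 m) ≤ M n (m - x) := by
  by_cases hσ : p.2 = q.2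
  · refine ⟨0, fun _ => rfl, Nat.zero_le _, fun m => ?_⟩
    have : cone p.1 p.2 m ∩ cone q.1 q.2 m = ∅ := by
      rw [eq_empty_iff_forall_notMem]
      intro a ha
      rw [mem_inter, mem_cone, mem_cone] at ha
      apply hpq
      refine Prod.ext ?_ hσ
      ext i
      by_cases hi : i ∈ p.2
      · rw [hp.2.1 i hi, hq.2.1 i (hσ ▸ hi)]
      · rw [← ha.1.2 i hi, ← ha.2.2 i (hσ ▸ hi)]
    simp [this]
  · have : ∃ i ∈ p.2, i ∉ q.2 := by
      by_contra h
      push Not at h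
      exact hσ (eq_of_subset_of_card_le h (by rw [hp.1, hq.1]))
    obtain ⟨i, hi, hi'⟩ := this
    refine ⟨bt p + q.1 i, fun h => absurd h hσ, ?_, fun m => ?_⟩
    · have : q.1 i ≤ bt q := single_le_sum (f := fun i => q.1 i) (fun _ _ => Nat.zero_le _) (mem_univ i)
      omega
    · have hs : cone p.1 p.2 m ∩ cone q.1 q.2 m
          ⊆ cone (p.1 + Finsupp.single i (q.1 i)) (p.2.erase i) m := by
        intro a ha
        rw [mem_inter, mem_cone, mem_cone] at ha
        rw [mem_cone]
        refine ⟨ha.1.1, fun j hj => ?_⟩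
        by_cases hji : j = i
        · subst hji
          simp [ha.2.2 j hi', hp.2.1 j hi]
        · have : j ∉ p.2 := fun h => hj (mem_erase.2 ⟨hji, h⟩)
          rw [ha.1.2 j this]
          simp [hji]
      refine (card_le_card hs).trans ?_
      refine (card_cone_le ?_).trans ?_
      · intro j hj
        rw [mem_erase] at hj
        simp [hp.2.1 j hj.2, hj.1]
      · have e1 : #(p.2.erase i) = n := by rw [card_erase_of_mem hi, hp.1]; rfl
        have e2 : ∑ j, (p.1 + Finsupp.single i (q.1 i)) j = bt p + q.1 i := by
          simp [sum_add_distrib, bt, Finsupp.single_apply]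
        rw [e1, e2]

theorem cone_card_asymp {k n : ℕ} {D : Set (Fin k →₀ ℕ)} {p : (Fin k →₀ ℕ) × Finset (Fin k)}
    (hp : Top D n p) :
    Tendsto (fun l : ℕ => (#(cone p.1 p.2 l) : ℝ) / (l:ℝ)^n) atTop (nhds (1 / (n.factorial:ℝ))) := by
  refine (M_asymp_sub n (bt p)).congr' ?_
  filter_upwards [eventually_ge_atTop (bt p)] with l hl
  rw [card_cone hp.2.1 hl, hp.1]; rfl

theorem card_top_le {k n Δ : ℕ} {D : Set (Fin k →₀ ℕ)}
    (hH : Tendsto (fun l : ℕ => (Nat.factorial n : ℝ) * (#(Dm D l) : ℝ) / (l : ℝ) ^ n)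
      atTop (nhds (Δ : ℝ)))
    (F : Finset ((Fin k →₀ ℕ) × Finset (Fin k))) (hF : ∀ p ∈ F, Top D n p) : #F ≤ Δ := by
  classical
  have hb : ∀ l, 2 * ∑ p ∈ F, (#(cone p.1 p.2 l) : ℝ)
      ≤ 2 * (#(Dm D l) : ℝ) + ∑ pq ∈ F.offDiag, (#(cone pq.1.1 pq.1.2 l ∩ cone pq.2.1 pq.2.2 l) : ℝ) := by
    intro l
    have := bonferroni F (fun p => cone p.1 p.2 l) (Dm D l) (fun p hp => cone_subset (hF p hp).2 l)
      (fun _ => 1) (fun _ _ => zero_le_one)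
    simpa using this
  have h1 : Tendsto (fun l : ℕ => (n.factorial:ℝ) * (2 * ∑ p ∈ F, (#(cone p.1 p.2 l) : ℝ) / (l:ℝ)^n))
      atTop (nhds ((n.factorial:ℝ) * (2 * ∑ p ∈ F, 1 / (n.factorial:ℝ)))) :=
    ((tendsto_finsetSum F (fun p hp => cone_card_asymp (hF p hp))).const_mul 2).const_mul _
  have h2 : Tendsto (fun l : ℕ => ∑ pq ∈ F.offDiag,
      (#(cone pq.1.1 pq.1.2 l ∩ cone pq.2.1 pq.2.2 l) : ℝ) / (l:ℝ)^n) atTop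
      (nhds (∑ pq ∈ F.offDiag, 0)) := by
    refine tendsto_finsetSum _ (fun pq hpq => ?_)
    rw [mem_offDiag] at hpq
    obtain ⟨x, -, -, hx⟩ := inter_bound (hF _ hpq.1) (hF _ hpq.2.1) hpq.2.2
    refine squeeze_zero (fun l => by positivity) (fun l => ?_) (M_small n n x le_rfl)
    gcongr
    exact_mod_cast hx l
  have h3 := (hH.const_mul 2).add (h2.const_mul (n.factorial:ℝ))
  have h4 := le_of_tendsto_of_tendsto' h1 h3 (fun l => ?_)
  · have hn : (n.factorial : ℝ) ≠ 0 := by positivity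
    simp only [sum_const, smul_zero, mul_zero, add_zero, nsmul_eq_mul] at h4
    field_simp at h4
    have : (#F : ℝ) ≤ Δ := by linarith
    exact_mod_cast this
  · rw [← sum_div, ← sum_div]
    have := hb l
    have h5 : (0:ℝ) ≤ (n.factorial:ℝ) / (l:ℝ)^n := by positivity
    have := mul_le_mul_of_nonneg_left this h5
    calc _ = (n.factorial:ℝ) / (l:ℝ)^n * (2 * ∑ p ∈ F, (#(cone p.1 p.2 l) : ℝ)) := by ring
      _ ≤ _ := this
      _ = _ := by ring

theorem top_shrink {k n : ℕ} {D : Set (Fin k →₀ ℕ)} (hD : IsLowerSet D)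
    {p : (Fin k →₀ ℕ) × Finset (Fin k)} (hp : Top D n p) (t : ℕ) (ht : t ≤ bt p) :
    ∃ q, Top D n q ∧ q.2 = p.2 ∧ bt q = t := by
  obtain ⟨b', h1, h2⟩ := exists_le_sum p.1 t ht
  refine ⟨(b', p.2), ⟨hp.1, ?_, ?_⟩, rfl, h2⟩
  · intro i hi
    have := h1 i
    rw [hp.2.1 i hi] at this
    simpa using this
  · intro a ha
    refine hD (show a ≤ a + (p.1 - b') from le_add_of_nonneg_right zero_le) (hp.2.2 _ ?_)
    intro i hi
    have h3 : a i = b' i := ha i hi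
    have h4 := h1 i
    rw [Finsupp.add_apply, h3, Finsupp.tsub_apply]
    omega

theorem dickson {k : ℕ} {D : Set (Fin k →₀ ℕ)} (hD : IsLowerSet D) :
    ∃ t : ℕ, ∀ a ∈ D, ∀ a' : Fin k →₀ ℕ, (∀ i, a' i = a i ∨ t ≤ a i) → a' ∈ D := by
  have hfin : {u | Minimal (· ∉ D) u}.Finite := by
    apply WellQuasiOrderedLE.finite_of_isAntichain
    exact setOfPred_minimal_antichain _
  set t := ∑ u ∈ hfin.toFinset, ∑ i, u i
  refine ⟨t, fun a ha a' h => ?_⟩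
  by_contra hcon
  obtain ⟨u, hu, hmin⟩ := exists_minimal_le_of_wellFoundedLT (· ∉ D) a' hcon
  apply hmin.1
  refine hD (?_ : u ≤ a) ha
  intro i
  rcases h i with h | h
  · rw [← h]; exact hu i
  · have h1 : u i ≤ ∑ i, u i := single_le_sum (f := fun i => u i) (fun _ _ => Nat.zero_le _) (mem_univ i)
    have h2 : ∑ i, u i ≤ t := single_le_sum (f := fun u : Fin k →₀ ℕ => ∑ i, u i)
      (fun _ _ => Nat.zero_le _) (hfin.mem_toFinset.2 hmin)
    omega

/-- finite decomposition into cones -/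
theorem decomposition {k : ℕ} {D : Set (Fin k →₀ ℕ)} (hD : IsLowerSet D) :
    ∃ G : Finset ((Fin k →₀ ℕ) × Finset (Fin k)), (∀ g ∈ G, InD D g) ∧
      ∀ l, ∀ a ∈ Dm D l, ∃ g ∈ G, a ∈ cone g.1 g.2 l := by
  classical
  obtain ⟨t, ht⟩ := dickson hD
  let T : Fin k →₀ ℕ := Finsupp.equivFunOnFinite.symm (fun _ => t)
  refine ⟨((Finset.Iic T) ×ˢ univ).filter (InD D), fun g hg => (mem_filter.1 hg).2, ?_⟩
  intro l a ha
  rw [mem_Dm] at ha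
  let σ : Finset (Fin k) := univ.filter (fun i => t ≤ a i)
  have hσ : ∀ i, i ∈ σ ↔ t ≤ a i := fun i => by simp [σ]
  let b : Fin k →₀ ℕ := Finsupp.filter (· ∉ σ) a
  have hb1 : ∀ i, i ∈ σ → b i = 0 := fun i hi => by simp [b, hi]
  have hb2 : ∀ i, i ∉ σ → b i = a i := fun i hi => by simp [b, hi]
  refine ⟨(b, σ), mem_filter.2 ⟨mem_product.2 ⟨mem_Iic.2 ?_, mem_univ _⟩, hb1, ?_⟩, ?_⟩
  · intro i
    show b i ≤ t
    by_cases hi : i ∈ σ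
    · rw [hb1 i hi]; exact Nat.zero_le _
    · rw [hb2 i hi]; rw [hσ] at hi; omega
  · intro a' ha'
    refine ht a ha.2 a' (fun i => ?_)
    by_cases hi : i ∈ σ
    · right; exact (hσ i).1 hi
    · left; rw [ha' i hi, hb2 i hi]
  · exact mem_cone.2 ⟨ha.1, fun i hi => (hb2 i hi).symm⟩

theorem cone_wt_asymp {k n : ℕ} {D : Set (Fin k →₀ ℕ)} {p : (Fin k →₀ ℕ) × Finset (Fin k)}
    (hp : Top D n p) (c : Fin k → ℝ) :
    Tendsto (fun l : ℕ => ((n+1).factorial:ℝ) * (∑ a ∈ cone p.1 p.2 l, wt c a) / (l:ℝ)^(n+1)) atTop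
      (nhds (∑ i ∈ p.2, c i)) := by
  have h1 := cone_card_asymp hp
  have h2 : Tendsto (fun l : ℕ => wt c p.1 / (l:ℝ)) atTop (nhds 0) :=
    tendsto_const_div_atTop_nhds_zero_nat _
  have h3 := ratio_sub (bt p)
  have h4 := ((h1.mul ((h2.const_mul ((n:ℝ)+1)).add (h3.mul_const (∑ i ∈ p.2, c i)))).const_mul
    (n.factorial : ℝ))
  have hn : (n.factorial : ℝ) ≠ 0 := by positivity
  have e : (n.factorial : ℝ) * (1 / (n.factorial : ℝ) * (((n:ℝ) + 1) * 0 + 1 * ∑ i ∈ p.2, c i))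
      = ∑ i ∈ p.2, c i := by field_simp; ring
  rw [e] at h4
  refine h4.congr' ?_
  filter_upwards [eventually_ge_atTop (bt p), eventually_gt_atTop 0] with l hl hl0
  have hw := cone_weight (m := l) hp.2.1 c
  rw [hp.1] at hw
  have hl' : (l:ℝ) ≠ 0 := by positivity
  have e2 : ((l - bt p : ℕ) : ℝ) = (l:ℝ) - (∑ i, p.1 i : ℕ) := by rw [Nat.cast_sub hl]; rfl
  rw [e2, Nat.factorial_succ]
  push_cast at hw ⊢
  rw [mul_comm ((n:ℝ)+1) (n.factorial : ℝ), mul_assoc (n.factorial : ℝ), hw]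
  field_simp
  ring

theorem cone_wt_small {k n : ℕ} {p : (Fin k →₀ ℕ) × Finset (Fin k)}
    (hp : #p.2 ≤ n) (hp0 : ∀ i ∈ p.2, p.1 i = 0) (c : Fin k → ℝ) (hc : ∀ i, 0 ≤ c i) (C : ℝ)
    (hC : ∀ i, c i ≤ C) (hC0 : 0 ≤ C) :
    Tendsto (fun l : ℕ => ((n+1).factorial:ℝ) * (∑ a ∈ cone p.1 p.2 l, wt c a) / (l:ℝ)^(n+1)) atTop
      (nhds 0) := by
  have h1 := ((M_small (#p.2) n (bt p) hp).const_mul C).const_mul ((n+1).factorial:ℝ)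
  rw [mul_zero, mul_zero] at h1
  refine squeeze_zero' (Eventually.of_forall fun l => ?_) ?_ h1
  · have : 0 ≤ ∑ a ∈ cone p.1 p.2 l, wt c a := sum_nonneg (fun a _ => wt_nonneg hc a)
    positivity
  · filter_upwards [eventually_gt_atTop 0] with l hl
    have hl' : (l:ℝ) ≠ 0 := by positivity
    have h2 : ∑ a ∈ cone p.1 p.2 l, wt c a ≤ (M (#p.2) (l - bt p) : ℝ) * (l * C) := by
      calc _ ≤ ∑ a ∈ cone p.1 p.2 l, (l * C) := by
            refine sum_le_sum (fun a ha => ?_)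
            have := wt_le hC a
            rwa [(mem_cone.1 ha).1] at this
        _ = (#(cone p.1 p.2 l) : ℝ) * (l * C) := by simp
        _ ≤ _ := by
            refine mul_le_mul_of_nonneg_right ?_ (by positivity)
            exact_mod_cast card_cone_le hp0
    calc _ ≤ ((n+1).factorial:ℝ) * ((M (#p.2) (l - bt p) : ℝ) * (l * C)) / (l:ℝ)^(n+1) := by gcongr
      _ = _ := by field_simp; ring

end HW

open Filter
namespace HW
open Finset

theorem sum_biUnion_le_sum_of_nonneg {ι α : Type*} [DecidableEq α] (G : Finset ι) (A : ι → Finset α)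
    (w : α → ℝ) (hw : ∀ a, 0 ≤ w a) : ∑ a ∈ G.biUnion A, w a ≤ ∑ g ∈ G, ∑ a ∈ A g, w a := by
  classical
  induction G using Finset.induction_on with
  | empty => simp
  | insert g G hg ih =>
    rw [Finset.biUnion_insert, Finset.sum_insert hg]
    have := Finset.sum_union_inter (s₁ := A g) (s₂ := G.biUnion A) (f := w)
    have h2 : 0 ≤ ∑ a ∈ A g ∩ G.biUnion A, w a := Finset.sum_nonneg (fun a _ => hw a)
    linarith

theorem top_finite {k n Δ : ℕ} {D : Set (Fin k →₀ ℕ)}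
    (hH : Tendsto (fun l : ℕ => (Nat.factorial n : ℝ) * (#(Dm D l) : ℝ) / (l : ℝ) ^ n)
      atTop (nhds (Δ : ℝ))) :
    ∃ F : Finset ((Fin k →₀ ℕ) × Finset (Fin k)), (∀ p, p ∈ F ↔ Top D n p) ∧ #F ≤ Δ := by
  have hfin : {p | Top D n p}.Finite := by
    by_contra h
    obtain ⟨t, ht, hc⟩ := Set.Infinite.exists_subset_card_eq h (Δ + 1)
    have := card_top_le hH t (fun p hp => ht hp)
    omega
  refine ⟨hfin.toFinset, fun p => by simp, card_top_le hH _ (fun p hp => by simpa using hp)⟩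

theorem inD_card_le {k n Δ : ℕ} {D : Set (Fin k →₀ ℕ)}
    (hH : Tendsto (fun l : ℕ => (Nat.factorial n : ℝ) * (#(Dm D l) : ℝ) / (l : ℝ) ^ n)
      atTop (nhds (Δ : ℝ))) {g : (Fin k →₀ ℕ) × Finset (Fin k)} (hg : InD D g) : #g.2 ≤ n + 1 := by
  classical
  by_contra hcon
  push Not at hcon
  obtain ⟨σ, hσ, hcard⟩ := exists_subset_card_eq (s := g.2) (n := n + 1) (by omega)
  obtain ⟨i, hi, hi'⟩ : ∃ i ∈ g.2, i ∉ σ := by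
    by_contra h
    push Not at h
    have := card_le_card h
    omega
  have := card_top_le hH ((range (Δ+1)).image (fun t => (g.1 + Finsupp.single i t, σ))) ?_
  · rw [card_image_of_injective] at this
    · simp at this
    · intro t t' h
      have := congrArg (fun p : (Fin k →₀ ℕ) × Finset (Fin k) => p.1 i) h
      simpa using this
  · intro p hp
    obtain ⟨t, -, rfl⟩ := mem_image.1 hp
    refine ⟨hcard, ?_, ?_⟩
    · intro j hj
      have hji : j ≠ i := fun h => hi' (h ▸ hj)
      simp [hg.1 j (hσ hj), hji]
    · intro a ha
      refine hg.2 a (fun j hj => ?_)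
      have hji : j ≠ i := fun h => hj (h ▸ hi)
      rw [ha j (fun h => hj (hσ h))]
      simp [hji]

theorem e_le {k n Δ : ℕ} {D : Set (Fin k →₀ ℕ)} (hD : IsLowerSet D)
    (hH : Tendsto (fun l : ℕ => (Nat.factorial n : ℝ) * (#(Dm D l) : ℝ) / (l : ℝ) ^ n)
      atTop (nhds (Δ : ℝ)))
    {c : Fin k → ℝ} (hc : ∀ i, 0 ≤ c i) {C : ℝ} (hC : ∀ i, c i ≤ C) (hC0 : 0 ≤ C) {e : ℝ}
    (he : Tendsto (fun l : ℕ => ((n+1).factorial : ℝ) * (∑ a ∈ Dm D l, wt c a) / (l : ℝ) ^ (n+1))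
      atTop (nhds e))
    {F : Finset ((Fin k →₀ ℕ) × Finset (Fin k))} (hF : ∀ p, p ∈ F ↔ Top D n p) :
    e ≤ ∑ p ∈ F, ∑ i ∈ p.2, c i := by
  classical
  obtain ⟨G, hG, hcov⟩ := decomposition hD
  have hlim : Tendsto (fun l : ℕ => ∑ g ∈ G,
      ((n+1).factorial:ℝ) * (∑ a ∈ cone g.1 g.2 l, wt c a) / (l:ℝ)^(n+1)) atTop
      (nhds (∑ g ∈ G, if #g.2 = n + 1 then ∑ i ∈ g.2, c i else 0)) := by
    refine tendsto_finsetSum _ (fun g hg => ?_)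
    split_ifs with h
    · exact cone_wt_asymp ⟨h, hG g hg⟩ c
    · have := inD_card_le hH (hG g hg)
      exact cone_wt_small (by omega) (hG g hg).1 c hc C hC hC0
  have h1 := le_of_tendsto_of_tendsto' he hlim (fun l => ?_)
  · refine h1.trans ?_
    rw [← sum_filter]
    refine sum_le_sum_of_subset_of_nonneg ?_ (fun p _ _ => sum_nonneg (fun i _ => hc i))
    intro g hg
    rw [mem_filter] at hg
    exact (hF g).2 ⟨hg.2, hG g hg.1⟩
  · rw [← sum_div, ← mul_sum]
    gcongr
    calc ∑ a ∈ Dm D l, wt c a ≤ ∑ a ∈ G.biUnion (fun g => cone g.1 g.2 l), wt c a := by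
          refine sum_le_sum_of_subset_of_nonneg ?_ (fun a _ _ => wt_nonneg hc a)
          intro a ha
          obtain ⟨g, hg, h⟩ := hcov l a ha
          exact mem_biUnion.2 ⟨g, hg, h⟩
      _ ≤ _ := sum_biUnion_le_sum_of_nonneg G (fun g => cone g.1 g.2 l) (wt c) (wt_nonneg hc)

theorem sum_bt {k n : ℕ} {D : Set (Fin k →₀ ℕ)} (hD : IsLowerSet D)
    {F : Finset ((Fin k →₀ ℕ) × Finset (Fin k))} (hF : ∀ p, p ∈ F ↔ Top D n p) :
    2 * ∑ p ∈ F, bt p ≤ #F.offDiag := by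
  classical
  have h1 : ∀ p ∈ F, bt p ≤ #(F.filter (fun q => bt q < bt p)) := by
    intro p hp
    have : range (bt p) ⊆ (F.filter (fun q => bt q < bt p)).image bt := by
      intro t ht
      rw [mem_range] at ht
      obtain ⟨q, hq, -, hqt⟩ := top_shrink hD ((hF p).1 hp) t ht.le
      exact mem_image.2 ⟨q, mem_filter.2 ⟨(hF q).2 hq, by omega⟩, hqt⟩
    have := (card_le_card this).trans card_image_le
    simpa using this
  set X := (F ×ˢ F).filter (fun pq => bt pq.2 < bt pq.1) with hX
  set Y := (F ×ˢ F).filter (fun pq => bt pq.1 < bt pq.2) with hY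
  have hXc : #X = ∑ p ∈ F, #(F.filter (fun q => bt q < bt p)) := by
    rw [hX, card_filter, sum_product]
    refine sum_congr rfl (fun p _ => ?_)
    rw [card_filter]
  have hYc : #Y = ∑ p ∈ F, #(F.filter (fun q => bt q < bt p)) := by
    rw [hY, card_filter, sum_product_right]
    refine sum_congr rfl (fun p _ => ?_)
    rw [card_filter]
  have hdis : Disjoint X Y := by
    rw [disjoint_left]
    intro pq h1 h2
    have := (mem_filter.1 h1).2
    have := (mem_filter.1 h2).2
    omega
  have hsub : X ∪ Y ⊆ F.offDiag := by
    intro pq h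
    rw [mem_union, mem_filter, mem_filter, mem_product] at h
    rw [mem_offDiag]
    rcases h with h | h
    · refine ⟨h.1.1, h.1.2, fun e => ?_⟩
      rw [e] at h; omega
    · refine ⟨h.1.1, h.1.2, fun e => ?_⟩
      rw [e] at h; omega
  have := card_le_card hsub
  rw [card_union_of_disjoint hdis, hXc, hYc] at this
  have := sum_le_sum h1
  omega

theorem bt_chain {k n : ℕ} {D : Set (Fin k →₀ ℕ)} (hD : IsLowerSet D)
    {F : Finset ((Fin k →₀ ℕ) × Finset (Fin k))} (hF : ∀ p, p ∈ F ↔ Top D n p)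
    {p : (Fin k →₀ ℕ) × Finset (Fin k)} (hp : p ∈ F) :
    bt p + 1 ≤ #(F.filter (fun q => q.2 = p.2)) := by
  classical
  have : range (bt p + 1) ⊆ (F.filter (fun q => q.2 = p.2)).image bt := by
    intro t ht
    rw [mem_range] at ht
    obtain ⟨q, hq, hqp, hqt⟩ := top_shrink hD ((hF p).1 hp) t (by omega)
    exact mem_image.2 ⟨q, mem_filter.2 ⟨(hF q).2 hq, hqp⟩, hqt⟩
  have := (card_le_card this).trans card_image_le
  simpa using this

theorem bt_pair {k n : ℕ} {D : Set (Fin k →₀ ℕ)} (hD : IsLowerSet D)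
    {F : Finset ((Fin k →₀ ℕ) × Finset (Fin k))} (hF : ∀ p, p ∈ F ↔ Top D n p)
    {p q : (Fin k →₀ ℕ) × Finset (Fin k)} (hp : p ∈ F) (hq : q ∈ F) (h : p.2 ≠ q.2) :
    bt p + bt q + 2 ≤ #F := by
  classical
  have h1 := bt_chain hD hF hp
  have h2 := bt_chain hD hF hq
  have hdis : Disjoint (F.filter (fun r => r.2 = p.2)) (F.filter (fun r => r.2 = q.2)) := by
    rw [disjoint_left]
    intro r hr hr'
    exact h ((mem_filter.1 hr).2.symm.trans (mem_filter.1 hr').2)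
  have h3 := card_le_card (union_subset (filter_subset (fun r => r.2 = p.2) F)
    (filter_subset (fun r => r.2 = q.2) F))
  rw [card_union_of_disjoint hdis] at h3
  omega

theorem comb {k n Δ : ℕ} {D : Set (Fin k →₀ ℕ)} (hD : IsLowerSet D)
    (hH : Tendsto (fun l : ℕ => (Nat.factorial n : ℝ) * (#(Dm D l) : ℝ) / (l : ℝ) ^ n)
      atTop (nhds (Δ : ℝ)))
    {c : Fin k → ℝ} (hc : ∀ i, 0 ≤ c i) {C : ℝ} (hC : ∀ i, c i ≤ C) (hC0 : 0 ≤ C) {e : ℝ}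
    (he : Tendsto (fun l : ℕ => ((n+1).factorial : ℝ) * (∑ a ∈ Dm D l, wt c a) / (l : ℝ) ^ (n+1))
      atTop (nhds e)) {m : ℕ} (hm : Δ < m) :
    e ≤ (n+1) * Δ * C ∧
    2 * (m * M (n+1) m * (e / (n+1))) - (2*n+1) * M (n+1) m * C * (Δ * Δ)
      ≤ 2 * ∑ a ∈ Dm D m, wt c a := by
  classical
  obtain ⟨F, hF, hFΔ⟩ := top_finite hH
  have hFΔ' : (#F : ℝ) ≤ Δ := by exact_mod_cast hFΔ
  have he' := e_le hD hH hc hC hC0 he hF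
  have hσC : ∀ p ∈ F, ∑ i ∈ p.2, c i ≤ (n+1) * C := by
    intro p hp
    calc _ ≤ ∑ i ∈ p.2, C := sum_le_sum (fun i _ => hC i)
      _ = _ := by rw [sum_const, ((hF p).1 hp).1]; simp
  refine ⟨?_, ?_⟩
  · calc e ≤ _ := he'
      _ ≤ ∑ p ∈ F, ((n+1) * C) := sum_le_sum hσC
      _ = #F * ((n+1) * C) := by simp
      _ ≤ Δ * ((n+1) * C) := by gcongr
      _ = _ := by ring
  set P : ℝ := (M (n+1) m : ℝ) with hP
  have hP0 : 0 ≤ P := by positivity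
  have hm0 : (0:ℝ) < m := by
    have : 0 < m := by omega
    exact_mod_cast this
  have hcone : ∀ p ∈ F, m * P * ((∑ i ∈ p.2, c i) / (n+1)) - bt p * ((n+1) * P * C)
      ≤ ∑ a ∈ cone p.1 p.2 m, wt c a := by
    intro p hp
    have hT := (hF p).1 hp
    have hβ : bt p < m := by
      have := bt_chain hD hF hp
      have := card_le_card (filter_subset (fun q => q.2 = p.2) F)
      omega
    have hβ' : (bt p : ℝ) ≤ m := by exact_mod_cast hβ.le
    have hw := cone_weight (m := m) hT.2.1 c
    rw [card_cone hT.2.1 hβ.le, hT.1] at hw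
    have hsh := M_shift n m (bt p) hβ
    have hsh' : (m:ℝ) * P ≤ m * (M (n+1) (m - bt p) : ℝ) + bt p * n * P := by
      rw [hP]; exact_mod_cast hsh
    change ((n + 1 : ℕ) : ℝ) * _ = (M (n+1) (m - bt p) : ℝ) * (_ + ((m:ℝ) - (bt p : ℝ)) * _) at hw
    set Q : ℝ := (M (n+1) (m - bt p) : ℝ)
    set s := ∑ i ∈ p.2, c i with hs
    have hs0 : 0 ≤ s := sum_nonneg (fun i _ => hc i)
    have hsC : s ≤ (n+1) * C := hσC p hp
    have hwb := wt_nonneg hc p.1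
    have hQ0 : 0 ≤ Q := by positivity
    -- (m - β) Q ≥ (m - β (n+1)) P
    have h1 : ((m:ℝ) - bt p * (n+1)) * P ≤ (m - bt p) * Q := by
      have h2 : (m:ℝ) * (((m:ℝ) - bt p * (n+1)) * P) ≤ m * ((m - bt p) * Q) := by
        have h3 := mul_le_mul_of_nonneg_left hsh' (sub_nonneg.2 hβ')
        have h4 : 0 ≤ (bt p : ℝ) * bt p * n * P := by positivity
        nlinarith
      exact le_of_mul_le_mul_left h2 hm0
    have h2 : ((m:ℝ) - bt p * (n+1)) * P * s ≤ (n+1) * ∑ a ∈ cone p.1 p.2 m, wt c a := by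
      push_cast at hw
      rw [hw]
      have := mul_le_mul_of_nonneg_right h1 hs0
      have h5 : 0 ≤ Q * ((n+1) * wt c p.1) := by positivity
      linarith
    have hn : (0:ℝ) < n + 1 := by positivity
    refine le_of_mul_le_mul_left ?_ hn
    refine le_trans ?_ h2
    have h6 : (bt p : ℝ) * (n+1) * P * s ≤ bt p * (n+1) * P * ((n+1) * C) := by gcongr
    have h7 : ((n:ℝ)+1) * (m * P * (s / (n+1)) - bt p * ((n+1) * P * C))
      = m * P * s - bt p * (n+1) * P * ((n+1) * C) := by field_simp
    rw [h7]
    linarith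
  have hbon := bonferroni F (fun p => cone p.1 p.2 m) (Dm D m)
    (fun p hp => cone_subset ((hF p).1 hp).2 m) (wt c) (fun a _ => wt_nonneg hc a)
  have hint : ∀ pq ∈ F.offDiag, ∑ a ∈ cone pq.1.1 pq.1.2 m ∩ cone pq.2.1 pq.2.2 m, wt c a
      ≤ n * P * C := by
    intro pq hpq
    rw [mem_offDiag] at hpq
    obtain ⟨x, hx0, hx1, hx⟩ := inter_bound ((hF _).1 hpq.1) ((hF _).1 hpq.2.1) hpq.2.2
    have hxm : x < m := by
      by_cases hσ : pq.1.2 = pq.2.2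
      · rw [hx0 hσ]; omega
      · have := bt_pair hD hF hpq.1 hpq.2.1 hσ
        omega
    have hle : #(cone pq.1.1 pq.1.2 m ∩ cone pq.2.1 pq.2.2 m) ≤ M n m :=
      (hx m).trans (M_mono' n (by omega) (by omega))
    calc _ ≤ ∑ a ∈ cone pq.1.1 pq.1.2 m ∩ cone pq.2.1 pq.2.2 m, (m * C) := by
            refine sum_le_sum (fun a ha => ?_)
            have := wt_le hC a
            rwa [(mem_cone.1 (mem_inter.1 ha).1).1] at this
      _ = #(cone pq.1.1 pq.1.2 m ∩ cone pq.2.1 pq.2.2 m) * (m * C) := by simp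
      _ ≤ (M n m : ℝ) * (m * C) := by gcongr
      _ = ((m * M n m : ℕ) : ℝ) * C := by push_cast; ring
      _ ≤ ((n * M (n+1) m : ℕ) : ℝ) * C := by
            have := M_mul_le n m
            gcongr
      _ = _ := by push_cast; ring
  have hoff := sum_le_sum hint
  rw [sum_const, nsmul_eq_mul] at hoff
  have hcs := sum_le_sum hcone
  rw [sum_sub_distrib, ← mul_sum, ← sum_mul, ← sum_div] at hcs
  have hbt : 2 * ∑ p ∈ F, (bt p : ℝ) ≤ #F.offDiag := by exact_mod_cast sum_bt hD hF
  have hod : (#F.offDiag : ℝ) ≤ Δ * Δ := by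
    have : #F.offDiag ≤ #F * #F := by rw [offDiag_card]; omega
    have := this.trans (Nat.mul_le_mul hFΔ hFΔ)
    exact_mod_cast this
  have h1 : m * P * (e / (n+1)) ≤ m * P * ((∑ p ∈ F, ∑ i ∈ p.2, c i) / (n+1)) := by gcongr
  have h2 : (2 * ∑ p ∈ F, (bt p : ℝ)) * ((n+1) * P * C) ≤ (#F.offDiag : ℝ) * ((n+1) * P * C) := by
    gcongr
  have h3 : (#F.offDiag : ℝ) * ((2*n+1) * P * C) ≤ (Δ * Δ) * ((2*n+1) * P * C) := by gcongr
  linarith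

end HW

open Filter
namespace HW
open Finset MvPolynomial

/-- residue class of a monomial -/
noncomputable def xm {k : ℕ} (I : Ideal (MvPolynomial (Fin k) ℂ)) (a : Fin k →₀ ℕ) :
    MvPolynomial (Fin k) ℂ ⧸ Submodule.restrictScalars ℂ I :=
  (Submodule.restrictScalars ℂ I).mkQ (monomial a (1 : ℂ))

/-- total order on exponents -/
noncomputable def key {k : ℕ} (c : Fin k → ℝ) (a : Fin k →₀ ℕ) : ℝ ×ₗ Lex (Fin k →₀ ℕ) :=
  toLex (wt c a, toLex a)

theorem wt_add {k : ℕ} (c : Fin k → ℝ) (a b : Fin k →₀ ℕ) : wt c (a + b) = wt c a + wt c b := by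
  simp [wt, add_mul, sum_add_distrib]

theorem key_lt {k : ℕ} {c : Fin k → ℝ} {a b : Fin k →₀ ℕ} :
    key c a < key c b ↔ wt c a < wt c b ∨ (wt c a = wt c b ∧ toLex a < toLex b) := by
  simp [key, Prod.Lex.toLex_lt_toLex]

theorem key_inj {k : ℕ} {c : Fin k → ℝ} {a b : Fin k →₀ ℕ} (h : key c a = key c b) : a = b := by
  simp [key] at h
  exact h.2

theorem key_add {k : ℕ} {c : Fin k → ℝ} {a b : Fin k →₀ ℕ} (d : Fin k →₀ ℕ)
    (h : key c a < key c b) : key c (a + d) < key c (b + d) := by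
  rw [key_lt] at h ⊢
  rw [wt_add, wt_add]
  rcases h with h | ⟨h1, h2⟩
  · left; linarith
  · right
    refine ⟨by rw [h1], ?_⟩
    exact add_lt_add_left h2 (toLex d)

theorem wt_le_of_key {k : ℕ} {c : Fin k → ℝ} {a b : Fin k →₀ ℕ} (h : key c a ≤ key c b) :
    wt c a ≤ wt c b := by
  rcases h.lt_or_eq with h | h
  · rw [key_lt] at h
    rcases h with h | h
    · exact h.le
    · exact h.1.le
  · rw [key_inj h]

/-- greedy exponents -/
def gD {k : ℕ} (I : Ideal (MvPolynomial (Fin k) ℂ)) (c : Fin k → ℝ) : Set (Fin k →₀ ℕ) :=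
  {a | xm I a ∉ Submodule.span ℂ (xm I '' {b | key c a < key c b ∧ ∑ i, b i = ∑ i, a i})}

theorem gD_lower {k : ℕ} (I : Ideal (MvPolynomial (Fin k) ℂ)) (c : Fin k → ℝ) :
    IsLowerSet (gD I c) := by
  intro a b hba ha hb
  apply ha
  obtain ⟨d, rfl⟩ := exists_add_of_le hba
  let f : (MvPolynomial (Fin k) ℂ ⧸ Submodule.restrictScalars ℂ I) →ₗ[ℂ]
      (MvPolynomial (Fin k) ℂ ⧸ Submodule.restrictScalars ℂ I) :=
    Submodule.mapQ _ _ (LinearMap.mulLeft ℂ (monomial d (1 : ℂ))) (by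
      intro p hp
      exact I.mul_mem_left _ hp)
  have hf : ∀ a, f (xm I a) = xm I (a + d) := by
    intro a
    have h1 : f (xm I a) = (Submodule.restrictScalars ℂ I).mkQ
      ((monomial d (1 : ℂ)) * (monomial a (1 : ℂ))) := rfl
    rw [h1, monomial_mul, one_mul, add_comm]
    rfl
  have := Submodule.mem_map_of_mem (f := f) hb
  rw [hf] at this
  refine Submodule.map_span_le f _ _ |>.2 ?_ this
  rintro _ ⟨e, ⟨he1, he2⟩, rfl⟩
  rw [hf]
  apply Submodule.subset_span
  refine ⟨e + d, ⟨key_add d he1, ?_⟩, rfl⟩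
  simp [sum_add_distrib, he2]

theorem gD_span {k : ℕ} (I : Ideal (MvPolynomial (Fin k) ℂ)) (c : Fin k → ℝ) (m : ℕ)
    (a : Fin k →₀ ℕ) (ha : a ∈ E k m) :
    xm I a ∈ Submodule.span ℂ (xm I '' {b | b ∈ Dm (gD I c) m ∧ key c a ≤ key c b}) := by
  classical
  induction hn : #((E k m).filter (fun b => key c a < key c b)) using Nat.strong_induction_on
    generalizing a with
  | _ n ih =>
  by_cases h : a ∈ gD I c
  · exact Submodule.subset_span ⟨a, ⟨mem_Dm.2 ⟨mem_E.1 ha, h⟩, le_rfl⟩, rfl⟩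
  · have h' : xm I a ∈ Submodule.span ℂ
      (xm I '' {b | key c a < key c b ∧ ∑ i, b i = ∑ i, a i}) := not_not.1 h
    refine Submodule.span_le.2 ?_ h'
    rintro _ ⟨b, ⟨hb1, hb2⟩, rfl⟩
    have hbE : b ∈ E k m := mem_E.2 (hb2.trans (mem_E.1 ha))
    have := ih _ ?_ b hbE rfl
    · refine Submodule.span_mono (Set.image_mono ?_) this
      rintro e ⟨he1, he2⟩
      exact ⟨he1, hb1.le.trans he2⟩
    · rw [← hn]
      apply card_lt_card
      refine ⟨fun e he => ?_, fun hs => ?_⟩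
      · rw [mem_filter] at he ⊢
        exact ⟨he.1, hb1.trans he.2⟩
      · have := hs (mem_filter.2 ⟨hbE, hb1⟩)
        rw [mem_filter] at this
        exact lt_irrefl _ this.2

theorem gD_indep {k : ℕ} (I : Ideal (MvPolynomial (Fin k) ℂ)) (c : Fin k → ℝ) (m : ℕ) :
    LinearIndependent (ι := ((Dm (gD I c) m : Finset _) : Set (Fin k →₀ ℕ))) ℂ
      (fun a => xm I a.1) := by
  classical
  rw [linearIndependent_iff']
  intro s g hg
  by_contra hne
  push Not at hne
  obtain ⟨i0, hi0, hgi0⟩ := hne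
  obtain ⟨i, hi, hmin⟩ := exists_min_image (s.filter (fun i => g i ≠ 0)) (fun i => key c i.1)
    ⟨i0, mem_filter.2 ⟨hi0, hgi0⟩⟩
  rw [mem_filter] at hi
  have hiD : i.1 ∈ Dm (gD I c) m := i.2
  rw [mem_Dm] at hiD
  apply hiD.2
  rw [← add_sum_erase s _ hi.1] at hg
  have : xm I i.1 = -(g i)⁻¹ • ∑ x ∈ s.erase i, g x • xm I x.1 := by
    have h2 : ∑ x ∈ s.erase i, g x • xm I x.1 = -(g i • xm I i.1) := by
      rw [eq_neg_iff_add_eq_zero, add_comm]; exact hg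
    rw [h2, smul_neg, neg_smul, neg_neg, smul_smul, inv_mul_cancel₀ hi.2, one_smul]
  rw [this]
  refine Submodule.smul_mem _ _ (Submodule.sum_mem _ (fun j hj => ?_))
  rw [mem_erase] at hj
  by_cases hgj : g j = 0
  · simp [hgj]
  · refine Submodule.smul_mem _ _ (Submodule.subset_span ⟨j.1, ⟨?_, ?_⟩, rfl⟩)
    · refine lt_of_le_of_ne (hmin j (mem_filter.2 ⟨hj.2, hgj⟩)) (fun h => hj.1 ?_)
      exact (Subtype.ext (key_inj h)).symm
    · have hjD : j.1 ∈ Dm (gD I c) m := j.2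
      rw [mem_Dm] at hjD
      rw [hjD.1, hiD.1]

theorem gradedPiece_eq {k : ℕ} (I : Ideal (MvPolynomial (Fin k) ℂ)) (m : ℕ) :
    gradedPiece I m = Submodule.span ℂ (xm I '' {a | a ∈ E k m}) := by
  have : homogeneousSubmodule (Fin k) ℂ m =
      Submodule.span ℂ ((fun a => monomial a (1 : ℂ)) '' {a | a ∈ E k m}) := by
    rw [homogeneousSubmodule_eq_finsupp_supported, AddMonoidAlgebra.supported_eq_span_single]
    congr 1
    ext x
    simp [mem_E, Finsupp.degree_eq_sum, monomial]
  rw [gradedPiece, this, Submodule.map_span, Set.image_image]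
  rfl

theorem gD_basis {k : ℕ} (I : Ideal (MvPolynomial (Fin k) ℂ)) (c : Fin k → ℝ) (m : ℕ) :
    IsMonomialBasis I m (Dm (gD I c) m) := by
  refine ⟨fun a ha => (mem_Dm.1 ha).1, gD_indep I c m, ?_⟩
  rw [gradedPiece_eq]
  apply le_antisymm
  · apply Submodule.span_mono
    rintro _ ⟨a, ha, rfl⟩
    exact ⟨a, mem_E.2 (mem_Dm.1 ha).1, rfl⟩
  · rw [Submodule.span_le]
    rintro _ ⟨a, ha, rfl⟩
    refine Submodule.span_mono ?_ (gD_span I c m a ha)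
    rintro _ ⟨b, hb, rfl⟩
    exact ⟨b, hb.1, rfl⟩

theorem hilbertFn_eq {k : ℕ} (I : Ideal (MvPolynomial (Fin k) ℂ)) (c : Fin k → ℝ) (m : ℕ) :
    hilbertFn I m = #(Dm (gD I c) m) := by
  have h := gD_basis I c m
  rw [hilbertFn, ← h.2.2]
  have := finrank_span_eq_card h.2.1
  rw [Set.image_eq_range, this]
  simp

theorem hilbertWeight_eq {k : ℕ} (I : Ideal (MvPolynomial (Fin k) ℂ)) (c : Fin k → ℝ)
    (hc : ∀ i, 0 ≤ c i) (m : ℕ) :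
    hilbertWeight I m c = ∑ a ∈ Dm (gD I c) m, wt c a := by
  classical
  refine IsGreatest.csSup_eq ⟨⟨_, gD_basis I c m, rfl⟩, ?_⟩
  rintro _ ⟨A, ⟨hA1, hA2, hA3⟩, rfl⟩
  refine layer A (Dm (gD I c) m) (wt c) (wt_nonneg hc) (fun t => ?_)
  have h1 : LinearIndepOn ℂ (xm I) (A : Set (Fin k →₀ ℕ)) := hA2
  have h2 : LinearIndepOn ℂ (xm I) (A.filter (fun a => t ≤ wt c a) : Set (Fin k →₀ ℕ)) :=
    h1.mono (by exact_mod_cast filter_subset _ A)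
  have h3 := finrank_span_eq_card (b := fun a : (A.filter (fun a => t ≤ wt c a) : Finset _) => xm I a.1) h2
  rw [Fintype.card_coe] at h3
  rw [← h3]
  set B := (Dm (gD I c) m).filter (fun a => t ≤ wt c a)
  calc _ ≤ Module.finrank ℂ (Submodule.span ℂ ((B.image (xm I) : Finset _) :
        Set (MvPolynomial (Fin k) ℂ ⧸ Submodule.restrictScalars ℂ I))) := by
        apply Submodule.finrank_mono
        rw [Submodule.span_le]
        rintro _ ⟨a, rfl⟩
        have ha := mem_filter.1 a.2
        refine Submodule.span_mono ?_ (gD_span I c m a.1 (mem_E.2 (hA1 _ ha.1)))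
        rintro _ ⟨b, hb, rfl⟩
        simp only [coe_image]
        exact ⟨b, mem_coe.2 (mem_filter.2 ⟨hb.1, ha.2.trans (wt_le_of_key hb.2)⟩), rfl⟩
    _ ≤ #(B.image (xm I)) := finrank_span_finset_le_card _
    _ ≤ #B := card_image_le

end HW

open Filter
namespace HW
open Finset MvPolynomial

/-- eigenvectors for distinct eigenvalues -/
theorem eig_indep {V : Type*} [AddCommGroup V] [Module ℂ V] (T : V →ₗ[ℂ] V) (s : Finset ℕ)
    (r : ℕ → V) (hr : ∀ j ∈ s, T (r j) = (2 : ℂ) ^ j • r j) (h0 : ∑ j ∈ s, r j = 0) :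
    ∀ j ∈ s, r j = 0 := by
  classical
  induction s using Finset.induction_on generalizing r with
  | empty => simp
  | insert i s hi ih =>
    have h1 : ∑ j ∈ s, ((2 : ℂ) ^ j - 2 ^ i) • r j = 0 := by
      have h2 := congrArg T h0
      rw [map_sum, map_zero, sum_congr rfl hr] at h2
      have h3 := congrArg (fun v => (2 : ℂ) ^ i • v) h0
      simp only [smul_sum, smul_zero] at h3
      rw [sum_insert hi] at h2 h3
      simp only [sub_smul, sum_sub_distrib]
      rw [eq_neg_of_add_eq_zero_right h2, eq_neg_of_add_eq_zero_right h3, sub_self]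
    have h2 := ih (fun j => ((2 : ℂ) ^ j - 2 ^ i) • r j) (fun j hj => by
      rw [map_smul, hr j (mem_insert_of_mem hj), smul_comm]) h1
    have h3 : ∀ j ∈ s, r j = 0 := by
      intro j hj
      rcases smul_eq_zero.1 (h2 j hj) with h | h
      · exfalso
        rw [sub_eq_zero] at h
        have h4 : (2 : ℕ) ^ j = 2 ^ i := by exact_mod_cast h
        have := Nat.pow_right_injective le_rfl h4
        exact hi (this ▸ hj)
      · exact h
    rw [sum_insert hi, sum_eq_zero h3, add_zero] at h0
    intro j hj
    rcases mem_insert.1 hj with rfl | hj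
    · exact h0
    · exact h3 j hj

theorem aeval_eig {ι R : Type*} [CommRing R] [Algebra ℂ R] (σ : R →ₐ[ℂ] R) (v : ι → R)
    (hv : ∀ i, σ (v i) = (2 : ℂ) • v i) (d : ℕ) (p : MvPolynomial ι ℂ) (hp : p.IsHomogeneous d) :
    σ (aeval v p) = (2 : ℂ) ^ d • aeval v p := by
  have h1 : σ (aeval v p) = aeval (fun i => (2 : ℂ) • v i) p := by
    rw [← AlgHom.comp_apply, comp_aeval]
    simp only [hv]
  rw [h1, p.as_sum, map_sum, map_sum, smul_sum]
  refine sum_congr rfl (fun a ha => ?_)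
  rw [aeval_monomial, aeval_monomial]
  have hd := hp (mem_support_iff.1 ha)
  have : (a.prod fun i e => ((2 : ℂ) • v i) ^ e) = (2 : ℂ) ^ d • a.prod fun i e => v i ^ e := by
    simp only [Finsupp.prod, smul_pow, Finset.prod_smul]
    rw [prod_pow_eq_pow_sum]
    congr 2
    rw [← hd, Finsupp.weight_apply]
    simp [Finsupp.sum]
  rw [this, mul_smul_comm]

theorem aeval_comp_zero {ι R : Type*} [CommRing R] [Algebra ℂ R] (σ : R →ₐ[ℂ] R) (v : ι → R)
    (hv : ∀ i, σ (v i) = (2 : ℂ) • v i) (p : MvPolynomial ι ℂ) (hp : aeval v p = 0) (d : ℕ) :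
    aeval v (homogeneousComponent d p) = 0 := by
  by_cases hd : d ∈ range (p.totalDegree + 1)
  · refine eig_indep σ.toLinearMap (range (p.totalDegree + 1))
      (fun j => aeval v (homogeneousComponent j p)) (fun j _ => ?_) ?_ d hd
    · exact aeval_eig σ v hv j _ (homogeneousComponent_isHomogeneous j p)
    · rw [← map_sum, sum_homogeneousComponent, hp]
  · rw [homogeneousComponent_eq_zero, map_zero]
    simp at hd
    omega

/-- an eigenvector in the image comes from a homogeneous polynomial -/
theorem eig_eq {ι R : Type*} [CommRing R] [Algebra ℂ R] (σ : R →ₐ[ℂ] R) (v : ι → R)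
    (hv : ∀ i, σ (v i) = (2 : ℂ) • v i) (p : MvPolynomial ι ℂ) (d : ℕ)
    (hp : σ (aeval v p) = (2 : ℂ) ^ d • aeval v p) :
    aeval v p = aeval v (homogeneousComponent d p) := by
  classical
  let r : ℕ → R := fun j => aeval v (homogeneousComponent j p) - if j = d then aeval v p else 0
  have hr : ∀ j, σ (r j) = (2 : ℂ) ^ j • r j := by
    intro j
    simp only [r]
    rw [map_sub, smul_sub, aeval_eig σ v hv j _ (homogeneousComponent_isHomogeneous j p)]
    split_ifs with h
    · rw [h, hp]
    · simp
  let s := insert d (range (p.totalDegree + 1))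
  have h0 : ∑ j ∈ s, r j = 0 := by
    simp only [r]
    rw [sum_sub_distrib, ← map_sum]
    have : ∑ j ∈ s, homogeneousComponent j p = p := by
      conv_rhs => rw [← sum_homogeneousComponent p]
      symm
      refine sum_subset (subset_insert _ _) (fun j _ hj => ?_)
      apply homogeneousComponent_eq_zero
      simp at hj
      omega
    rw [this]
    simp [s]
  have := eig_indep σ.toLinearMap s r (fun j _ => hr j) h0 d (mem_insert_self _ _)
  simp only [r, if_true] at this
  exact (sub_eq_zero.1 this).symm

theorem int_of_rel {ι C R : Type*} [Fintype ι] [CommRing C] [CommRing R] [Algebra ℂ C] [Algebra ℂ R]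
    [Algebra C R] [IsScalarTower ℂ C R] (a : ι → C) (l : ι → ℂ) (d : ℕ) (p : MvPolynomial ι ℂ)
    (hp : p.IsHomogeneous d) (hl : eval l p ≠ 0) (t : R)
    (ht : aeval (fun i => algebraMap C R (a i) + l i • t) p = 0) : IsIntegral C t := by
  let g : ι → Polynomial C := fun i => Polynomial.C (a i) + Polynomial.C (algebraMap ℂ C (l i)) * Polynomial.X
  let q : Polynomial C := aeval g p
  have hg : ∀ i, (g i).natDegree ≤ 1 := fun i => by
    simp only [g]
    compute_degree
  have hgc : ∀ i, (g i).coeff 1 = algebraMap ℂ C (l i) := fun i => by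
    simp [g]
  have hmon : ∀ b : ι →₀ ℕ, (b.prod fun i e => g i ^ e).natDegree ≤ b.sum (fun _ e => e) ∧
      (b.prod fun i e => g i ^ e).coeff (b.sum (fun _ e => e)) =
        algebraMap ℂ C (b.prod fun i e => l i ^ e) := by
    intro b
    induction b using Finsupp.induction with
    | zero => simp
    | single_add i e b hi he ih =>
      rw [Finsupp.prod_add_index' (by simp) (by intros; rw [pow_add]),
        Finsupp.sum_add_index' (by simp) (by intros; rfl),
        Finsupp.prod_add_index' (by simp) (by intros; rw [pow_add]),
        Finsupp.prod_single_index (by simp), Finsupp.sum_single_index rfl,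
        Finsupp.prod_single_index (by simp)]
      have h1 : (g i ^ e).natDegree ≤ e := by
        refine Polynomial.natDegree_pow_le.trans ?_
        have := Nat.mul_le_mul_left e (hg i)
        omega
      refine ⟨Polynomial.natDegree_mul_le.trans (add_le_add h1 ih.1), ?_⟩
      rw [Polynomial.coeff_mul_add_eq_of_natDegree_le h1 ih.1, ih.2, map_mul]
      congr 1
      have := Polynomial.coeff_pow_of_natDegree_le (m := e) (hg i)
      rw [mul_one] at this
      rw [this, hgc, map_pow]
  have hsum : ∀ b ∈ p.support, b.sum (fun _ e => e) = d := by
    intro b hb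
    have := hp (mem_support_iff.1 hb)
    rw [← this, Finsupp.weight_apply]
    simp [Finsupp.sum]
  have hq : q = ∑ b ∈ p.support, Polynomial.C (algebraMap ℂ C (coeff b p)) *
      (b.prod fun i e => g i ^ e) := by
    simp only [q]
    conv_lhs => rw [p.as_sum, map_sum]
    refine sum_congr rfl (fun b _ => ?_)
    rw [aeval_monomial]
    rfl
  have hqd : q.natDegree ≤ d := by
    rw [hq]
    refine Polynomial.natDegree_sum_le_of_forall_le _ _ (fun b hb => ?_)
    refine Polynomial.natDegree_C_mul_le _ _ |>.trans ?_
    rw [← hsum b hb]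
    exact (hmon b).1
  have hqc : q.coeff d = algebraMap ℂ C (eval l p) := by
    rw [hq, Polynomial.finsetSum_coeff, eval_eq', map_sum]
    refine sum_congr rfl (fun b hb => ?_)
    rw [Polynomial.coeff_C_mul, ← hsum b hb, (hmon b).2, map_mul,
      Finsupp.prod_fintype _ _ (by simp)]
  have hqt : Polynomial.aeval t q = 0 := by
    rw [← ht]
    simp only [q]
    have : (Polynomial.aeval t : Polynomial C →ₐ[C] R).restrictScalars ℂ (aeval g p) =
      aeval (fun i => algebraMap C R (a i) + l i • t) p := by
      rw [← AlgHom.comp_apply, comp_aeval]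
      congr 2
      funext i
      simp [g, Algebra.smul_def, ← IsScalarTower.algebraMap_apply]
    exact this
  refine ⟨Polynomial.C (algebraMap ℂ C (eval l p)⁻¹) * q, ?_, ?_⟩
  · refine Polynomial.monic_of_natDegree_le_of_coeff_eq_one d
      ((Polynomial.natDegree_C_mul_le _ _).trans hqd) ?_
    rw [Polynomial.coeff_C_mul, hqc, ← map_mul, inv_mul_cancel₀ hl, map_one]
  · rw [← Polynomial.aeval_def, map_mul, hqt, mul_zero]

theorem noether {R : Type*} [CommRing R] [IsDomain R] [Algebra ℂ R] (σ : R →ₐ[ℂ] R) (r : ℕ) :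
    ∀ (v : Fin r → R) (_ : ∀ i, σ (v i) = (2 : ℂ) • v i),
    ∃ (s : ℕ) (w : Fin s → R), (∀ i, σ (w i) = (2 : ℂ) • w i) ∧ AlgebraicIndependent ℂ w ∧
      ∀ i, IsIntegral (Algebra.adjoin ℂ (Set.range w)) (v i) := by
  classical
  induction r with
  | zero =>
    intro v hv
    refine ⟨0, Fin.elim0, fun i => i.elim0, ?_, fun i => i.elim0⟩
    exact algebraicIndependent_empty_type
  | succ r ih =>
    intro v hv
    by_cases hind : AlgebraicIndependent ℂ v
    · refine ⟨r + 1, v, hv, hind, fun i => ?_⟩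
      exact isIntegral_algebraMap (x := (⟨v i, Algebra.subset_adjoin ⟨i, rfl⟩⟩ :
        Algebra.adjoin ℂ (Set.range v)))
    · rw [algebraicIndependent_iff] at hind
      push Not at hind
      obtain ⟨p, hp, hp0⟩ := hind
      obtain ⟨d, hd⟩ : ∃ d, homogeneousComponent d p ≠ 0 := by
        by_contra h
        push Not at h
        apply hp0
        rw [← sum_homogeneousComponent p]
        exact sum_eq_zero (fun j _ => h j)
      have hq := aeval_comp_zero σ v hv p hp d
      have hqh := homogeneousComponent_isHomogeneous d p
      set q := homogeneousComponent d p
      obtain ⟨l, hl⟩ : ∃ l, eval l (q * X (Fin.last r)) ≠ 0 := by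
        by_contra h
        push Not at h
        have : q * X (Fin.last r) = 0 := MvPolynomial.funext (fun x => by rw [h, map_zero])
        rcases mul_eq_zero.1 this with h | h
        · exact hd h
        · exact X_ne_zero _ h
      rw [map_mul, eval_X] at hl
      have hl1 := left_ne_zero_of_mul hl
      have hl2 := right_ne_zero_of_mul hl
      set t : R := (l (Fin.last r))⁻¹ • v (Fin.last r) with ht
      have hlt : l (Fin.last r) • t = v (Fin.last r) := by rw [ht, smul_inv_smul₀ hl2]
      have hσt : σ t = (2 : ℂ) • t := by rw [ht, map_smul, hv, smul_comm]
      obtain ⟨s, w, hw1, hw2, hw3⟩ := ih (fun i => v i.castSucc - l i.castSucc • t) (fun i => by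
        rw [map_sub, map_smul, hv, hσt, smul_sub, smul_comm])
      refine ⟨s, w, hw1, hw2, ?_⟩
      let A0 := Algebra.adjoin ℂ (Set.range w)
      let C0 := integralClosure A0 R
      let a : Fin (r + 1) → C0 := Fin.lastCases 0 (fun i => ⟨v i.castSucc - l i.castSucc • t, hw3 i⟩)
      have ha : ∀ i, algebraMap C0 R (a i) + l i • t = v i := by
        intro i
        refine Fin.lastCases ?_ (fun i => ?_) i
        · simp only [a, Fin.lastCases_last, map_zero, zero_add, hlt]
        · simp only [a, Fin.lastCases_castSucc]
          exact sub_add_cancel _ _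
      have h1 : IsIntegral C0 t := by
        refine int_of_rel a l d q hqh hl1 t ?_
        simp only [ha]
        exact hq
      have h2 : IsIntegral A0 t := isIntegral_trans t h1
      intro i
      rw [← ha i]
      refine IsIntegral.add (a i).2 ?_
      rw [← algebraMap_smul A0 (l i) t]
      exact h2.smul _

end HW

open Filter
namespace HW
open Finset MvPolynomial

theorem homog_span (s d : ℕ) : homogeneousSubmodule (Fin s) ℂ d =
      Submodule.span ℂ (Set.range (fun a : E s d => monomial (a : Fin s →₀ ℕ) (1 : ℂ))) := by
  rw [homogeneousSubmodule_eq_finsupp_supported, AddMonoidAlgebra.supported_eq_span_single]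
  congr 1
  ext x
  simp [mem_E, Finsupp.degree_eq_sum, monomial]

instance homog_finite (s d : ℕ) : Module.Finite ℂ (homogeneousSubmodule (Fin s) ℂ d) := by
  rw [homog_span]
  exact Module.Finite.span_of_finite _ (Set.finite_range _)

theorem homog_finrank (s d : ℕ) : Module.finrank ℂ (homogeneousSubmodule (Fin s) ℂ d) = M s d := by
  rw [homog_span, finrank_span_eq_card, Fintype.card_coe, card_E]
  have := (basisMonomials (Fin s) ℂ).linearIndependent.comp (fun a : E s d => (a : Fin s →₀ ℕ))
    Subtype.val_injective
  simpa [Function.comp_def] using! this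

section field
variable {K L : Type*} [Field K] [Field L] [Algebra K L]

/-- span of monomials of bounded degree -/
noncomputable def Vs (K : Type*) {L : Type*} [Field K] [Field L] [Algebra K L] {k : ℕ}
    (Y : Fin k → L) (j : ℕ) : Submodule K L :=
  Submodule.span K ((fun a : Fin k →₀ ℕ => ∏ i, Y i ^ a i) '' {a | ∑ i, a i ≤ j})

theorem Vs_mono {k : ℕ} (Y : Fin k → L) {j j' : ℕ} (h : j ≤ j') : Vs K Y j ≤ Vs K Y j' :=
  Submodule.span_mono (Set.image_mono (fun _ ha => le_trans ha h))

theorem one_mem_Vs {k : ℕ} (Y : Fin k → L) (j : ℕ) : (1 : L) ∈ Vs K Y j :=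
  Submodule.subset_span ⟨0, by simp, by simp⟩

theorem mul_mem_Vs {k : ℕ} (Y : Fin k → L) (j : ℕ) (i : Fin k) (v : L) (hv : v ∈ Vs K Y j) :
    Y i * v ∈ Vs K Y (j + 1) := by
  classical
  have : Vs K Y j ≤ (Vs K Y (j + 1)).comap (LinearMap.mulLeft K (Y i)) := by
    rw [Vs, Submodule.span_le]
    rintro _ ⟨a, ha, rfl⟩
    refine Submodule.subset_span ⟨a + Finsupp.single i 1, ?_, ?_⟩
    · simp only [Set.mem_ofPred_eq, Finsupp.add_apply, sum_add_distrib] at ha ⊢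
      simp [Finsupp.single_apply]
      exact ha
    · simp only [Finsupp.add_apply, pow_add, prod_mul_distrib, LinearMap.mulLeft_apply]
      rw [mul_comm, prod_eq_single i (fun b _ hb => by simp [Finsupp.single_apply, hb.symm]) (by simp)]
      simp
  exact this hv

theorem Vs_stable {k : ℕ} (Y : Fin k → L) (hY : Algebra.adjoin K (Set.range Y) = ⊤) (j : ℕ)
    (h : Vs K Y (j + 1) ≤ Vs K Y j) : Vs K Y j = ⊤ := by
  rw [eq_top_iff]
  intro x hxt
  clear hxt
  have hx : x ∈ Algebra.adjoin K (Set.range Y) := by rw [hY]; trivial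
  have : ∀ v ∈ Vs K Y j, x * v ∈ Vs K Y j := by
    induction hx using Algebra.adjoin_induction with
    | mem x hx =>
      obtain ⟨i, rfl⟩ := hx
      exact fun v hv => h (mul_mem_Vs Y j i v hv)
    | algebraMap r =>
      intro v hv
      rw [← Algebra.smul_def]
      exact Submodule.smul_mem _ _ hv
    | add x y _ _ hx hy =>
      intro v hv
      rw [add_mul]
      exact Submodule.add_mem _ (hx v hv) (hy v hv)
    | mul x y _ _ hx hy =>
      intro v hv
      rw [mul_assoc]
      exact hx _ (hy v hv)
  simpa using this 1 (one_mem_Vs Y j)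

theorem Vs_top {k : ℕ} [FiniteDimensional K L] (Y : Fin k → L)
    (hY : Algebra.adjoin K (Set.range Y) = ⊤) : Vs K Y (Module.finrank K L - 1) = ⊤ := by
  have h : ∀ j, Vs K Y j = ⊤ ∨ j + 1 ≤ Module.finrank K (Vs K Y j) := by
    intro j
    induction j with
    | zero =>
      right
      rw [zero_add, Nat.one_le_iff_ne_zero]
      intro h0
      rw [Submodule.finrank_eq_zero] at h0
      have := one_mem_Vs (K := K) Y 0
      rw [h0, Submodule.mem_bot] at this
      exact one_ne_zero this
    | succ j ih =>
      rcases ih with h | h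
      · left
        rw [eq_top_iff, ← h]
        exact Vs_mono Y (Nat.le_succ j)
      · by_cases hs : Vs K Y (j + 1) ≤ Vs K Y j
        · left
          rw [eq_top_iff, ← Vs_stable Y hY j hs]
          exact Vs_mono Y (Nat.le_succ j)
        · right
          have := Submodule.finrank_lt_finrank_of_lt
            (lt_of_le_not_ge (Vs_mono (K := K) Y (Nat.le_add_right j 1)) hs)
          omega
  rcases h (Module.finrank K L - 1) with h | h
  · exact h
  · apply Submodule.eq_top_of_finrank_eq
    have h1 := Submodule.finrank_le (Vs K Y (Module.finrank K L - 1))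
    omega

theorem exists_mon_basis {k : ℕ} [FiniteDimensional K L] (Y : Fin k → L)
    (hY : Algebra.adjoin K (Set.range Y) = ⊤) :
    ∃ (bs : Module.Basis (Fin (Module.finrank K L)) K L)
      (b : Fin (Module.finrank K L) → (Fin k →₀ ℕ)),
      (∀ j, ∑ i, b j i ≤ Module.finrank K L - 1) ∧ ∀ j, bs j = ∏ i, Y i ^ (b j i) := by
  obtain ⟨B, hB, hsp, hli⟩ := exists_linearIndependent K
    ((fun a : Fin k →₀ ℕ => ∏ i, Y i ^ a i) '' {a | ∑ i, a i ≤ Module.finrank K L - 1})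
  have hV := Vs_top Y hY
  rw [Vs, ← hsp] at hV
  let bs0 : Module.Basis B K L := Module.Basis.mk hli (by simp [hV])
  let bs := bs0.reindex (bs0.indexEquiv (Module.finBasis K L))
  have hmem : ∀ j, bs j ∈ B := by
    intro j
    simp [bs, bs0]
  choose b hb1 hb2 using fun j => hB (hmem j)
  exact ⟨bs, b, hb1, fun j => (hb2 j).symm⟩

end field

end HW

open Filter
namespace HW
open Finset MvPolynomial

/-- eigenspace -/
noncomputable def Gm {R : Type*} [CommRing R] [Algebra ℂ R] (σ : R →ₐ[ℂ] R) (m : ℕ) :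
    Submodule ℂ R := LinearMap.ker (σ.toLinearMap - (2 : ℂ) ^ m • LinearMap.id)

theorem mem_Gm {R : Type*} [CommRing R] [Algebra ℂ R] (σ : R →ₐ[ℂ] R) (m : ℕ) (x : R) :
    x ∈ Gm σ m ↔ σ x = (2 : ℂ) ^ m • x := by
  simp [Gm, sub_eq_zero]

theorem Gm_mul {R : Type*} [CommRing R] [Algebra ℂ R] (σ : R →ₐ[ℂ] R) {m l : ℕ} {x y : R}
    (hx : x ∈ Gm σ m) (hy : y ∈ Gm σ l) : x * y ∈ Gm σ (m + l) := by
  rw [mem_Gm] at *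
  rw [map_mul, hx, hy, smul_mul_smul_comm, pow_add]

theorem Gm_mon {R : Type*} [CommRing R] [Algebra ℂ R] (σ : R →ₐ[ℂ] R) {k : ℕ} (y : Fin k → R)
    (hy : ∀ i, σ (y i) = (2 : ℂ) • y i) (a : Fin k →₀ ℕ) :
    ∏ i, y i ^ a i ∈ Gm σ (∑ i, a i) := by
  rw [mem_Gm, map_prod]
  simp only [map_pow, hy, smul_pow, Finset.prod_smul, prod_pow_eq_pow_sum]

/-- scaling of variables -/
noncomputable def tau (ι : Type*) (l : ℂ) : MvPolynomial ι ℂ →ₐ[ℂ] MvPolynomial ι ℂ :=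
  aeval (fun i => l • X i)

theorem tau_comp (ι : Type*) (l l' : ℂ) (h : l * l' = 1) :
    (tau ι l).comp (tau ι l') = AlgHom.id ℂ _ := by
  ext i : 1
  simp only [tau, AlgHom.comp_apply, aeval_X, map_smul, AlgHom.id_apply, smul_smul]
  rw [mul_comm, h, one_smul]

/-- scaling equivalence -/
noncomputable def tauE (ι : Type*) : MvPolynomial ι ℂ ≃ₐ[ℂ] MvPolynomial ι ℂ :=
  AlgEquiv.ofAlgHom (tau ι 2) (tau ι 2⁻¹) (tau_comp ι _ _ (by norm_num))
    (tau_comp ι _ _ (by norm_num))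

theorem tauE_X (ι : Type*) (i : ι) : tauE ι (X i) = (2 : ℂ) • X i := by
  simp [tauE, tau]

theorem homog_of_tau (ι : Type*) (d : ℕ) (t : MvPolynomial ι ℂ)
    (h : tauE ι t = (2 : ℂ) ^ d • t) : t.IsHomogeneous d := by
  have := eig_eq (tauE ι).toAlgHom X (fun i => tauE_X ι i) t d (by
    simpa [aeval_X_left] using h)
  simp only [aeval_X_left, AlgHom.id_apply] at this
  rw [this]
  exact homogeneousComponent_isHomogeneous d t

section main
variable {s k : ℕ} {R K L : Type*} [CommRing R] [IsDomain R] [Field K] [Field L] [Algebra ℂ R]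
  [Algebra (MvPolynomial (Fin s) ℂ) R] [IsScalarTower ℂ (MvPolynomial (Fin s) ℂ) R]
  [Algebra (MvPolynomial (Fin s) ℂ) K] [IsFractionRing (MvPolynomial (Fin s) ℂ) K]
  [Algebra R L] [IsFractionRing R L] [Algebra (MvPolynomial (Fin s) ℂ) L]
  [IsScalarTower (MvPolynomial (Fin s) ℂ) R L]
  [Algebra K L] [IsScalarTower (MvPolynomial (Fin s) ℂ) K L] [Algebra ℂ K] [Algebra ℂ L]
  [IsScalarTower ℂ (MvPolynomial (Fin s) ℂ) K] [IsScalarTower ℂ R L] [IsScalarTower ℂ K L]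
  [Algebra.IsIntegral (MvPolynomial (Fin s) ℂ) R] [FiniteDimensional K L]

theorem sigma_alg (σ : R ≃ₐ[ℂ] R)
    (hσ : ∀ i, σ (algebraMap (MvPolynomial (Fin s) ℂ) R (X i)) =
      (2 : ℂ) • algebraMap (MvPolynomial (Fin s) ℂ) R (X i)) (a : MvPolynomial (Fin s) ℂ) :
    σ (algebraMap _ R a) = algebraMap _ R (tauE (Fin s) a) := by
  have : σ.toAlgHom.comp (IsScalarTower.toAlgHom ℂ (MvPolynomial (Fin s) ℂ) R) =
      (IsScalarTower.toAlgHom ℂ (MvPolynomial (Fin s) ℂ) R).comp (tauE (Fin s)).toAlgHom := by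
    ext i
    have h1 : algebraMap (MvPolynomial (Fin s) ℂ) R ((2 : ℂ) • X i) = (2 : ℂ) • algebraMap _ R (X i) :=
      algebraMap.coe_smul ..
    simp [tauE_X, hσ, h1]
  exact DFunLike.congr_fun this a

theorem trace_homog (σ : R ≃ₐ[ℂ] R)
    (hσ : ∀ i, σ (algebraMap (MvPolynomial (Fin s) ℂ) R (X i)) =
      (2 : ℂ) • algebraMap (MvPolynomial (Fin s) ℂ) R (X i)) (d : ℕ) (x : R)
    (hx : x ∈ Gm σ.toAlgHom d) :
    ∃ t : MvPolynomial (Fin s) ℂ, t.IsHomogeneous d ∧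
      algebraMap _ K t = Algebra.trace K L (algebraMap R L x) := by
  have hint : IsIntegral (MvPolynomial (Fin s) ℂ) (Algebra.trace K L (algebraMap R L x)) :=
    Algebra.isIntegral_trace ((Algebra.IsIntegral.isIntegral (R := MvPolynomial (Fin s) ℂ) x).algebraMap)
  obtain ⟨t, ht⟩ := IsIntegrallyClosed.isIntegral_iff.1 hint
  refine ⟨t, homog_of_tau _ d t ?_, ht⟩
  rw [mem_Gm] at hx
  have hx' : σ x = (2 : ℂ) ^ d • x := hx
  let eK : K ≃+* K := IsFractionRing.ringEquivOfRingEquiv (tauE (Fin s)).toRingEquiv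
  let eL : L ≃+* L := IsFractionRing.ringEquivOfRingEquiv σ.toRingEquiv
  have hK : ∀ a, eK (algebraMap (MvPolynomial (Fin s) ℂ) K a) = algebraMap _ K (tauE (Fin s) a) :=
    fun a => IsFractionRing.ringEquivOfRingEquiv_algebraMap _ a
  have hL : ∀ a, eL (algebraMap R L a) = algebraMap _ L (σ a) :=
    fun a => IsFractionRing.ringEquivOfRingEquiv_algebraMap _ a
  have hcomp : (algebraMap K L).comp (eK : K →+* K) = (eL : L →+* L).comp (algebraMap K L) := by
    apply IsLocalization.ringHom_ext (nonZeroDivisors (MvPolynomial (Fin s) ℂ))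
    refine RingHom.ext (fun a => ?_)
    simp only [RingHom.comp_apply, RingEquiv.coe_toRingHom, hK, ← IsScalarTower.algebraMap_apply]
    rw [IsScalarTower.algebraMap_apply (MvPolynomial (Fin s) ℂ) R L,
      IsScalarTower.algebraMap_apply (MvPolynomial (Fin s) ℂ) R L, hL, sigma_alg σ hσ]
  have h := Algebra.trace_eq_of_equiv_equiv eK eL hcomp (algebraMap R L x)
  rw [hL, hx', ← ht, eq_comm, RingEquiv.symm_apply_eq, hK] at h
  apply IsFractionRing.injective (MvPolynomial (Fin s) ℂ) K
  rw [← h]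
  have h1 : algebraMap R L ((2 : ℂ) ^ d • x) = (2 : ℂ) ^ d • algebraMap R L x :=
    algebraMap.coe_smul ..
  have h2 : algebraMap (MvPolynomial (Fin s) ℂ) K ((2 : ℂ) ^ d • t) = (2 : ℂ) ^ d • algebraMap _ K t :=
    algebraMap.coe_smul ..
  rw [h1, h2, LinearMap.map_smul_of_tower, ht]

theorem upper (σ : R ≃ₐ[ℂ] R)
    (hσ : ∀ i, σ (algebraMap (MvPolynomial (Fin s) ℂ) R (X i)) =
      (2 : ℂ) • algebraMap (MvPolynomial (Fin s) ℂ) R (X i)) {ρ : ℕ} (bs : Module.Basis (Fin ρ) K L)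
    (y : Fin ρ → R) (β : Fin ρ → ℕ) (hy : ∀ j, y j ∈ Gm σ.toAlgHom (β j))
    (hbs : ∀ j, bs j = algebraMap R L (y j)) (m : ℕ) :
    Module.Finite ℂ (Gm σ.toAlgHom m) ∧
    Module.finrank ℂ (Gm σ.toAlgHom m) ≤ ∑ j, M s (m + β j) := by
  have hchar : CharZero K := charZero_of_injective_algebraMap (algebraMap ℂ K).injective
  let W : Fin ρ → Submodule ℂ K := fun j => (homogeneousSubmodule (Fin s) ℂ (m + β j)).map
    (IsScalarTower.toAlgHom ℂ (MvPolynomial (Fin s) ℂ) K).toLinearMap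
  let T : Fin ρ → (Gm σ.toAlgHom m) →ₗ[ℂ] K := fun j =>
    ((Algebra.trace K L).restrictScalars ℂ) ∘ₗ (LinearMap.mulRight ℂ (bs j)) ∘ₗ
      (IsScalarTower.toAlgHom ℂ R L).toLinearMap ∘ₗ (Gm σ.toAlgHom m).subtype
  have hTa : ∀ j x, T j x = Algebra.trace K L (algebraMap R L (x : R) * bs j) := fun j x => rfl
  have hT : ∀ j x, T j x ∈ W j := by
    intro j x
    rw [hTa, hbs, ← map_mul]
    obtain ⟨t, ht1, ht2⟩ := trace_homog (K := K) (L := L) σ hσ (m + β j) (x * y j) (Gm_mul _ x.2 (hy j))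
    exact ⟨t, ht1, ht2⟩
  let F : (Gm σ.toAlgHom m) →ₗ[ℂ] (∀ j, W j) := LinearMap.pi (fun j => (T j).codRestrict (W j) (hT j))
  have hF : Function.Injective F := by
    rw [injective_iff_map_eq_zero]
    intro x hx
    have h1 : ∀ j, Algebra.trace K L (algebraMap R L (x : R) * bs j) = 0 := by
      intro j
      have := congrArg Subtype.val (congrFun hx j)
      exact this
    have h2 : Algebra.traceForm K L (algebraMap R L (x : R)) = 0 := by
      apply bs.ext
      intro j
      rw [Algebra.traceForm_apply, h1]
      rfl
    have h3 : algebraMap R L (x : R) = 0 := by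
      have := (traceForm_nondegenerate K L).1 (algebraMap R L (x : R)) (fun z => by rw [h2]; rfl)
      exact this
    rw [map_eq_zero_iff _ (IsFractionRing.injective R L)] at h3
    exact Subtype.ext h3
  refine ⟨Module.Finite.of_injective F hF, ?_⟩
  refine (LinearMap.finrank_le_finrank_of_injective hF).trans ?_
  rw [Module.finrank_pi_fintype]
  refine sum_le_sum (fun j _ => ?_)
  rw [← homog_finrank]
  exact Submodule.finrank_map_le _ _

theorem lower (σ : R ≃ₐ[ℂ] R)
    (hσ : ∀ i, σ (algebraMap (MvPolynomial (Fin s) ℂ) R (X i)) =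
      (2 : ℂ) • algebraMap (MvPolynomial (Fin s) ℂ) R (X i)) {ρ : ℕ} (bs : Module.Basis (Fin ρ) K L)
    (y : Fin ρ → R) (β : Fin ρ → ℕ) (hy : ∀ j, y j ∈ Gm σ.toAlgHom (β j))
    (hbs : ∀ j, bs j = algebraMap R L (y j)) (m : ℕ) (hm : ∀ j, β j ≤ m) :
    ∑ j, M s (m - β j) ≤ Module.finrank ℂ (Gm σ.toAlgHom m) := by
  have hfin := (upper σ hσ bs y β hy hbs m).1
  let T : (∀ j, homogeneousSubmodule (Fin s) ℂ (m - β j)) →ₗ[ℂ] R :=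
    ∑ j, (LinearMap.mulRight ℂ (y j)) ∘ₗ
      (IsScalarTower.toAlgHom ℂ (MvPolynomial (Fin s) ℂ) R).toLinearMap ∘ₗ
      (homogeneousSubmodule (Fin s) ℂ (m - β j)).subtype ∘ₗ LinearMap.proj j
  have hTa : ∀ f, T f = ∑ j, algebraMap (MvPolynomial (Fin s) ℂ) R (f j).1 * y j := by
    intro f
    simp only [T, LinearMap.sum_apply]
    rfl
  have hT : ∀ f, T f ∈ Gm σ.toAlgHom m := by
    intro f
    rw [hTa]
    refine Submodule.sum_mem _ (fun j _ => ?_)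
    have h1 : algebraMap (MvPolynomial (Fin s) ℂ) R (f j).1 ∈ Gm σ.toAlgHom (m - β j) := by
      rw [mem_Gm]
      have h2 := aeval_eig σ.toAlgHom (fun i => algebraMap (MvPolynomial (Fin s) ℂ) R (X i)) hσ
        (m - β j) (f j).1 (f j).2
      have h3 : aeval (fun i => algebraMap (MvPolynomial (Fin s) ℂ) R (X i)) (f j).1 =
          algebraMap (MvPolynomial (Fin s) ℂ) R (f j).1 := by
        have h4 : aeval (fun i => algebraMap (MvPolynomial (Fin s) ℂ) R (X i)) =
          IsScalarTower.toAlgHom ℂ (MvPolynomial (Fin s) ℂ) R := by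
          ext i
          simp
        rw [h4]
        rfl
      rwa [h3] at h2
    have := Gm_mul _ h1 (hy j)
    rwa [Nat.sub_add_cancel (hm j)] at this
  let F := T.codRestrict _ hT
  have hF : Function.Injective F := by
    rw [injective_iff_map_eq_zero]
    intro f hf
    have h0 : T f = 0 := congrArg Subtype.val hf
    rw [hTa] at h0
    have h1 := congrArg (algebraMap R L) h0
    rw [map_sum, map_zero] at h1
    have h2 : ∑ j, algebraMap (MvPolynomial (Fin s) ℂ) K (f j).1 • bs j = 0 := by
      rw [← h1]
      refine sum_congr rfl (fun j _ => ?_)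
      rw [map_mul, hbs, Algebra.smul_def, ← IsScalarTower.algebraMap_apply,
        ← IsScalarTower.algebraMap_apply]
    have h3 := Fintype.linearIndependent_iff.1 bs.linearIndependent _ h2
    funext j
    have := h3 j
    rw [map_eq_zero_iff _ (IsFractionRing.injective _ K)] at this
    exact Subtype.ext this
  have := LinearMap.finrank_le_finrank_of_injective hF
  rw [Module.finrank_pi_fintype] at this
  simpa only [homog_finrank] using this

end main
end HW

open Filter
namespace HW
open Finset MvPolynomial

theorem adjoin_top {A R K L : Type*} [CommRing A] [CommRing R] [IsDomain R] [Field K] [Field L] [Algebra A R]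
    [Algebra A K] [Algebra R L] [IsFractionRing R L] [Algebra A L] [IsScalarTower A R L]
    [Algebra K L] [IsScalarTower A K L] [Algebra ℂ R] [Algebra ℂ K] [Algebra ℂ L]
    [IsScalarTower ℂ R L] [IsScalarTower ℂ K L] [Algebra.IsIntegral A R] {k : ℕ} (y : Fin k → R)
    (hy : Algebra.adjoin ℂ (Set.range y) = ⊤) :
    Algebra.adjoin K (Set.range (fun i => algebraMap R L (y i))) = ⊤ ∧ FiniteDimensional K L := by
  set T := Algebra.adjoin K (Set.range (fun i => algebraMap R L (y i))) with hT
  have hintR : ∀ x : R, IsIntegral K (algebraMap R L x) := fun x =>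
    ((Algebra.IsIntegral.isIntegral (R := A) x).algebraMap).tower_top
  have hfg : T.toSubmodule.FG := fg_adjoin_of_finite (Set.finite_range _) (by
    rintro _ ⟨i, rfl⟩
    exact hintR _)
  have hR : ∀ x : R, algebraMap R L x ∈ T := by
    intro x
    have hx : x ∈ Algebra.adjoin ℂ (Set.range y) := by rw [hy]; trivial
    have : Algebra.adjoin ℂ (Set.range y) ≤
        (T.restrictScalars ℂ).comap (IsScalarTower.toAlgHom ℂ R L) := by
      rw [Algebra.adjoin_le_iff]
      rintro _ ⟨i, rfl⟩
      exact Algebra.subset_adjoin ⟨i, rfl⟩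
    exact this hx
  have hfT : Module.Finite K T := Module.Finite.iff_fg.2 hfg
  have hfield : IsField T := isField_of_isIntegral_of_isField' (R := K) (Field.toIsField K)
  have htop : T = ⊤ := by
    rw [eq_top_iff]
    intro z _
    obtain ⟨a, b, hb, rfl⟩ := IsFractionRing.div_surjective (A := R) z
    rw [div_eq_mul_inv]
    refine T.mul_mem (hR a) ?_
    have hb0 : algebraMap R L b ≠ 0 := by
      rw [Ne, map_eq_zero_iff _ (IsFractionRing.injective R L)]
      exact nonZeroDivisors.ne_zero hb
    obtain ⟨c, hc⟩ := hfield.mul_inv_cancel (a := (⟨algebraMap R L b, hR b⟩ : T))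
      (fun h => hb0 (congrArg Subtype.val h))
    have hc' : algebraMap R L b * c.1 = 1 := congrArg Subtype.val hc
    rw [← eq_inv_of_mul_eq_one_right hc']
    exact c.2
  refine ⟨htop, ?_⟩
  rw [htop, Algebra.top_toSubmodule] at hfg
  exact ⟨hfg⟩

theorem exists_rho {R : Type*} [CommRing R] [IsDomain R] [Algebra ℂ R] (σ : R ≃ₐ[ℂ] R) {k : ℕ}
    (y : Fin k → R) (hσy : ∀ i, σ (y i) = (2 : ℂ) • y i) (hy : Algebra.adjoin ℂ (Set.range y) = ⊤) :
    ∃ (s ρ : ℕ) (β : Fin ρ → ℕ), 0 < ρ ∧ (∀ j, β j ≤ ρ - 1) ∧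
      (∀ m, Module.finrank ℂ (Gm σ.toAlgHom m) ≤ ∑ j, M s (m + β j)) ∧
      ∀ m, ρ ≤ m → ∑ j, M s (m - β j) ≤ Module.finrank ℂ (Gm σ.toAlgHom m) := by
  obtain ⟨s, w, hw1, hw2, hw3⟩ := noether σ.toAlgHom k y hσy
  let : Algebra (MvPolynomial (Fin s) ℂ) R := (aeval w : MvPolynomial (Fin s) ℂ →ₐ[ℂ] R).toRingHom.toAlgebra
  have halg : ∀ p, algebraMap (MvPolynomial (Fin s) ℂ) R p = aeval w p := fun p => rfl
  have : IsScalarTower ℂ (MvPolynomial (Fin s) ℂ) R :=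
    IsScalarTower.of_algebraMap_eq (fun x => by
      rw [halg, AlgHom.commutes])
  have : FaithfulSMul (MvPolynomial (Fin s) ℂ) R := by
    rw [faithfulSMul_iff_algebraMap_injective]
    exact hw2
  have : Algebra.IsIntegral (MvPolynomial (Fin s) ℂ) R := by
    constructor
    intro x
    have hx : x ∈ Algebra.adjoin ℂ (Set.range y) := by rw [hy]; trivial
    have hle : Algebra.adjoin ℂ (Set.range y) ≤
        (integralClosure (MvPolynomial (Fin s) ℂ) R).restrictScalars ℂ := by
      rw [Algebra.adjoin_le_iff]
      rintro _ ⟨i, rfl⟩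
      obtain ⟨p, hp1, hp2⟩ := hw3 i
      let f : Algebra.adjoin ℂ (Set.range w) →+* MvPolynomial (Fin s) ℂ := (hw2.aevalEquiv.symm : _ →+* _)
      refine ⟨p.map f, hp1.map _, ?_⟩
      rw [Polynomial.eval₂_map]
      rw [← hp2]
      congr 1
      refine RingHom.ext (fun z => ?_)
      obtain ⟨q, rfl⟩ := hw2.aevalEquiv.surjective z
      have : f (hw2.aevalEquiv q) = q := hw2.aevalEquiv.symm_apply_apply q
      rw [RingHom.comp_apply, this, halg]
      exact (hw2.algebraMap_aevalEquiv q).symm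
    exact hle hx
  let K := FractionRing (MvPolynomial (Fin s) ℂ)
  let L := FractionRing R
  let : Algebra K L := FractionRing.liftAlgebra (MvPolynomial (Fin s) ℂ) L
  have : IsScalarTower (MvPolynomial (Fin s) ℂ) K L := FractionRing.isScalarTower_liftAlgebra _ _
  have : IsScalarTower ℂ K L := IsScalarTower.to₁₃₄ ℂ (MvPolynomial (Fin s) ℂ) K L
  obtain ⟨h1, h2⟩ := adjoin_top (A := MvPolynomial (Fin s) ℂ) (K := K) (L := L) y hy
  obtain ⟨bs, b, hb1, hb2⟩ := exists_mon_basis _ h1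
  have hσX : ∀ i, σ (algebraMap (MvPolynomial (Fin s) ℂ) R (X i)) =
      (2 : ℂ) • algebraMap (MvPolynomial (Fin s) ℂ) R (X i) := by
    intro i
    rw [halg, aeval_X]
    exact hw1 i
  have hG : ∀ j, ∏ i, y i ^ b j i ∈ Gm σ.toAlgHom (∑ i, b j i) := fun j =>
    Gm_mon σ.toAlgHom y hσy (b j)
  have hbs : ∀ j, bs j = algebraMap R L (∏ i, y i ^ b j i) := by
    intro j
    rw [hb2, map_prod]
    simp only [map_pow]
  refine ⟨s, Module.finrank K L, fun j => ∑ i, b j i, Module.finrank_pos, hb1, fun m => ?_,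
    fun m hm => ?_⟩
  · exact (upper σ hσX bs _ _ hG hbs m).2
  · exact lower σ hσX bs _ _ hG hbs m (fun j => (hb1 j).trans (by omega))

end HW

open Filter
namespace HW
open Finset MvPolynomial

theorem tau_homog {ι : Type*} (l : ℂ) (d : ℕ) (p : MvPolynomial ι ℂ) (hp : p.IsHomogeneous d) :
    tau ι l p = l ^ d • p := by
  have h0 : l ^ d • p = l ^ d • aeval X p := by rw [aeval_X_left, AlgHom.id_apply]
  rw [h0, tau, p.as_sum, map_sum, map_sum, smul_sum]
  refine sum_congr rfl (fun a ha => ?_)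
  rw [aeval_monomial, aeval_monomial]
  have hd := hp (mem_support_iff.1 ha)
  have : (a.prod fun i e => (l • (X i : MvPolynomial ι ℂ)) ^ e) = l ^ d • a.prod fun i e => X i ^ e := by
    simp only [Finsupp.prod, smul_pow, Finset.prod_smul]
    rw [prod_pow_eq_pow_sum]
    congr 2
    rw [← hd, Finsupp.weight_apply]
    simp [Finsupp.sum]
  rw [this, mul_smul_comm]

theorem tau_mem {k : ℕ} (I : Ideal (MvPolynomial (Fin k) ℂ))
    (hI : ∀ p ∈ I, ∀ j : ℕ, homogeneousComponent j p ∈ I) (l : ℂ) :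
    I ≤ I.comap (tau (Fin k) l) := by
  intro p hp
  rw [Ideal.mem_comap, ← sum_homogeneousComponent p, map_sum]
  refine I.sum_mem (fun j _ => ?_)
  rw [tau_homog l j _ (homogeneousComponent_isHomogeneous j p)]
  exact Submodule.smul_of_tower_mem I _ (hI p hp j)

theorem quot_comp {k : ℕ} (I : Ideal (MvPolynomial (Fin k) ℂ))
    (hI : ∀ p ∈ I, ∀ j : ℕ, homogeneousComponent j p ∈ I) (l l' : ℂ) (h : l * l' = 1) :
    (Ideal.quotientMapₐ I (tau (Fin k) l) (tau_mem I hI l)).comp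
      (Ideal.quotientMapₐ I (tau (Fin k) l') (tau_mem I hI l')) = AlgHom.id ℂ _ := by
  apply Ideal.Quotient.algHom_ext
  refine AlgHom.ext (fun p => ?_)
  have := DFunLike.congr_fun (tau_comp (Fin k) l l' h) p
  exact congrArg (Ideal.Quotient.mk I) this

theorem hilbert_gm {k : ℕ} (I : Ideal (MvPolynomial (Fin k) ℂ))
    (hI : ∀ p ∈ I, ∀ j : ℕ, homogeneousComponent j p ∈ I) (hp : I.IsPrime) :
    ∃ (s ρ : ℕ) (β : Fin ρ → ℕ), 0 < ρ ∧ (∀ j, β j ≤ ρ - 1) ∧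
      (∀ m, hilbertFn I m ≤ ∑ j, M s (m + β j)) ∧
      ∀ m, ρ ≤ m → ∑ j, M s (m - β j) ≤ hilbertFn I m := by
  let R := MvPolynomial (Fin k) ℂ ⧸ I
  let σ : R ≃ₐ[ℂ] R := AlgEquiv.ofAlgHom _ _ (quot_comp I hI 2 2⁻¹ (by norm_num))
    (quot_comp I hI 2⁻¹ 2 (by norm_num))
  let y : Fin k → R := fun i => Ideal.Quotient.mkₐ ℂ I (X i)
  have hmk : (Ideal.Quotient.mkₐ ℂ I) = aeval y := by
    ext i
    simp [y]
  have hσy : ∀ i, σ (y i) = (2 : ℂ) • y i := by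
    intro i
    have : σ (y i) = Ideal.Quotient.mkₐ ℂ I (tau (Fin k) 2 (X i)) := rfl
    rw [this, tau, aeval_X, map_smul]
  have hy : Algebra.adjoin ℂ (Set.range y) = ⊤ := by
    rw [← aeval_range, ← hmk, AlgHom.range_eq_top]
    exact Ideal.Quotient.mkₐ_surjective ℂ I
  have hG : ∀ m, hilbertFn I m = Module.finrank ℂ (Gm σ.toAlgHom m) := by
    intro m
    let e := Submodule.Quotient.restrictScalarsEquiv ℂ I
    have h1 : Gm σ.toAlgHom m = (gradedPiece I m).map (e : _ →ₗ[ℂ] _) := by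
      ext x
      constructor
      · intro hx
        obtain ⟨p, rfl⟩ := Ideal.Quotient.mkₐ_surjective ℂ I x
        rw [mem_Gm, hmk] at hx
        have := eig_eq σ.toAlgHom y hσy p m hx
        rw [hmk, this]
        refine ⟨_, ⟨homogeneousComponent m p, homogeneousComponent_isHomogeneous m p, rfl⟩, ?_⟩
        rw [← hmk]
        rfl
      · rintro ⟨_, ⟨p, hp, rfl⟩, rfl⟩
        rw [mem_Gm]
        have := aeval_eig σ.toAlgHom y hσy m p hp
        rw [← hmk] at this
        exact this
    rw [h1, hilbertFn]
    exact (LinearEquiv.finrank_map_eq e (gradedPiece I m)).symm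
  obtain ⟨s, ρ, β, h1, h2, h3, h4⟩ := exists_rho σ y hσy hy
  exact ⟨s, ρ, β, h1, h2, fun m => (hG m).le.trans (h3 m), fun m hm => (h4 m hm).trans (hG m).ge⟩

theorem hilbert_upper {k : ℕ} (I : Ideal (MvPolynomial (Fin k) ℂ))
    (hI : ∀ p ∈ I, ∀ j : ℕ, homogeneousComponent j p ∈ I) (hp : I.IsPrime) {n Δ : ℕ} (hΔ : 0 < Δ)
    (hHilb : Tendsto (fun m : ℕ => (Nat.factorial n : ℝ) * (hilbertFn I m : ℝ) / (m : ℝ) ^ n)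
      atTop (nhds (Δ : ℝ))) (m : ℕ) :
    hilbertFn I m ≤ Δ * M (n + 1) (m + (Δ - 1)) := by
  obtain ⟨s, ρ, β, h1, h2, h3, h4⟩ := hilbert_gm I hI hp
  have hΔ' : (0 : ℝ) < Δ := by exact_mod_cast hΔ
  have hn : (0 : ℝ) < (n.factorial : ℝ) := by exact_mod_cast n.factorial_pos
  rcases s with _ | s
  · exfalso
    have : Tendsto (fun m : ℕ => (Nat.factorial n : ℝ) * (hilbertFn I m : ℝ) / (m : ℝ) ^ n)
      atTop (nhds 0) := by
      refine tendsto_const_nhds.congr' ?_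
      filter_upwards [eventually_ge_atTop 1] with l hl
      have h5 : hilbertFn I l = 0 := by
        refine Nat.le_zero.1 ((h3 l).trans (le_of_eq (sum_eq_zero (fun j _ => ?_))))
        obtain ⟨q, hq⟩ : ∃ q, l + β j = q + 1 := ⟨l + β j - 1, by omega⟩
        rw [hq]
        exact Nat.multichoose_zero_succ q
      rw [h5]
      simp
    have := tendsto_nhds_unique this hHilb
    linarith
  have hup : ∀ l, hilbertFn I l ≤ ρ * M (s + 1) (l + (ρ - 1)) := by
    intro l
    refine (h3 l).trans ((sum_le_sum (fun j _ => M_mono s (Nat.add_le_add_left (h2 j) l))).trans ?_)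
    simp
  have hlo : ∀ l, ρ ≤ l → ρ * M (s + 1) (l - (ρ - 1)) ≤ hilbertFn I l := by
    intro l hl
    refine le_trans ?_ (h4 l hl)
    refine le_trans ?_ (sum_le_sum (fun j _ => M_mono s (Nat.sub_le_sub_left (h2 j) l)))
    simp
  have hρ : (0 : ℝ) < ρ := by exact_mod_cast h1
  have hs : (0 : ℝ) < (s.factorial : ℝ) := by exact_mod_cast s.factorial_pos
  have hA := M_asymp_add s (ρ - 1)
  have hB := M_asymp_sub s (ρ - 1)
  rcases lt_trichotomy s n with hsn | hsn | hsn
  · exfalso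
    have h5 := (div_pow_lt hsn hA).const_mul ((n.factorial : ℝ) * ρ)
    have h6 := le_of_tendsto_of_tendsto' hHilb h5 (fun l => ?_)
    · rw [mul_zero] at h6
      linarith
    · have : (hilbertFn I l : ℝ) ≤ ρ * M (s + 1) (l + (ρ - 1)) := by exact_mod_cast hup l
      calc (n.factorial : ℝ) * hilbertFn I l / (l : ℝ) ^ n
          ≤ n.factorial * (ρ * M (s + 1) (l + (ρ - 1))) / (l : ℝ) ^ n := by gcongr
        _ = n.factorial * ρ * (M (s + 1) (l + (ρ - 1)) / (l : ℝ) ^ n) := by ring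
  · subst hsn
    have h5 := hB.const_mul ((s.factorial : ℝ) * ρ)
    have h6 := le_of_tendsto_of_tendsto h5 hHilb (by
      filter_upwards [eventually_ge_atTop ρ] with l hl
      have : (ρ * M (s + 1) (l - (ρ - 1)) : ℝ) ≤ hilbertFn I l := by exact_mod_cast hlo l hl
      rw [mul_div_assoc, mul_assoc, ← mul_div_assoc]
      gcongr)
    have h7 : (ρ : ℝ) ≤ Δ := by
      calc (ρ : ℝ) = s.factorial * ρ * (1 / s.factorial) := by field_simp
        _ ≤ Δ := h6
    have h8 : ρ ≤ Δ := by exact_mod_cast h7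
    refine (hup m).trans (Nat.mul_le_mul h8 (M_mono s ?_))
    omega
  · exfalso
    have h5 := hB.const_mul ((n.factorial : ℝ) * ρ)
    have h6 := le_of_tendsto_of_tendsto h5 (div_pow_lt hsn hHilb) (by
      filter_upwards [eventually_ge_atTop ρ] with l hl
      have : (ρ * M (s + 1) (l - (ρ - 1)) : ℝ) ≤ hilbertFn I l := by exact_mod_cast hlo l hl
      rw [mul_div_assoc, mul_assoc, ← mul_div_assoc]
      gcongr)
    have : 0 < n.factorial * ρ * (1 / s.factorial : ℝ) := by positivity
    linarith

theorem final_ineq {n Δ m P Q H : ℕ} {S C e : ℝ} (hΔ : 0 < Δ) (hm : Δ < m) (hC0 : 0 ≤ C)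
    (hS0 : 0 ≤ S) (hHS : H = 0 → S = 0) (hP : 0 < P) (hPQ : P ≤ Q)
    (h1 : e ≤ (n + 1) * Δ * C)
    (h2 : 2 * (m * P * (e / (n + 1))) - (2 * n + 1) * P * C * (Δ * Δ) ≤ 2 * S)
    (h3 : (m + (Δ - 1)) * Q ≤ (m + (Δ - 1)) * P + (Δ - 1) * n * Q) (h4 : H ≤ Δ * Q) :
    (1 / (((n : ℝ) + 1) * (Δ : ℝ))) * e - (((2 * (n : ℝ) + 1) * (Δ : ℝ)) / (m : ℝ)) * C
      ≤ S / ((m : ℝ) * (H : ℝ)) := by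
  obtain ⟨δ, rfl⟩ : ∃ δ, Δ = δ + 1 := ⟨Δ - 1, by omega⟩
  have hD : (0 : ℝ) < ((δ + 1 : ℕ) : ℝ) := by positivity
  have hDv : ((δ + 1 : ℕ) : ℝ) = δ + 1 := by push_cast; ring
  have hm0 : (0 : ℝ) < m := by exact_mod_cast (by omega : 0 < m)
  have hP' : (0 : ℝ) < P := by exact_mod_cast hP
  have hPQ' : (P : ℝ) ≤ Q := by exact_mod_cast hPQ
  have h3' : ((m : ℝ) + δ) * Q ≤ (m + δ) * P + δ * n * Q := by
    have : (m + δ) * Q ≤ (m + δ) * P + δ * n * Q := h3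
    exact_mod_cast this
  have h4' : (H : ℝ) ≤ ((δ + 1 : ℕ) : ℝ) * Q := by exact_mod_cast h4
  set D : ℝ := ((δ + 1 : ℕ) : ℝ)
  obtain ⟨E, rfl⟩ : ∃ E, e = (n + 1) * D * E := ⟨e / ((n + 1) * D), by field_simp⟩
  have hEC : E ≤ C := by
    have h0 : (0 : ℝ) < (n + 1) * D := by positivity
    exact le_of_mul_le_mul_left h1 h0
  have e1 : (1 / (((n : ℝ) + 1) * D)) * ((n + 1) * D * E) = E := by field_simp
  have e2 : ((n : ℝ) + 1) * D * E / (n + 1) = D * E := by field_simp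
  rw [e1]
  rw [e2] at h2
  set κ : ℝ := (2 * (n : ℝ) + 1) * D with hκ
  have hκ0 : 0 ≤ κ := by positivity
  by_cases hX : m * E ≤ κ * C
  · have : E - κ / m * C ≤ 0 := by
      rw [sub_nonpos, div_mul_eq_mul_div, le_div_iff₀ hm0]
      linarith
    refine this.trans ?_
    positivity
  · push Not at hX
    have hS : P * D * (m * E - κ * C / 2) ≤ S := by
      rw [hκ]; nlinarith [h2]
    have hpos : 0 < m * E - κ * C / 2 := by
      have : 0 ≤ κ * C := by positivity
      linarith
    have hH : (0 : ℝ) < H := by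
      rcases Nat.eq_zero_or_pos H with h | h
      · exfalso
        have := hHS h
        have : 0 < P * D * (m * E - κ * C / 2) := by positivity
        linarith
      · exact_mod_cast h
    have hPm : (m - n * D) * Q ≤ m * P := by
      have hn0 : (0 : ℝ) ≤ n := by positivity
      have hd0 : (0 : ℝ) ≤ δ := by positivity
      have hQ0 : (0 : ℝ) ≤ Q := by positivity
      have : 0 ≤ δ * ((Q : ℝ) - P) := mul_nonneg hd0 (by linarith)
      have : 0 ≤ (n : ℝ) * Q := by positivity
      rw [hDv]
      nlinarith
    have hXC : m * E ≤ m * C := by gcongr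
    have k1 : m * (m * E - κ * C) ≤ (m - n * D) * (m * E - κ * C / 2) := by
      have a1 : n * D * (m * E) ≤ n * D * (m * C) := by gcongr
      have a2 : 0 ≤ n * D * (κ * C) := by positivity
      have a3 : 0 ≤ D * (m * C) := by positivity
      have a4 : m * (κ * C) = 2 * (n * D * (m * C)) + D * (m * C) := by rw [hκ]; ring
      nlinarith
    have k2 : m * (H * (m * E - κ * C)) ≤ m * S := by
      calc m * (H * (m * E - κ * C)) ≤ m * ((D * Q) * (m * E - κ * C)) := by
            gcongr
        _ = (D * Q) * (m * (m * E - κ * C)) := by ring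
        _ ≤ (D * Q) * ((m - n * D) * (m * E - κ * C / 2)) := by gcongr
        _ = D * (m * E - κ * C / 2) * ((m - n * D) * Q) := by ring
        _ ≤ D * (m * E - κ * C / 2) * (m * P) := by gcongr
        _ = m * (P * D * (m * E - κ * C / 2)) := by ring
        _ ≤ m * S := by gcongr
    have k3 := le_of_mul_le_mul_left k2 hm0
    rw [le_div_iff₀ (by positivity)]
    calc (E - κ / m * C) * (m * H) = H * (m * E - κ * C) := by field_simp
      _ ≤ S := k3

end HW

/-- **Evertse–Ferretti / Mumford; Lemma 3.2 in the paper.**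
Let `X ⊂ ℙ^N` be an algebraic variety of dimension `n` and degree `Δ` over `ℂ`, with
homogeneous (prime) ideal `I_X`.  Let `m > Δ` be an integer and `c⃗ ∈ ℝ^{N+1}_{≥0}`.
Then `(1/(m·H_X(m)))·S_X(m, c⃗) ≥ (1/((n+1)Δ))·e_X(c⃗) − ((2n+1)Δ/m)·max_i c_i`.

The dimension `n` and degree `Δ` are encoded by the asymptotics
`H_X(m) = Δ·m^n/n! + O(m^{n-1})` of the Hilbert function, and the Chow weight
`e_X(c⃗)` is characterized by the asymptotics
`S_X(m, c⃗) = e_X(c⃗)·m^{n+1}/(n+1)! + O(m^n)` of the Hilbert weight. -/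
theorem hilbert_weight_lower_bound_via_chow_weight
    (N : ℕ) (I : Ideal (MvPolynomial (Fin (N + 1)) ℂ))
    (hIhom : ∀ p ∈ I, ∀ j : ℕ, MvPolynomial.homogeneousComponent j p ∈ I)
    (hIprime : I.IsPrime)
    (n Δ : ℕ) (hΔ : 0 < Δ)
    (hHilb : Tendsto (fun m : ℕ => (Nat.factorial n : ℝ) * (hilbertFn I m : ℝ) / (m : ℝ) ^ n)
      atTop (nhds (Δ : ℝ)))
    (e : (Fin (N + 1) → ℝ) → ℝ)
    (he : ∀ c : Fin (N + 1) → ℝ, (∀ i, 0 ≤ c i) →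
      Tendsto (fun m : ℕ =>
        (Nat.factorial (n + 1) : ℝ) * hilbertWeight I m c / (m : ℝ) ^ (n + 1))
        atTop (nhds (e c)))
    (m : ℕ) (hm : Δ < m)
    (c : Fin (N + 1) → ℝ) (hc : ∀ i, 0 ≤ c i) :
    (1 / (((n : ℝ) + 1) * (Δ : ℝ))) * e c
        - (((2 * (n : ℝ) + 1) * (Δ : ℝ)) / (m : ℝ)) * (⨆ i, c i)
      ≤ hilbertWeight I m c / ((m : ℝ) * (hilbertFn I m : ℝ)) := by
  have hC : ∀ i, c i ≤ ⨆ i, c i := fun i => le_ciSup (Set.finite_range c).bddAbove i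
  have hC0 : 0 ≤ ⨆ i, c i := (hc 0).trans (hC 0)
  have hH' := hHilb
  simp only [HW.hilbertFn_eq I c] at hH'
  have he' := he c hc
  simp only [HW.hilbertWeight_eq I c hc] at he'
  obtain ⟨h1, h2⟩ := HW.comb (HW.gD_lower I c) hH' hc hC hC0 he' hm
  have h4 := HW.hilbert_upper I hIhom hIprime hΔ hHilb m
  have h3 := HW.M_shift n (m + (Δ - 1)) (Δ - 1) (by omega)
  rw [Nat.add_sub_cancel] at h3
  rw [← HW.hilbertWeight_eq I c hc] at h2
  refine HW.final_ineq hΔ hm hC0 ?_ ?_ (HW.M_pos n m) (HW.M_mono n (Nat.le_add_right m (Δ - 1)))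
    h1 h2 h3 h4
  · rw [HW.hilbertWeight_eq I c hc]
    exact Finset.sum_nonneg (fun a _ => HW.wt_nonneg hc a)
  · intro h0
    rw [HW.hilbertFn_eq I c, Finset.card_eq_zero] at h0
    rw [HW.hilbertWeight_eq I c hc, h0, Finset.sum_empty]
end
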